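/- arXiv:2505.10391 — 3 statements merged into one kernel-verified Lean document; each statement's English description precedes it below -/
import Mathlib

section
/- (B-process / truncated Poisson summation) Suppose f has four continuous derivatives on [a, b], that f'' < 0 on [a, b], and that [a, b] ⊆ [N, 2N] for some N ≥ 1. Set α := f'(b) and β := f'(a). Assume there is F > 0 such that |f''(x)| ≍ F N^{−2}, |f'''(x)| ≪ F N^{−3} and |f''''(x)| ≪ F N^{−4} for all x ∈ [a, b]. For each real ν ∈ [α, β], let x_ν ∈ [a, b] be the (unique) solution of f'(x_ν) = ν, and set φ(ν) := −f(x_ν) + ν x_ν. Then Σ_{a ≤ n ≤ b} e(f(n)) = Σ_{α ≤ ν ≤ β, ν ∈ ℤ} e(−φ(ν) − 1/8)/|f''(x_ν)|^{1/2} + O(log(F N^{−1} + 2) + F^{−1/2} N), where the implied constant is absolute (depending only on the implied constants in the hypotheses). -/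
open Finset

/-- `e(t) = exp(2πit)`. -/
noncomputable def eR (t : ℝ) : ℂ := Complex.exp (2 * Real.pi * Complex.I * t)

open MeasureTheory intervalIntegral Filter Topology

section Exponential

lemma eR_eq_exp_ofReal_mul_I (t : ℝ) : eR t = Complex.exp ((2 * Real.pi * t : ℝ) * Complex.I) := by
  unfold eR; congr 1; push_cast; ring

lemma norm_eR (t : ℝ) : ‖eR t‖ = 1 := by
  rw [eR_eq_exp_ofReal_mul_I, Complex.norm_exp_ofReal_mul_I]

lemma eR_add (s t : ℝ) : eR (s + t) = eR s * eR t := by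
  unfold eR; rw [← Complex.exp_add]; congr 1; push_cast; ring

lemma eR_intCast (n : ℤ) : eR n = 1 := by
  unfold eR
  rw [← Complex.exp_int_mul_two_pi_mul_I n]; congr 1; push_cast; ring

lemma continuous_eR : Continuous eR := by unfold eR; fun_prop

lemma HasDerivAt.eR {g : ℝ → ℝ} {g' x : ℝ} (hg : HasDerivAt g g' x) :
    HasDerivAt (fun y => eR (g y)) (2 * Real.pi * Complex.I * g' * eR (g x)) x := by
  have h := ((hg.ofReal_comp).const_mul (2 * Real.pi * Complex.I)).cexp
  unfold _root_.eR
  convert h using 1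
  ring

end Exponential

section OscillatoryIntegral

/-- Integration by parts for an oscillatory integral. -/
lemma norm_integral_mul_deriv_mul_eR_le {p q : ℝ} (hpq : p ≤ q) {g g' k k' : ℝ → ℝ}
    (hg : ∀ x ∈ Set.Icc p q, HasDerivAt g (g' x) x) (hg' : ContinuousOn g' (Set.Icc p q))
    (hk : ∀ x ∈ Set.Icc p q, HasDerivAt k (k' x) x) (hk' : ContinuousOn k' (Set.Icc p q)) :
    ‖∫ x in p..q, ((k x * g' x : ℝ) : ℂ) * eR (g x)‖ ≤
      (|k p| + |k q| + ∫ x in p..q, |k' x|) / (2 * Real.pi) := by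
  have hpi := Real.pi_pos
  rw [← Set.uIcc_of_le hpq] at hg hg' hk hk'
  have hgc : ContinuousOn g (Set.uIcc p q) := fun x hx => (hg x hx).continuousAt.continuousWithinAt
  have hkc : ContinuousOn k (Set.uIcc p q) := fun x hx => (hk x hx).continuousAt.continuousWithinAt
  have hec : ContinuousOn (fun x => eR (g x)) (Set.uIcc p q) := continuous_eR.comp_continuousOn hgc
  have hIBP := integral_mul_deriv_eq_deriv_mul (a := p) (b := q)
    (u := fun x => (k x : ℂ)) (u' := fun x => (k' x : ℂ)) (v := fun x => eR (g x))
    (v' := fun x => 2 * Real.pi * Complex.I * g' x * eR (g x))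
    (fun x hx => (hk x hx).ofReal_comp) (fun x hx => (hg x hx).eR)
    (ContinuousOn.intervalIntegrable (by fun_prop))
    (ContinuousOn.intervalIntegrable (by fun_prop))
  have h1 : ∫ x in p..q, (k x : ℂ) * (2 * Real.pi * Complex.I * g' x * eR (g x)) =
      2 * Real.pi * Complex.I * ∫ x in p..q, ((k x * g' x : ℝ) : ℂ) * eR (g x) := by
    rw [← intervalIntegral.integral_const_mul]
    congr 1; ext x; push_cast; ring
  rw [h1] at hIBP
  have h2 : ‖(2 * Real.pi * Complex.I : ℂ) * ∫ x in p..q, ((k x * g' x : ℝ) : ℂ) * eR (g x)‖ ≤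
      |k p| + |k q| + ∫ x in p..q, |k' x| := by
    rw [hIBP]
    have h3 : ‖∫ x in p..q, (k' x : ℂ) * eR (g x)‖ ≤ ∫ x in p..q, |k' x| := by
      refine (intervalIntegral.norm_integral_le_integral_norm hpq).trans_eq ?_
      congr 1; ext x; simp [norm_eR]
    refine (norm_sub_le _ _).trans (add_le_add ((norm_sub_le _ _).trans ?_) h3)
    simp [norm_eR, add_comm]
  rw [norm_mul] at h2
  have h4 : ‖(2 * Real.pi * Complex.I : ℂ)‖ = 2 * Real.pi := by
    simp [abs_of_pos hpi]
  rw [h4] at h2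
  rw [le_div_iff₀ (by positivity)]; linarith

/-- A variant of integration by parts in which the amplitude is monotone. -/
lemma norm_integral_mul_deriv_mul_eR_le_of_nonneg {p q K : ℝ} (hpq : p ≤ q) {g g' k k' : ℝ → ℝ}
    (hg : ∀ x ∈ Set.Icc p q, HasDerivAt g (g' x) x) (hg' : ContinuousOn g' (Set.Icc p q))
    (hk : ∀ x ∈ Set.Icc p q, HasDerivAt k (k' x) x) (hk' : ContinuousOn k' (Set.Icc p q))
    (hk0 : ∀ x ∈ Set.Icc p q, 0 ≤ k' x) (hp : |k p| ≤ K) (hq : |k q| ≤ K) :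
    ‖∫ x in p..q, ((k x * g' x : ℝ) : ℂ) * eR (g x)‖ ≤ K := by
  have hpi := Real.pi_gt_three
  refine (norm_integral_mul_deriv_mul_eR_le hpq hg hg' hk hk').trans ?_
  have h1 : ∫ x in p..q, |k' x| = k q - k p := by
    rw [← integral_eq_sub_of_hasDerivAt (f := k) (f' := k')]
    · refine intervalIntegral.integral_congr fun x hx => ?_
      rw [Set.uIcc_of_le hpq] at hx
      exact abs_of_nonneg (hk0 x hx)
    · rw [Set.uIcc_of_le hpq]; exact hk
    · rw [← Set.uIcc_of_le hpq] at hk'; exact hk'.intervalIntegrable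
  rw [h1, div_le_iff₀ (by positivity)]
  have := abs_le.1 hp
  have := abs_le.1 hq
  have : 0 ≤ K := (abs_nonneg _).trans hp
  nlinarith

/-- The trivial bound for an oscillatory integral. -/
lemma norm_integral_eR_le {p q : ℝ} (hpq : p ≤ q) (g : ℝ → ℝ) :
    ‖∫ x in p..q, eR (g x)‖ ≤ q - p := by
  have := intervalIntegral.norm_integral_le_of_norm_le_const (a := p) (b := q) (C := 1)
    (f := fun x => eR (g x)) (fun x _ => (norm_eR _).le)
  rwa [one_mul, abs_of_nonneg (sub_nonneg.2 hpq)] at this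

/-- First derivative test, with concave phase and derivative bounded away from zero. -/
lemma norm_integral_eR_le_of_le_deriv {p q m : ℝ} (hpq : p ≤ q) (hm : 0 < m) {g g' g'' : ℝ → ℝ}
    (hg : ∀ x ∈ Set.Icc p q, HasDerivAt g (g' x) x)
    (hg' : ∀ x ∈ Set.Icc p q, HasDerivAt g' (g'' x) x) (hg'' : ContinuousOn g'' (Set.Icc p q))
    (hneg : ∀ x ∈ Set.Icc p q, g'' x ≤ 0) (hlow : ∀ x ∈ Set.Icc p q, m ≤ |g' x|) :
    ‖∫ x in p..q, eR (g x)‖ ≤ 1 / m := by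
  have hg'c : ContinuousOn g' (Set.Icc p q) :=
    fun x hx => (hg' x hx).continuousAt.continuousWithinAt
  have hne : ∀ x ∈ Set.Icc p q, g' x ≠ 0 := fun x hx h => by
    have := hlow x hx; rw [h, abs_zero] at this; linarith
  have h1 : ∫ x in p..q, eR (g x) =
      ∫ x in p..q, (((g' x)⁻¹ * g' x : ℝ) : ℂ) * eR (g x) := by
    refine intervalIntegral.integral_congr fun x hx => ?_
    rw [Set.uIcc_of_le hpq] at hx
    simp [inv_mul_cancel₀ (hne x hx)]
  rw [h1]
  have hb : ∀ x ∈ Set.Icc p q, |(g' x)⁻¹| ≤ 1 / m := fun x hx => by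
    rw [abs_inv, one_div]; exact inv_anti₀ hm (hlow x hx)
  refine norm_integral_mul_deriv_mul_eR_le_of_nonneg (k' := fun x => -g'' x / g' x ^ 2)
    hpq hg hg'c (fun x hx => (hg' x hx).inv (hne x hx)) ?_ ?_
    (hb p (Set.left_mem_Icc.2 hpq)) (hb q (Set.right_mem_Icc.2 hpq))
  · exact hg''.neg.div (hg'c.pow 2) fun x hx => pow_ne_zero _ (hne x hx)
  · exact fun x hx => div_nonneg (neg_nonneg.2 (hneg x hx)) (sq_nonneg _)

end OscillatoryIntegral

section Fresnel

lemma hasDerivAt_cexp_neg_mul_sq (b : ℂ) (s : ℝ) :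
    HasDerivAt (fun x : ℝ => Complex.exp (-b * (x : ℂ) ^ 2))
      (-2 * b * s * Complex.exp (-b * (s : ℂ) ^ 2)) s := by
  have h : HasDerivAt (fun x : ℝ => -b * (x : ℂ) ^ 2) (-b * (2 * s)) s := by
    have := ((hasDerivAt_id s).ofReal_comp.pow 2).const_mul (-b)
    simpa using this
  convert h.cexp using 1
  ring

lemma norm_cexp_neg_mul_sq_le {b : ℂ} (hb : 0 ≤ b.re) (s : ℝ) :
    ‖Complex.exp (-b * (s : ℂ) ^ 2)‖ ≤ 1 := by
  rw [Complex.norm_exp, Real.exp_le_one_iff]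
  have : (-b * (s : ℂ) ^ 2).re = -b.re * s ^ 2 := by
    rw [← Complex.ofReal_pow, Complex.re_mul_ofReal, Complex.neg_re]
  rw [this]; nlinarith [mul_nonneg hb (sq_nonneg s)]

lemma norm_integral_cexp_neg_mul_sq_le {b : ℂ} (hb : 0 ≤ b.re) (hb1 : 1 ≤ ‖b‖) {U V : ℝ}
    (hU : 0 < U) (hUV : U ≤ V) :
    ‖∫ s in U..V, Complex.exp (-b * (s : ℂ) ^ 2)‖ ≤ 1 / U := by
  have hb0 : b ≠ 0 := by intro h; rw [h, norm_zero] at hb1; linarith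
  have hpos : ∀ x ∈ Set.uIcc U V, 0 < x := fun x hx => by
    rw [Set.uIcc_of_le hUV] at hx; exact hU.trans_le hx.1
  have hV : 0 < V := hU.trans_le hUV
  have hd : ∀ x ∈ Set.uIcc U V, HasDerivAt (fun x : ℝ => x⁻¹) (-(x ^ 2)⁻¹) x :=
    fun x hx => hasDerivAt_inv (hpos x hx).ne'
  have hcont : ContinuousOn (fun x : ℝ => -(x ^ 2)⁻¹) (Set.uIcc U V) :=
    (ContinuousOn.inv₀ (by fun_prop) fun x hx => pow_ne_zero _ (hpos x hx).ne').neg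
  have hIBP := integral_mul_deriv_eq_deriv_mul (a := U) (b := V)
    (u := fun x => ((x⁻¹ : ℝ) : ℂ)) (u' := fun x => ((-(x ^ 2)⁻¹ : ℝ) : ℂ))
    (v := fun x : ℝ => Complex.exp (-b * (x : ℂ) ^ 2))
    (v' := fun x : ℝ => -2 * b * x * Complex.exp (-b * (x : ℂ) ^ 2))
    (fun x hx => (hd x hx).ofReal_comp) (fun x _ => hasDerivAt_cexp_neg_mul_sq b x)
    (ContinuousOn.intervalIntegrable (Complex.continuous_ofReal.comp_continuousOn hcont))
    (Continuous.intervalIntegrable (by fun_prop) _ _)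
  have h1 : ∫ x in U..V, ((x⁻¹ : ℝ) : ℂ) * (-2 * b * x * Complex.exp (-b * (x : ℂ) ^ 2)) =
      -2 * b * ∫ x in U..V, Complex.exp (-b * (x : ℂ) ^ 2) := by
    rw [← intervalIntegral.integral_const_mul]
    refine intervalIntegral.integral_congr fun x hx => ?_
    have : (x : ℂ) ≠ 0 := by exact_mod_cast (hpos x hx).ne'
    push_cast; field_simp
  rw [h1] at hIBP
  have h3 : ‖∫ x in U..V, ((-(x ^ 2)⁻¹ : ℝ) : ℂ) * Complex.exp (-b * (x : ℂ) ^ 2)‖ ≤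
      U⁻¹ - V⁻¹ := by
    have hint : ∫ x in U..V, -(-(x ^ 2)⁻¹) = -V⁻¹ - -U⁻¹ :=
      integral_eq_sub_of_hasDerivAt (f := fun x : ℝ => -x⁻¹) (fun x hx => (hd x hx).neg)
        hcont.neg.intervalIntegrable
    rw [show U⁻¹ - V⁻¹ = -V⁻¹ - -U⁻¹ by ring, ← hint]
    refine intervalIntegral.norm_integral_le_of_norm_le hUV (ae_of_all _ fun x hx => ?_)
      hcont.neg.intervalIntegrable
    rw [norm_mul, Complex.norm_real, norm_neg, Real.norm_of_nonneg (by positivity), neg_neg]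
    exact mul_le_of_le_one_right (by positivity) (norm_cexp_neg_mul_sq_le hb x)
  have hnorm : ∀ x : ℝ, 0 < x →
      ‖((x⁻¹ : ℝ) : ℂ) * Complex.exp (-b * (x : ℂ) ^ 2)‖ ≤ x⁻¹ := fun x hx => by
    rw [norm_mul, Complex.norm_real, Real.norm_of_nonneg (by positivity)]
    exact mul_le_of_le_one_right (by positivity) (norm_cexp_neg_mul_sq_le hb x)
  have h4 : ‖-2 * b * ∫ x in U..V, Complex.exp (-b * (x : ℂ) ^ 2)‖ ≤ 2 * U⁻¹ := by
    rw [hIBP]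
    have := (norm_sub_le _ _).trans (add_le_add ((norm_sub_le _ _).trans
      (add_le_add (hnorm V hV) (hnorm U hU))) h3)
    linarith
  rw [norm_mul, norm_mul, norm_neg, Complex.norm_ofNat] at h4
  rw [one_div]
  nlinarith [norm_nonneg (∫ x in U..V, Complex.exp (-b * (x : ℂ) ^ 2))]

lemma cpow_half_fresnel :
    (Real.pi / (2 * Real.pi * Complex.I) : ℂ) ^ (1 / 2 : ℂ) = eR (-1 / 8) / Real.sqrt 2 := by
  have hpi : (Real.pi : ℂ) ≠ 0 := by exact_mod_cast Real.pi_ne_zero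
  have h1 : (Real.pi / (2 * Real.pi * Complex.I) : ℂ) =
      Complex.exp ((-Real.log 2 : ℝ) + (-Real.pi / 2 : ℝ) * Complex.I) := by
    rw [Complex.exp_add, ← Complex.ofReal_exp, Real.exp_neg, Real.exp_log (by norm_num),
      Complex.exp_mul_I, ← Complex.ofReal_cos, ← Complex.ofReal_sin, neg_div, Real.cos_neg,
      Real.sin_neg, Real.cos_pi_div_two, Real.sin_pi_div_two]
    push_cast
    field_simp
    simp
  have h2 : (Real.pi / (2 * Real.pi * Complex.I) : ℂ) ≠ 0 := by rw [h1]; exact Complex.exp_ne_zero _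
  rw [Complex.cpow_def_of_ne_zero h2, h1, Complex.log_exp]
  · have h3 : ((Real.sqrt 2 : ℝ) : ℂ) = Complex.exp (Real.log 2 / 2 : ℝ) := by
      rw [← Complex.ofReal_exp, Real.exp_half, Real.exp_log (by norm_num)]
    rw [h3, eR, ← Complex.exp_sub]
    congr 1; push_cast; ring
  · rw [Complex.add_im, Complex.ofReal_im, Complex.im_ofReal_mul, Complex.I_im]
    linarith [Real.pi_pos]
  · rw [Complex.add_im, Complex.ofReal_im, Complex.im_ofReal_mul, Complex.I_im]
    linarith [Real.pi_pos]

/-- Fresnel integral, with the error of truncation. -/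
lemma norm_integral_eR_neg_sq_sub_le {U : ℝ} (hU : 0 < U) :
    ‖(∫ s in (0 : ℝ)..U, eR (-s ^ 2)) - eR (-1 / 8) / (2 * Real.sqrt 2)‖ ≤ 1 / U := by
  have hpi := Real.pi_gt_three
  let b : ℝ → ℂ := fun ε => ε + 2 * Real.pi * Complex.I
  have hbre : ∀ ε, (b ε).re = ε := fun ε => by simp [b]
  have hbim : ∀ ε, (b ε).im = 2 * Real.pi := fun ε => by simp [b]
  have hb1 : ∀ ε, 1 ≤ ‖b ε‖ := fun ε => by
    have := Complex.abs_im_le_norm (b ε)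
    rw [hbim, abs_of_pos (by positivity)] at this
    linarith
  have hbc : Continuous b := by fun_prop
  have key : ∀ ε : ℝ, 0 < ε →
      ‖(∫ s in (0 : ℝ)..U, Complex.exp (-b ε * (s : ℂ) ^ 2)) -
        (Real.pi / b ε) ^ (1 / 2 : ℂ) / 2‖ ≤ 1 / U := by
    intro ε hε
    have hre : 0 < (b ε).re := by rw [hbre]; exact hε
    rw [← integral_gaussian_complex_Ioi hre]
    have hlim := intervalIntegral_tendsto_integral_Ioi (0 : ℝ)
      (integrable_cexp_neg_mul_sq hre).integrableOn tendsto_id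
    have hlim2 := (tendsto_const_nhds (x := ∫ s in (0 : ℝ)..U,
      Complex.exp (-b ε * (s : ℂ) ^ 2))).sub hlim
    refine le_of_tendsto hlim2.norm ?_
    filter_upwards [eventually_ge_atTop U] with V hV
    have hii : ∀ p q : ℝ, IntervalIntegrable (fun s : ℝ => Complex.exp (-b ε * (s : ℂ) ^ 2))
        volume p q := fun p q => Continuous.intervalIntegrable (by fun_prop) _ _
    rw [id, intervalIntegral.integral_interval_sub_left (hii _ _) (hii _ _),
      intervalIntegral.integral_symm, norm_neg]
    exact norm_integral_cexp_neg_mul_sq_le hre.le (hb1 ε) hU hV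
  have hcont1 : Tendsto (fun ε => ∫ s in (0 : ℝ)..U, Complex.exp (-b ε * (s : ℂ) ^ 2)) (𝓝[>] 0)
      (𝓝 (∫ s in (0 : ℝ)..U, Complex.exp (-b 0 * (s : ℂ) ^ 2))) := by
    refine Tendsto.mono_left (Continuous.tendsto ?_ 0) nhdsWithin_le_nhds
    refine intervalIntegral.continuous_parametric_intervalIntegral_of_continuous'
      (f := fun ε (s : ℝ) => Complex.exp (-b ε * (s : ℂ) ^ 2)) ?_ 0 U
    unfold Function.uncurry
    fun_prop
  have hb0 : ∀ ε, b ε ≠ 0 := fun ε h => by have := hb1 ε; rw [h, norm_zero] at this; linarith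
  have hcont2 : Tendsto (fun ε => (Real.pi / b ε) ^ (1 / 2 : ℂ) / 2) (𝓝[>] 0)
      (𝓝 ((Real.pi / b 0) ^ (1 / 2 : ℂ) / 2)) := by
    refine Tendsto.mono_left (ContinuousAt.tendsto ?_) nhdsWithin_le_nhds
    refine ContinuousAt.div_const (ContinuousAt.cpow ?_ continuousAt_const ?_) _
    · exact continuousAt_const.div hbc.continuousAt (hb0 0)
    · right
      have : (Real.pi / b 0 : ℂ) = -Complex.I / 2 := by
        have : (Real.pi : ℂ) ≠ 0 := by exact_mod_cast Real.pi_ne_zero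
        simp only [b, Complex.ofReal_zero, zero_add]
        field_simp
        rw [Complex.I_sq, neg_neg]
      rw [this]; simp
  have h := le_of_tendsto (hcont1.sub hcont2).norm
    (eventually_nhdsWithin_of_forall fun ε (hε : 0 < ε) => key ε hε)
  have hb00 : b 0 = 2 * Real.pi * Complex.I := by simp [b]
  have hint : ∫ s in (0 : ℝ)..U, eR (-s ^ 2) =
      ∫ s in (0 : ℝ)..U, Complex.exp (-b 0 * (s : ℂ) ^ 2) := by
    congr 1; ext s; unfold eR; rw [hb00]; congr 1; push_cast; ring
  rw [hb00, cpow_half_fresnel, ← hb00, ← hint, div_div] at h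
  rwa [mul_comm (2 : ℂ)]

lemma norm_integral_eR_neg_sq_sub_le_two {U : ℝ} (hU : 0 ≤ U) :
    ‖(∫ s in (0 : ℝ)..U, eR (-s ^ 2)) - eR (-1 / 8) / (2 * Real.sqrt 2)‖ ≤ 2 := by
  rcases le_total 1 U with h | h
  · refine (norm_integral_eR_neg_sq_sub_le (by linarith)).trans ?_
    rw [div_le_iff₀ (by linarith)]; linarith
  · refine (norm_sub_le _ _).trans ?_
    have h1 := norm_integral_eR_le hU (fun s => -s ^ 2)
    have h2 : ‖eR (-1 / 8) / (2 * Real.sqrt 2)‖ ≤ 1 := by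
      have : (1 : ℝ) ≤ Real.sqrt 2 := Real.one_le_sqrt.2 (by norm_num)
      rw [norm_div, norm_eR, norm_mul, Complex.norm_real, Complex.norm_ofNat,
        Real.norm_of_nonneg (by positivity), div_le_one (by positivity)]
      linarith
    linarith

end Fresnel

section StationaryPhase

lemma abs_le_mul_pow_succ_of_deriv {φ φ' : ℝ → ℝ} {q K : ℝ} {n : ℕ} (hK : 0 ≤ K)
    (hφ : ∀ t ∈ Set.Icc 0 q, HasDerivAt φ (φ' t) t) (h0 : φ 0 = 0)
    (hb : ∀ t ∈ Set.Icc 0 q, |φ' t| ≤ K * t ^ n) {t : ℝ} (ht : t ∈ Set.Icc 0 q) :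
    |φ t| ≤ K * t ^ (n + 1) := by
  have hsub : ∀ s ∈ Set.Icc 0 t, s ∈ Set.Icc 0 q := fun s hs => ⟨hs.1, hs.2.trans ht.2⟩
  have := Convex.norm_image_sub_le_of_norm_hasDerivWithin_le (f := φ) (f' := φ')
    (s := Set.Icc 0 t) (C := K * t ^ n) (x := 0) (y := t)
    (fun s hs => (hφ s (hsub s hs)).hasDerivWithinAt)
    (fun s hs => (hb s (hsub s hs)).trans
      (mul_le_mul_of_nonneg_left (pow_le_pow_left₀ hs.1 hs.2 n) hK))
    (convex_Icc 0 t) ⟨le_rfl, ht.1⟩ ⟨ht.1, le_rfl⟩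
  rw [h0, sub_zero, sub_zero, Real.norm_eq_abs, Real.norm_of_nonneg ht.1] at this
  rw [pow_succ, ← mul_assoc]; exact this

lemma nonneg_of_deriv_nonneg {φ φ' : ℝ → ℝ} {q : ℝ}
    (hφ : ∀ t ∈ Set.Icc 0 q, HasDerivAt φ (φ' t) t) (h0 : φ 0 = 0)
    (hb : ∀ t ∈ Set.Icc 0 q, 0 ≤ φ' t) {t : ℝ} (ht : t ∈ Set.Icc 0 q) : 0 ≤ φ t := by
  have := monotoneOn_of_hasDerivWithinAt_nonneg (f := φ) (f' := φ') (convex_Icc 0 q)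
    (fun s hs => (hφ s hs).continuousAt.continuousWithinAt)
    (fun s hs => (hφ s (interior_subset hs)).hasDerivWithinAt)
    (fun s hs => hb s (interior_subset hs)) ⟨le_rfl, ht.1.trans ht.2⟩ ht ht.1
  rwa [h0] at this

set_option maxHeartbeats 1000000 in
/-- Bounds for the amplitude left after removing the Fresnel part of a stationary phase integral,
and for its derivative. -/
lemma abs_stationary_amplitude_le {κ K l m t P Q R : ℝ} (hκ : 0 < κ) (hK : 1 ≤ K)
    (ht : 0 < t) (ht1 : t ≤ 1) (hl : κ ≤ l) (hlK : l ≤ K) (hm : |m| ≤ K)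
    (hQ : κ ≤ Q) (hQK : Q ≤ K) (hR : κ ^ 2 ≤ R) (hRK : R ≤ K ^ 2)
    (hP' : |P - l - m * t| ≤ K * t ^ 2) (hQ' : |Q - l - m * t / 2| ≤ K * t ^ 2)
    (hR' : |R - l ^ 2 - l * m * t / 3| ≤ 2 * K ^ 2 * t ^ 2) :
    |1 / (t * Q) - 1 / (t * √R)| ≤ 7 * K ^ 2 / κ ^ 3 ∧
    |-P / (t * Q) ^ 2 + l * (t * Q) / (t * √R) ^ 3| ≤ 5 * K ^ 2 / κ ^ 3 + 19 * K ^ 6 / κ ^ 7 := by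
  have hl0 : 0 < l := hκ.trans_le hl
  have hQ0 : 0 < Q := hκ.trans_le hQ
  have hK0 : 0 < K := by linarith
  have hR0 : 0 < R := (by positivity : 0 < κ ^ 2).trans_le hR
  set S := √R with hS
  have hSR : S ^ 2 = R := Real.sq_sqrt hR0.le
  have hSκ : κ ≤ S := Real.le_sqrt_of_sq_le hR
  have hS0 : 0 < S := hκ.trans_le hSκ
  have hlabs : |l| ≤ K := by rwa [abs_of_pos hl0]
  have hQabs : |Q| ≤ K := by rwa [abs_of_pos hQ0]
  have htabs : |t| = t := abs_of_pos ht
  have ht2 : t ^ 2 ≤ t := by nlinarith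
  have hmt : |m * t| ≤ K := by
    rw [abs_mul, htabs]; nlinarith [abs_nonneg m]
  have hmt2 : |(m * t) ^ 2| ≤ K ^ 2 * t ^ 2 := by
    rw [mul_pow, abs_mul, abs_pow, abs_pow, htabs]; gcongr
  have hQ2 : |Q ^ 2 - l ^ 2 - l * m * t| ≤ 4 * K ^ 2 * t ^ 2 := by
    have e : Q ^ 2 - l ^ 2 - l * m * t =
      (Q - l - m * t / 2) * (Q + l + m * t / 2) + (m * t) ^ 2 / 4 := by ring
    have h1 : |Q + l + m * t / 2| ≤ 5 / 2 * K := by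
      have := abs_le.1 hmt; rw [abs_le]; constructor <;> linarith
    have h2 : |(Q - l - m * t / 2) * (Q + l + m * t / 2)| ≤ (K * t ^ 2) * (5 / 2 * K) := by
      rw [abs_mul]; exact mul_le_mul hQ' h1 (abs_nonneg _) (by positivity)
    rw [e]
    refine (abs_add_le _ _).trans ?_
    have h3 : |(m * t) ^ 2 / 4| = |(m * t) ^ 2| / 4 := by rw [abs_div]; norm_num
    have : 0 ≤ K ^ 2 * t ^ 2 := by positivity
    linarith
  have hlP : |l * P - Q ^ 2| ≤ 5 * K ^ 2 * t ^ 2 := by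
    have e : l * P - Q ^ 2 = l * (P - l - m * t) - (Q ^ 2 - l ^ 2 - l * m * t) := by ring
    have h2 : |l * (P - l - m * t)| ≤ K * (K * t ^ 2) := by
      rw [abs_mul]; exact mul_le_mul hlabs hP' (abs_nonneg _) hK0.le
    rw [e]
    refine (abs_sub _ _).trans ?_
    linarith
  have hRQ : |R - Q ^ 2| ≤ 7 * K ^ 2 * t := by
    have e : R - Q ^ 2 = (R - l ^ 2 - l * m * t / 3) - (Q ^ 2 - l ^ 2 - l * m * t)
      + (-(2 / 3) * (l * (m * t))) := by ring
    have h2 : |-(2 / 3) * (l * (m * t))| ≤ K ^ 2 * t := by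
      rw [abs_mul, abs_mul, abs_mul, htabs]
      have : |l| * (|m| * t) ≤ K * (K * t) := by gcongr
      rw [abs_neg, abs_of_pos (by norm_num : (0 : ℝ) < 2 / 3)]
      linarith [mul_nonneg (abs_nonneg l) (mul_nonneg (abs_nonneg m) ht.le)]
    rw [e]
    refine (abs_add_le _ _).trans ((add_le_add (abs_sub _ _) le_rfl).trans ?_)
    have : K ^ 2 * t ^ 2 ≤ K ^ 2 * t := by gcongr
    linarith
  have hR3 : |R ^ 3 - l ^ 6 - l ^ 5 * m * t| ≤ 15 * K ^ 6 * t ^ 2 := by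
    set A := l ^ 2 + l * (m * t) / 3 with hA
    have hAK : |A| ≤ 2 * K ^ 2 := by
      have h1 : |l ^ 2| ≤ K ^ 2 := by rw [abs_pow]; gcongr
      have h2 : |l * (m * t) / 3| ≤ K ^ 2 := by
        rw [abs_div, abs_mul]
        have : |l| * |m * t| ≤ K * K := by gcongr
        rw [abs_of_pos (by norm_num : (0 : ℝ) < 3)]
        linarith [sq_nonneg K]
      exact (abs_add_le _ _).trans (by linarith)
    have hr : |R - A| ≤ 2 * K ^ 2 * t ^ 2 := by convert hR' using 2; rw [hA]; ring
    have hRa : |R| ≤ K ^ 2 := by rwa [abs_of_pos hR0]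
    have e : R ^ 3 - l ^ 6 - l ^ 5 * m * t = (R - A) * (R ^ 2 + R * A + A ^ 2) +
      l ^ 3 * ((m * t) ^ 2 * (l / 3 + m * t / 27)) := by rw [hA]; ring
    have h1 : |R ^ 2 + R * A + A ^ 2| ≤ 7 * K ^ 4 := by
      refine (abs_add_le _ _).trans ((add_le_add (abs_add_le _ _) le_rfl).trans ?_)
      have a1 : |R ^ 2| ≤ (K ^ 2) ^ 2 := by rw [abs_pow]; gcongr
      have a2 : |R * A| ≤ K ^ 2 * (2 * K ^ 2) := by rw [abs_mul]; gcongr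
      have a3 : |A ^ 2| ≤ (2 * K ^ 2) ^ 2 := by rw [abs_pow]; gcongr
      linarith
    have h2 : |(R - A) * (R ^ 2 + R * A + A ^ 2)| ≤ (2 * K ^ 2 * t ^ 2) * (7 * K ^ 4) := by
      rw [abs_mul]; gcongr
    have h3 : |l / 3 + m * t / 27| ≤ K := by
      have := abs_le.1 hmt; rw [abs_le]; constructor <;> linarith
    have h4 : |l ^ 3 * ((m * t) ^ 2 * (l / 3 + m * t / 27))| ≤ K ^ 3 * (K ^ 2 * t ^ 2 * K) := by
      rw [abs_mul, abs_mul, abs_pow]; gcongr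
    rw [e]
    refine (abs_add_le _ _).trans ?_
    linarith
  have hlR : |l ^ 4 * Q ^ 2 - R ^ 3| ≤ 19 * K ^ 6 * t ^ 2 := by
    have e : l ^ 4 * Q ^ 2 - R ^ 3 = l ^ 4 * (Q ^ 2 - l ^ 2 - l * m * t) -
      (R ^ 3 - l ^ 6 - l ^ 5 * m * t) := by ring
    have h1 : |l ^ 4 * (Q ^ 2 - l ^ 2 - l * m * t)| ≤ K ^ 4 * (4 * K ^ 2 * t ^ 2) := by
      rw [abs_mul, abs_pow]; gcongr
    rw [e]
    refine (abs_sub _ _).trans ?_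
    linarith
  constructor
  · have e : 1 / (t * Q) - 1 / (t * S) = (R - Q ^ 2) / (t * (Q * S * (S + Q))) := by
      rw [← hSR]; field_simp; ring
    rw [e, abs_div, abs_of_pos (by positivity : 0 < t * (Q * S * (S + Q))),
      div_le_div_iff₀ (by positivity) (by positivity)]
    have : κ ^ 3 ≤ Q * S * (S + Q) := by
      have : κ * κ * κ ≤ Q * S * (S + Q) := by gcongr; linarith
      linarith [pow_succ κ 2, sq κ]
    calc |R - Q ^ 2| * κ ^ 3 ≤ (7 * K ^ 2 * t) * (Q * S * (S + Q)) := by gcongr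
      _ = _ := by ring
  · have e : -P / (t * Q) ^ 2 + l * (t * Q) / (t * S) ^ 3 =
      -((l * P - Q ^ 2) / (t ^ 2 * (l * Q ^ 2))) +
        (l ^ 4 * Q ^ 2 - R ^ 3) / (t ^ 2 * (l * S ^ 3 * (l ^ 2 * Q + S ^ 3))) := by
      rw [← hSR]; field_simp; ring
    rw [e]
    refine (abs_add_le _ _).trans (add_le_add ?_ ?_)
    · rw [abs_neg, abs_div, abs_of_pos (by positivity : 0 < t ^ 2 * (l * Q ^ 2)),
        div_le_div_iff₀ (by positivity) (by positivity)]
      have : κ ^ 3 ≤ l * Q ^ 2 := by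
        have : κ * κ ^ 2 ≤ l * Q ^ 2 := by gcongr
        linarith [pow_succ' κ 2]
      calc |l * P - Q ^ 2| * κ ^ 3 ≤ (5 * K ^ 2 * t ^ 2) * (l * Q ^ 2) := by gcongr
        _ = _ := by ring
    · rw [abs_div, abs_of_pos (by positivity : 0 < t ^ 2 * (l * S ^ 3 * (l ^ 2 * Q + S ^ 3))),
        div_le_div_iff₀ (by positivity) (by positivity)]
      have : κ ^ 7 ≤ l * S ^ 3 * (l ^ 2 * Q + S ^ 3) := by
        have : κ * κ ^ 3 * (κ ^ 2 * κ + 0) ≤ l * S ^ 3 * (l ^ 2 * Q + S ^ 3) := by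
          gcongr; positivity
        calc κ ^ 7 = κ * κ ^ 3 * (κ ^ 2 * κ + 0) := by ring
          _ ≤ _ := this
      calc |l ^ 4 * Q ^ 2 - R ^ 3| * κ ^ 7
          ≤ (19 * K ^ 6 * t ^ 2) * (l * S ^ 3 * (l ^ 2 * Q + S ^ 3)) := by gcongr
        _ = _ := by ring

end StationaryPhase

section StationaryPhase

lemma mul_le_of_le_deriv {φ φ' : ℝ → ℝ} {q c : ℝ} {n : ℕ}
    (hφ : ∀ t ∈ Set.Icc 0 q, HasDerivAt φ (φ' t) t) (h0 : φ 0 = 0)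
    (hb : ∀ t ∈ Set.Icc 0 q, c * t ^ n ≤ φ' t) {t : ℝ} (ht : t ∈ Set.Icc 0 q) :
    c * t ^ (n + 1) / (n + 1) ≤ φ t := by
  have h := nonneg_of_deriv_nonneg (φ := fun t => φ t - c * t ^ (n + 1) / (n + 1))
    (φ' := fun t => φ' t - c * t ^ n) (q := q) (fun s hs => ?_) ?_
    (fun s hs => sub_nonneg.2 (hb s hs)) ht
  · linarith
  · have h1 := (((hasDerivAt_pow (n + 1) s).const_mul c).div_const ((n : ℝ) + 1))
    refine ((hφ s hs).sub h1).congr_deriv ?_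
    have : (n : ℝ) + 1 ≠ 0 := by positivity
    push_cast; field_simp
  · simp [h0]

lemma le_mul_of_deriv_le {φ φ' : ℝ → ℝ} {q c : ℝ} {n : ℕ}
    (hφ : ∀ t ∈ Set.Icc 0 q, HasDerivAt φ (φ' t) t) (h0 : φ 0 = 0)
    (hb : ∀ t ∈ Set.Icc 0 q, φ' t ≤ c * t ^ n) {t : ℝ} (ht : t ∈ Set.Icc 0 q) :
    φ t ≤ c * t ^ (n + 1) / (n + 1) := by
  have h := mul_le_of_le_deriv (φ := fun t => -φ t) (φ' := fun t => -φ' t) (c := -c) (n := n)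
    (fun s hs => (hφ s hs).neg) (by simp [h0]) (fun s hs => by linarith [hb s hs]) ht
  have e : -c * t ^ (n + 1) / (n + 1) = -(c * t ^ (n + 1) / (n + 1)) := by ring
  linarith

/-- Bounds for the amplitude `1 / d' - 1 / √(2 d''(0) d)` and its derivative, where `d` has a
nondegenerate minimum with value `0` at `0`. -/
lemma abs_amplitude_le_of_deriv {κ K q : ℝ} {d d1 d2 d3 d4 : ℝ → ℝ} (hκ : 0 < κ) (hK : 1 ≤ K)
    (hq1 : q ≤ 1)
    (hd : ∀ t ∈ Set.Icc 0 q, HasDerivAt d (d1 t) t)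
    (hd1 : ∀ t ∈ Set.Icc 0 q, HasDerivAt d1 (d2 t) t)
    (hd2 : ∀ t ∈ Set.Icc 0 q, HasDerivAt d2 (d3 t) t)
    (hd3 : ∀ t ∈ Set.Icc 0 q, HasDerivAt d3 (d4 t) t)
    (h0 : d 0 = 0) (h10 : d1 0 = 0)
    (hlow : ∀ t ∈ Set.Icc 0 q, κ ≤ d2 t) (hup : ∀ t ∈ Set.Icc 0 q, d2 t ≤ K)
    (hb3 : ∀ t ∈ Set.Icc 0 q, |d3 t| ≤ K) (hb4 : ∀ t ∈ Set.Icc 0 q, |d4 t| ≤ K)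
    {t : ℝ} (ht0 : 0 < t) (htq : t ≤ q) :
    |1 / d1 t - 1 / √(2 * d2 0 * d t)| ≤ 7 * K ^ 2 / κ ^ 3 ∧
    |-d2 t / d1 t ^ 2 + d2 0 * d1 t / √(2 * d2 0 * d t) ^ 3| ≤
      5 * K ^ 2 / κ ^ 3 + 19 * K ^ 6 / κ ^ 7 := by
  have hK0 : 0 ≤ K := by linarith
  have ht : t ∈ Set.Icc 0 q := ⟨ht0.le, htq⟩
  have hz : (0 : ℝ) ∈ Set.Icc 0 q := ⟨le_rfl, ht0.le.trans htq⟩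
  set l := d2 0 with hl
  set m := d3 0 with hm
  have hlκ : κ ≤ l := hlow 0 hz
  have hlK : l ≤ K := hup 0 hz
  have hl0 : 0 < l := hκ.trans_le hlκ
  have T3 : ∀ s ∈ Set.Icc 0 q, |d3 s - m| ≤ K * s ^ 1 := fun s hs =>
    abs_le_mul_pow_succ_of_deriv (φ := fun s => d3 s - m) (φ' := d4) hK0
      (fun s hs => (hd3 s hs).sub_const m) (by simp [hm])
      (fun s hs => by simpa using hb4 s hs) hs
  have T2 : ∀ s ∈ Set.Icc 0 q, |d2 s - l - m * s| ≤ K * s ^ 2 := fun s hs =>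
    abs_le_mul_pow_succ_of_deriv (φ := fun s => d2 s - l - m * s) (φ' := fun s => d3 s - m) hK0
      (fun s hs => (((hd2 s hs).sub_const l).sub ((hasDerivAt_id s).const_mul m)).congr_deriv
        (by ring)) (by simp [hl]) T3 hs
  have T1 : ∀ s ∈ Set.Icc 0 q, |d1 s - l * s - m * s ^ 2 / 2| ≤ K * s ^ 3 := fun s hs =>
    abs_le_mul_pow_succ_of_deriv (φ := fun s => d1 s - l * s - m * s ^ 2 / 2)
      (φ' := fun s => d2 s - l - m * s) hK0
      (fun s hs => (((hd1 s hs).sub ((hasDerivAt_id s).const_mul l)).sub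
        (((hasDerivAt_pow 2 s).const_mul m).div_const 2)).congr_deriv
        (by simp; ring)) (by simp [h10]) T2 hs
  have T0 : ∀ s ∈ Set.Icc 0 q, |d s - l * s ^ 2 / 2 - m * s ^ 3 / 6| ≤ K * s ^ 4 := fun s hs =>
    abs_le_mul_pow_succ_of_deriv (φ := fun s => d s - l * s ^ 2 / 2 - m * s ^ 3 / 6)
      (φ' := fun s => d1 s - l * s - m * s ^ 2 / 2) hK0
      (fun s hs => (((hd s hs).sub (((hasDerivAt_pow 2 s).const_mul l).div_const 2)).sub
        (((hasDerivAt_pow 3 s).const_mul m).div_const 6)).congr_deriv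
        (by simp; ring)) (by simp [h0]) T1 hs
  have A1 : κ * t ≤ d1 t := by
    simpa using mul_le_of_le_deriv (n := 0) (c := κ) hd1 h10 (by simpa using hlow) ht
  have B1 : d1 t ≤ K * t := by
    simpa using le_mul_of_deriv_le (n := 0) (c := K) hd1 h10 (by simpa using hup) ht
  have A1' : ∀ s ∈ Set.Icc 0 q, κ * s ^ 1 ≤ d1 s := fun s hs => by
    simpa using mul_le_of_le_deriv (n := 0) (c := κ) hd1 h10 (by simpa using hlow) hs
  have B1' : ∀ s ∈ Set.Icc 0 q, d1 s ≤ K * s ^ 1 := fun s hs => by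
    simpa using le_mul_of_deriv_le (n := 0) (c := K) hd1 h10 (by simpa using hup) hs
  have A0 : κ * t ^ 2 / 2 ≤ d t := by
    have := mul_le_of_le_deriv (n := 1) (c := κ) hd h0 A1' ht
    norm_num at this; exact this
  have B0 : d t ≤ K * t ^ 2 / 2 := by
    have := le_mul_of_deriv_le (n := 1) (c := K) hd h0 B1' ht
    norm_num at this; exact this
  have ht2 : 0 < t ^ 2 := by positivity
  have ht3 : 0 < t ^ 3 := by positivity
  have ht4 : 0 < t ^ 4 := by positivity
  have key := abs_stationary_amplitude_le (κ := κ) (K := K) (l := l) (m := m) (t := t)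
    (P := d2 t) (Q := d1 t / t) (R := 2 * l * d t / t ^ 2) hκ hK ht0 (htq.trans hq1) hlκ hlK
    (hb3 0 hz) (by rwa [le_div_iff₀ ht0]) (by rwa [div_le_iff₀ ht0])
    (by
      rw [le_div_iff₀ ht2]
      have : l * (κ * t ^ 2 / 2) ≤ l * d t := by gcongr
      have : κ * (κ * t ^ 2) ≤ l * (κ * t ^ 2) := by gcongr
      linarith)
    (by
      rw [div_le_iff₀ ht2]
      have : l * d t ≤ l * (K * t ^ 2 / 2) := by gcongr
      have : l * (K * t ^ 2) ≤ K * (K * t ^ 2) := by gcongr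
      linarith)
    (T2 t ht)
    (by
      have e : d1 t / t - l - m * t / 2 = (d1 t - l * t - m * t ^ 2 / 2) / t := by
        field_simp
      rw [e, abs_div, abs_of_pos ht0, div_le_iff₀ ht0]
      linarith [T1 t ht])
    (by
      have e : 2 * l * d t / t ^ 2 - l ^ 2 - l * m * t / 3 =
        2 * l * (d t - l * t ^ 2 / 2 - m * t ^ 3 / 6) / t ^ 2 := by
        field_simp; ring
      rw [e, abs_div, abs_of_pos ht2, div_le_iff₀ ht2, abs_mul, abs_of_pos (by positivity)]
      have : 2 * l * |d t - l * t ^ 2 / 2 - m * t ^ 3 / 6| ≤ 2 * K * (K * t ^ 4) := by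
        gcongr; exact T0 t ht
      linarith)
  have e1 : t * (d1 t / t) = d1 t := by field_simp
  have e2 : t * √(2 * l * d t / t ^ 2) = √(2 * l * d t) := by
    rw [Real.sqrt_div' _ ht2.le, Real.sqrt_sq ht0.le]; field_simp
  rw [e1, e2] at key
  exact key

set_option maxHeartbeats 1000000 in
/-- Comparison of a one-sided stationary phase integral with a Fresnel integral. -/
lemma norm_integral_sub_fresnel_le {κ K q F : ℝ} {d d1 d2 d3 d4 : ℝ → ℝ} (hκ : 0 < κ) (hK : 1 ≤ K)
    (hF : 0 < F) (hq : 0 < q) (hq1 : q ≤ 1)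
    (hd : ∀ t ∈ Set.Icc 0 q, HasDerivAt d (d1 t) t)
    (hd1 : ∀ t ∈ Set.Icc 0 q, HasDerivAt d1 (d2 t) t)
    (hd2 : ∀ t ∈ Set.Icc 0 q, HasDerivAt d2 (d3 t) t)
    (hd3 : ∀ t ∈ Set.Icc 0 q, HasDerivAt d3 (d4 t) t)
    (h0 : d 0 = 0) (h10 : d1 0 = 0)
    (hlow : ∀ t ∈ Set.Icc 0 q, κ ≤ d2 t) (hup : ∀ t ∈ Set.Icc 0 q, d2 t ≤ K)
    (hb3 : ∀ t ∈ Set.Icc 0 q, |d3 t| ≤ K) (hb4 : ∀ t ∈ Set.Icc 0 q, |d4 t| ≤ K) :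
    ‖(∫ t in (0 : ℝ)..q, eR (-(F * d t))) -
      ((√(2 / (d2 0 * F)) : ℝ) : ℂ) * ∫ s in (0 : ℝ)..√(F * d q), eR (-s ^ 2)‖ ≤
      (19 * K ^ 2 / κ ^ 3 + 19 * K ^ 6 / κ ^ 7) / F := by
  have hpi := Real.pi_gt_three
  have hz : (0 : ℝ) ∈ Set.Icc 0 q := ⟨le_rfl, hq.le⟩
  have hamp := fun t h1 h2 => abs_amplitude_le_of_deriv (t := t) hκ hK hq1 hd hd1 hd2 hd3 h0 h10
    hlow hup hb3 hb4 h1 h2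
  set l := d2 0 with hl
  have hl0 : 0 < l := hκ.trans_le (hlow 0 hz)
  have A1 : ∀ s ∈ Set.Icc 0 q, κ * s ^ 1 ≤ d1 s := fun s hs => by
    simpa using mul_le_of_le_deriv (n := 0) (c := κ) hd1 h10 (by simpa using hlow) hs
  have A0 : ∀ s ∈ Set.Icc 0 q, κ * s ^ 2 / 2 ≤ d s := fun s hs => by
    have := mul_le_of_le_deriv (n := 1) (c := κ) hd h0 A1 hs
    norm_num at this; exact this
  have hdc : ContinuousOn d (Set.Icc 0 q) :=
    fun x hx => (hd x hx).continuousAt.continuousWithinAt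
  have hd1c : ContinuousOn d1 (Set.Icc 0 q) :=
    fun x hx => (hd1 x hx).continuousAt.continuousWithinAt
  have hd2c : ContinuousOn d2 (Set.Icc 0 q) :=
    fun x hx => (hd2 x hx).continuousAt.continuousWithinAt
  have hec : ContinuousOn (fun t => eR (-(F * d t))) (Set.Icc 0 q) :=
    continuous_eR.comp_continuousOn (by fun_prop)
  set B1 := 7 * K ^ 2 / κ ^ 3 with hB1
  set B2 := 5 * K ^ 2 / κ ^ 3 + 19 * K ^ 6 / κ ^ 7 with hB2
  have hB1' : 0 ≤ B1 := by positivity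
  have hB2' : 0 ≤ B2 := by positivity
  set w := √(2 / (l * F)) with hw
  have hcut : ∀ δ ∈ Set.Ioo 0 q,
      ‖(∫ t in (0 : ℝ)..q, eR (-(F * d t))) - (w : ℂ) * ∫ s in (0 : ℝ)..√(F * d q), eR (-s ^ 2)‖ ≤
      (2 * B1 + B2) / F + (δ + w * √(F * d δ)) := by
    intro δ hδ
    have hδ0 : 0 < δ := hδ.1
    have hδq : δ ≤ q := hδ.2.le
    have hsub : Set.Icc δ q ⊆ Set.Icc 0 q := Set.Icc_subset_Icc_left hδ0.le
    have hpos : ∀ t ∈ Set.Icc δ q, 0 < t := fun t ht => hδ0.trans_le ht.1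
    have hd1pos : ∀ t ∈ Set.Icc δ q, 0 < d1 t := fun t ht =>
      lt_of_lt_of_le (by have := hpos t ht; positivity) (A1 t (hsub ht))
    have hdpos : ∀ t ∈ Set.Icc δ q, 0 < d t := fun t ht =>
      lt_of_lt_of_le (by have := hpos t ht; positivity) (A0 t (hsub ht))
    -- splitting the amplitude
    have hsplit : ∫ t in δ..q, eR (-(F * d t)) =
        (∫ t in δ..q, ((d1 t / √(2 * l * d t) : ℝ) : ℂ) * eR (-(F * d t))) +
        ∫ t in δ..q, ((-(1 / F) * (1 / d1 t - 1 / √(2 * l * d t)) * (-(F * d1 t)) : ℝ) : ℂ) *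
          eR (-(F * d t)) := by
      have hsc : ContinuousOn (fun t => √(2 * l * d t)) (Set.Icc δ q) :=
        Real.continuous_sqrt.comp_continuousOn (continuousOn_const.mul (hdc.mono hsub))
      have hsne : ∀ t ∈ Set.Icc δ q, √(2 * l * d t) ≠ 0 := fun t ht =>
        (Real.sqrt_pos.2 (mul_pos (by positivity) (hdpos t ht))).ne'
      have hd1c' := hd1c.mono hsub
      rw [← intervalIntegral.integral_add]
      · refine intervalIntegral.integral_congr fun t ht => ?_
        rw [Set.uIcc_of_le hδq] at ht
        have h1 : d1 t ≠ 0 := (hd1pos t ht).ne'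
        have h2 := hsne t ht
        have : d1 t / √(2 * l * d t) + -(1 / F) * (1 / d1 t - 1 / √(2 * l * d t)) * (-(F * d1 t))
          = 1 := by field_simp; ring
        rw [← add_mul, ← Complex.ofReal_add, this, Complex.ofReal_one, one_mul]
      · refine ContinuousOn.intervalIntegrable ?_
        rw [Set.uIcc_of_le hδq]
        exact (Complex.continuous_ofReal.comp_continuousOn (hd1c'.div hsc hsne)).mul
          (hec.mono hsub)
      · refine ContinuousOn.intervalIntegrable ?_
        rw [Set.uIcc_of_le hδq]
        refine (Complex.continuous_ofReal.comp_continuousOn ?_).mul (hec.mono hsub)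
        refine (continuousOn_const.mul ((continuousOn_const.div hd1c' fun t ht =>
          (hd1pos t ht).ne').sub (continuousOn_const.div hsc hsne))).mul
          (continuousOn_const.mul hd1c').neg
    -- the Fresnel part
    have hfres : ∫ t in δ..q, ((d1 t / √(2 * l * d t) : ℝ) : ℂ) * eR (-(F * d t)) =
        (w : ℂ) * ∫ s in √(F * d δ)..√(F * d q), eR (-s ^ 2) := by
      have hsc : ContinuousOn (fun t => √(F * d t)) (Set.Icc δ q) :=
        Real.continuous_sqrt.comp_continuousOn (continuousOn_const.mul (hdc.mono hsub))
      have hder : ∀ t ∈ Set.Icc δ q,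
          HasDerivAt (fun t => √(F * d t)) (F * d1 t / (2 * √(F * d t))) t := fun t ht =>
        ((hd t (hsub ht)).const_mul F).sqrt (mul_pos hF (hdpos t ht)).ne'
      have hsub' := intervalIntegral.integral_deriv_smul_comp (a := δ) (b := q)
        (f := fun t => √(F * d t)) (f' := fun t => F * d1 t / (2 * √(F * d t)))
        (g := fun s => eR (-s ^ 2))
        (by rw [Set.uIcc_of_le hδq]; exact hder)
        (by
          rw [Set.uIcc_of_le hδq]
          refine (continuousOn_const.mul (hd1c.mono hsub)).div (continuousOn_const.mul hsc) ?_
          intro t ht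
          have := Real.sqrt_pos.2 (mul_pos hF (hdpos t ht))
          positivity)
        (continuous_eR.comp (by fun_prop))
      rw [← hsub', ← intervalIntegral.integral_const_mul]
      refine intervalIntegral.integral_congr fun t ht => ?_
      rw [Set.uIcc_of_le hδq] at ht
      have hdt := hdpos t ht
      have e1 : w * (F * d1 t / (2 * √(F * d t))) = d1 t / √(2 * l * d t) := by
        have hS : 0 < √(F * d t) := Real.sqrt_pos.2 (mul_pos hF hdt)
        have hS2 : 0 < √(2 * l * d t) := Real.sqrt_pos.2 (by positivity)
        have : w * √(2 * l * d t) * F = 2 * √(F * d t) := by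
          have h4 : 2 * √(F * d t) = √(4 * (F * d t)) := by
            rw [Real.sqrt_mul (by norm_num : (0 : ℝ) ≤ 4), show (4 : ℝ) = 2 ^ 2 by norm_num,
              Real.sqrt_sq (by norm_num : (0 : ℝ) ≤ 2)]
          rw [h4, hw, ← Real.sqrt_mul (by positivity)]
          nth_rewrite 2 [← Real.sqrt_sq hF.le]
          rw [← Real.sqrt_mul (by positivity)]
          congr 1; field_simp; ring
        rw [mul_div_assoc', div_eq_div_iff (by positivity) hS2.ne', ← this]; ring
      simp only [Function.comp, Complex.real_smul]
      rw [← mul_assoc, ← Complex.ofReal_mul, e1, Real.sq_sqrt (mul_pos hF hdt).le]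
    -- the remaining part
    have hrem : ‖∫ t in δ..q,
        ((-(1 / F) * (1 / d1 t - 1 / √(2 * l * d t)) * (-(F * d1 t)) : ℝ) : ℂ) *
          eR (-(F * d t))‖ ≤ (2 * B1 + B2) / F := by
      have hS : ∀ t ∈ Set.Icc δ q, 0 < √(2 * l * d t) := fun t ht =>
        Real.sqrt_pos.2 (mul_pos (by positivity) (hdpos t ht))
      have hkder : ∀ t ∈ Set.Icc δ q,
          HasDerivAt (fun t => -(1 / F) * (1 / d1 t - 1 / √(2 * l * d t)))
          (-(1 / F) * (-d2 t / d1 t ^ 2 + l * d1 t / √(2 * l * d t) ^ 3)) t := by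
        intro t ht
        have h1 := (hd1 t (hsub ht)).inv (hd1pos t ht).ne'
        have h2 := (((hd t (hsub ht)).const_mul (2 * l)).sqrt
          (mul_pos (by positivity) (hdpos t ht)).ne').inv (hS t ht).ne'
        simp only [one_div]
        refine ((h1.sub h2).const_mul (-F⁻¹)).congr_deriv ?_
        have := hS t ht
        field_simp
        ring
      have hk'c : ContinuousOn
          (fun t => -(1 / F) * (-d2 t / d1 t ^ 2 + l * d1 t / √(2 * l * d t) ^ 3))
          (Set.Icc δ q) := by
        have hsc : ContinuousOn (fun t => √(2 * l * d t)) (Set.Icc δ q) :=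
          Real.continuous_sqrt.comp_continuousOn (continuousOn_const.mul (hdc.mono hsub))
        exact continuousOn_const.mul (((hd2c.mono hsub).neg.div ((hd1c.mono hsub).pow 2)
          fun t ht => pow_ne_zero _ (hd1pos t ht).ne').add
          ((continuousOn_const.mul (hd1c.mono hsub)).div (hsc.pow 3)
          fun t ht => pow_ne_zero _ (hS t ht).ne'))
      have hb := norm_integral_mul_deriv_mul_eR_le hδq (g := fun t => -(F * d t))
        (g' := fun t => -(F * d1 t)) (fun t ht => ((hd t (hsub ht)).const_mul F).neg)
        (continuousOn_const.mul (hd1c.mono hsub)).neg hkder hk'c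
      refine hb.trans ?_
      have hkb : ∀ t ∈ Set.Icc δ q, |-(1 / F) * (1 / d1 t - 1 / √(2 * l * d t))| ≤ B1 / F := by
        intro t ht
        rw [abs_mul, abs_neg, abs_of_pos (by positivity), one_div_mul_eq_div]
        gcongr
        exact (hamp t (hpos t ht) ht.2).1
      have hkb' : ∫ t in δ..q, |-(1 / F) * (-d2 t / d1 t ^ 2 + l * d1 t / √(2 * l * d t) ^ 3)| ≤
          B2 / F := by
        have hle : ∀ t ∈ Set.Icc δ q,
            |-(1 / F) * (-d2 t / d1 t ^ 2 + l * d1 t / √(2 * l * d t) ^ 3)| ≤ B2 / F := by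
          intro t ht
          rw [abs_mul, abs_neg, abs_of_pos (by positivity), one_div_mul_eq_div]
          gcongr
          exact (hamp t (hpos t ht) ht.2).2
        have hmono := intervalIntegral.integral_mono_on hδq
          (ContinuousOn.intervalIntegrable (by rw [Set.uIcc_of_le hδq]; exact hk'c.abs))
          (intervalIntegrable_const (c := B2 / F) (μ := volume)) hle
        refine hmono.trans ?_
        rw [intervalIntegral.integral_const, smul_eq_mul]
        have : 0 ≤ B2 / F := by positivity
        nlinarith
      have h1 := hkb δ ⟨le_rfl, hδq⟩
      have h2 := hkb q ⟨hδq, le_rfl⟩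
      rw [div_le_iff₀ (by positivity)]
      have e : (2 * B1 + B2) / F = B1 / F + B1 / F + B2 / F := by ring
      have : 0 ≤ (2 * B1 + B2) / F := by positivity
      nlinarith
    have hii : ∀ p r, p ∈ Set.Icc 0 q → r ∈ Set.Icc 0 q →
        IntervalIntegrable (fun t => eR (-(F * d t))) volume p r := fun p r hp hr =>
      ContinuousOn.intervalIntegrable (hec.mono (Set.uIcc_subset_Icc hp hr))
    have hjj : ∀ p r, IntervalIntegrable (fun s : ℝ => eR (-s ^ 2)) volume p r := fun p r =>
      (continuous_eR.comp (by fun_prop)).intervalIntegrable _ _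
    have e1 : ∫ t in (0 : ℝ)..q, eR (-(F * d t)) = (∫ t in (0 : ℝ)..δ, eR (-(F * d t))) +
        ∫ t in δ..q, eR (-(F * d t)) :=
      (intervalIntegral.integral_add_adjacent_intervals (hii _ _ hz ⟨hδ0.le, hδq⟩)
        (hii _ _ ⟨hδ0.le, hδq⟩ ⟨hq.le, le_rfl⟩)).symm
    have e2 : ∫ s in (0 : ℝ)..√(F * d q), eR (-s ^ 2) =
        (∫ s in (0 : ℝ)..√(F * d δ), eR (-s ^ 2)) + ∫ s in √(F * d δ)..√(F * d q), eR (-s ^ 2) :=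
      (intervalIntegral.integral_add_adjacent_intervals (hjj _ _) (hjj _ _)).symm
    rw [e1, e2, hsplit, hfres]
    have e3 : ∀ X Y Z W : ℂ, X + (w * Y + Z) - w * (W + Y) = Z + (X - w * W) := by
      intros; ring
    rw [e3]
    refine (norm_add_le _ _).trans (add_le_add hrem ((norm_sub_le _ _).trans
      (add_le_add ?_ ?_)))
    · simpa using norm_integral_eR_le hδ0.le (fun t => -(F * d t))
    · rw [norm_mul, Complex.norm_real, Real.norm_of_nonneg (Real.sqrt_nonneg _)]
      gcongr
      simpa using norm_integral_eR_le (Real.sqrt_nonneg (F * d δ)) (fun t => -t ^ 2)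
  have hlim : Tendsto (fun δ => (2 * B1 + B2) / F + (δ + w * √(F * d δ))) (𝓝[>] 0)
      (𝓝 ((2 * B1 + B2) / F + (0 + w * √(F * d 0)))) := by
    refine Tendsto.mono_left (ContinuousAt.tendsto ?_) nhdsWithin_le_nhds
    have := (hd 0 hz).continuousAt
    fun_prop
  have hfin := ge_of_tendsto hlim
    (Filter.mem_of_superset (Ioo_mem_nhdsGT hq) fun δ hδ => hcut δ hδ)
  refine hfin.trans_eq ?_
  rw [h0, mul_zero, Real.sqrt_zero, mul_zero, add_zero, add_zero, hB1, hB2]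
  ring

end StationaryPhase

section StationaryPhase

/-- One-sided stationary phase in normalized variables. -/
lemma exists_norm_integral_sub_half_stationary_le (κ K : ℝ) (hκ : 0 < κ) (hK : 1 ≤ K) :
    ∃ C : ℝ, 0 < C ∧ ∀ (q F : ℝ) (d d1 d2 d3 d4 : ℝ → ℝ), 0 < F → 0 ≤ q → q ≤ 1 →
    (∀ t ∈ Set.Icc 0 q, HasDerivAt d (d1 t) t) →
    (∀ t ∈ Set.Icc 0 q, HasDerivAt d1 (d2 t) t) →
    (∀ t ∈ Set.Icc 0 q, HasDerivAt d2 (d3 t) t) →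
    (∀ t ∈ Set.Icc 0 q, HasDerivAt d3 (d4 t) t) →
    d 0 = 0 → d1 0 = 0 →
    (∀ t ∈ Set.Icc 0 q, κ ≤ d2 t) → (∀ t ∈ Set.Icc 0 q, d2 t ≤ K) →
    (∀ t ∈ Set.Icc 0 q, |d3 t| ≤ K) → (∀ t ∈ Set.Icc 0 q, |d4 t| ≤ K) →
    ‖(∫ t in (0 : ℝ)..q, eR (-(F * d t))) - eR (-1 / 8) / (2 * √(F * d2 0) : ℝ)‖ ≤
      C * (1 / F + 1 / √F) ∧
    (0 < q → 0 < d1 q ∧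
      ‖(∫ t in (0 : ℝ)..q, eR (-(F * d t))) - eR (-1 / 8) / (2 * √(F * d2 0) : ℝ)‖ ≤
      C * (1 / F + 1 / (F * d1 q))) := by
  set A := 19 * K ^ 2 / κ ^ 3 + 19 * K ^ 6 / κ ^ 7 with hA
  have hK0 : 0 < K := by linarith
  have hA0 : 0 < A := by positivity
  have hsκ : 0 < √κ := Real.sqrt_pos.2 hκ
  refine ⟨A + 4 / √κ + 2 * K / κ, by positivity, ?_⟩
  intro q F d d1 d2 d3 d4 hF hq hq1 hd hd1 hd2 hd3 h0 h10 hlow hup hb3 hb4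
  have hz : (0 : ℝ) ∈ Set.Icc 0 q := ⟨le_rfl, hq⟩
  have hsF : 0 < √F := Real.sqrt_pos.2 hF
  set l := d2 0 with hl
  have hlκ : κ ≤ l := hlow 0 hz
  have hl0 : 0 < l := hκ.trans_le hlκ
  have hslF : √κ * √F ≤ √(F * l) := by
    rw [mul_comm F, Real.sqrt_mul hl0.le]; gcongr
  rcases hq.eq_or_lt with rfl | hqpos
  · refine ⟨?_, fun h => absurd h (lt_irrefl _)⟩
    rw [intervalIntegral.integral_same, zero_sub, norm_neg, norm_div, norm_eR, Complex.norm_real,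
      Real.norm_of_nonneg (by positivity)]
    calc 1 / (2 * √(F * l)) ≤ 1 / (2 * (√κ * √F)) := by gcongr
      _ ≤ 4 / √κ * (1 / √F) := by
        rw [div_mul_div_comm, div_le_div_iff₀ (by positivity) (by positivity)]
        nlinarith [mul_pos hsκ hsF]
      _ ≤ _ := by
        have h1 : 0 ≤ 1 / F := by positivity
        have h2 : 0 ≤ 1 / √F := by positivity
        have h3 : 0 ≤ 2 * K / κ := by positivity
        have h4 : 0 ≤ 4 / √κ := by positivity
        nlinarith [mul_nonneg h1 h3, mul_nonneg h1 h4, mul_nonneg h1 hA0.le, mul_nonneg h2 h3,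
          mul_nonneg h2 hA0.le]
  have hmain := norm_integral_sub_fresnel_le hκ hK hF hqpos hq1 hd hd1 hd2 hd3 h0 h10 hlow hup
    hb3 hb4
  rw [← hl, ← hA] at hmain
  set w := √(2 / (l * F)) with hw
  have hw0 : 0 ≤ w := Real.sqrt_nonneg _
  have hwlim : (w : ℂ) * (eR (-1 / 8) / (2 * √2)) = eR (-1 / 8) / (2 * √(F * l) : ℝ) := by
    have h2 : (0 : ℝ) < √2 := by positivity
    have h3 : 0 < √(F * l) := by positivity
    have e : w = √2 / √(F * l) := by rw [hw, mul_comm l, Real.sqrt_div (by norm_num)]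
    have h2' : ((√2 : ℝ) : ℂ) ≠ 0 := by exact_mod_cast h2.ne'
    have h3' : ((√(F * l) : ℝ) : ℂ) ≠ 0 := by exact_mod_cast h3.ne'
    rw [e]; push_cast; field_simp
  have hgen : ∀ W, ‖(∫ s in (0 : ℝ)..√(F * d q), eR (-s ^ 2)) - eR (-1 / 8) / (2 * √2)‖ ≤ W →
      ‖(∫ t in (0 : ℝ)..q, eR (-(F * d t))) - eR (-1 / 8) / (2 * √(F * l) : ℝ)‖ ≤
        A / F + w * W := by
    intro W hW
    rw [← hwlim]
    refine (norm_sub_le_norm_sub_add_norm_sub _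
      ((w : ℂ) * ∫ s in (0 : ℝ)..√(F * d q), eR (-s ^ 2)) _).trans (add_le_add hmain ?_)
    rw [← mul_sub, norm_mul, Complex.norm_real, Real.norm_of_nonneg hw0]
    gcongr
  have hqq : q ∈ Set.Icc 0 q := ⟨hq, le_rfl⟩
  have A1 : ∀ s ∈ Set.Icc 0 q, κ * s ^ 1 ≤ d1 s := fun s hs => by
    simpa using mul_le_of_le_deriv (n := 0) (c := κ) hd1 h10 (by simpa using hlow) hs
  have B1 : d1 q ≤ K * q := by
    simpa using le_mul_of_deriv_le (n := 0) (c := K) hd1 h10 (by simpa using hup) hqq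
  have A0 : κ * q ^ 2 / 2 ≤ d q := by
    have := mul_le_of_le_deriv (n := 1) (c := κ) hd h0 A1 hqq
    norm_num at this; exact this
  have hd1q : 0 < d1 q := lt_of_lt_of_le (by positivity) (A1 q hqq)
  have hdq : 0 < d q := lt_of_lt_of_le (by positivity) A0
  refine ⟨?_, fun _ => ⟨hd1q, ?_⟩⟩
  · refine (hgen 2 (norm_integral_eR_neg_sq_sub_le_two (Real.sqrt_nonneg _))).trans ?_
    have h1 : w ≤ 2 / √κ * (1 / √F) := by
      rw [hw, div_mul_div_comm, mul_one, ← Real.sqrt_mul hκ.le]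
      calc √(2 / (l * F)) ≤ √(2 ^ 2 / (κ * F)) := by
            apply Real.sqrt_le_sqrt; gcongr; norm_num
        _ = 2 / √(κ * F) := by rw [Real.sqrt_div (by norm_num), Real.sqrt_sq (by norm_num)]
    have h2 : 0 ≤ 1 / F := by positivity
    have h3 : 0 ≤ 1 / √F := by positivity
    have h4 : 0 ≤ 2 * K / κ := by positivity
    have h5 : 0 ≤ 4 / √κ := by positivity
    have e : A / F = A * (1 / F) := by ring
    have e2 : 4 / √κ = 2 * (2 / √κ) := by ring
    rw [e]
    nlinarith [mul_nonneg h2 h4, mul_nonneg h2 h5, mul_nonneg h3 h4, mul_nonneg h3 hA0.le]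
  · refine (hgen _ (norm_integral_eR_neg_sq_sub_le (Real.sqrt_pos.2 (mul_pos hF hdq)))).trans ?_
    have h1 : w * (1 / √(F * d q)) ≤ 2 * K / κ * (1 / (F * d1 q)) := by
      have e : w * (1 / √(F * d q)) = √(2 / (l * F) / (F * d q)) := by
        rw [Real.sqrt_div (by positivity), ← hw]; ring
      rw [e]
      calc √(2 / (l * F) / (F * d q)) ≤ √((2 / (κ * (F * q))) ^ 2) := by
            apply Real.sqrt_le_sqrt
            rw [div_pow, div_div, div_le_div_iff₀ (by positivity) (by positivity)]
            have : κ * (κ * q ^ 2 / 2) ≤ l * d q := by gcongr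
            have hF2 : 0 < F ^ 2 := by positivity
            nlinarith
        _ = 2 / (κ * (F * q)) := Real.sqrt_sq (by positivity)
        _ ≤ _ := by
          rw [div_mul_div_comm, mul_one, div_le_div_iff₀ (by positivity) (by positivity)]
          have : κ * F * d1 q ≤ κ * F * (K * q) := by gcongr
          nlinarith
    have h2 : 0 ≤ 1 / F := by positivity
    have h3 : 0 ≤ 1 / (F * d1 q) := by positivity
    have h4 : 0 ≤ 2 * K / κ := by positivity
    have h5 : 0 ≤ 4 / √κ := by positivity
    have e : A / F = A * (1 / F) := by ring
    rw [e]
    nlinarith [mul_nonneg h2 h4, mul_nonneg h2 h5, mul_nonneg h3 h5, mul_nonneg h3 hA0.le]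

/-- One-sided stationary phase, in the direction given by the sign of `s`. -/
lemma exists_norm_integral_comp_sub_half_stationary_le (κ K : ℝ) (hκ : 0 < κ) (hK : 1 ≤ K) :
    ∃ C : ℝ, 0 < C ∧ ∀ (q F N s c : ℝ) (g g1 g2 g3 g4 : ℝ → ℝ), 0 < F → 0 < N → |s| = N →
    0 ≤ q → q ≤ 1 →
    (∀ t ∈ Set.Icc 0 q, HasDerivAt g (g1 (c + s * t)) (c + s * t)) →
    (∀ t ∈ Set.Icc 0 q, HasDerivAt g1 (g2 (c + s * t)) (c + s * t)) →
    (∀ t ∈ Set.Icc 0 q, HasDerivAt g2 (g3 (c + s * t)) (c + s * t)) →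
    (∀ t ∈ Set.Icc 0 q, HasDerivAt g3 (g4 (c + s * t)) (c + s * t)) →
    g1 c = 0 →
    (∀ t ∈ Set.Icc 0 q, κ * (F / N ^ 2) ≤ -g2 (c + s * t)) →
    (∀ t ∈ Set.Icc 0 q, -g2 (c + s * t) ≤ K * (F / N ^ 2)) →
    (∀ t ∈ Set.Icc 0 q, |g3 (c + s * t)| ≤ K * (F / N ^ 3)) →
    (∀ t ∈ Set.Icc 0 q, |g4 (c + s * t)| ≤ K * (F / N ^ 4)) →
    ‖N * (∫ t in (0 : ℝ)..q, eR (g (c + s * t))) - eR (g c - 1 / 8) / (2 * √(-g2 c) : ℝ)‖ ≤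
      C * (N / F + N / √F) ∧
    (0 < q →
      ‖N * (∫ t in (0 : ℝ)..q, eR (g (c + s * t))) - eR (g c - 1 / 8) / (2 * √(-g2 c) : ℝ)‖ ≤
      C * (N / F + 1 / |g1 (c + s * q)|)) := by
  obtain ⟨C, hC, hmain⟩ := exists_norm_integral_sub_half_stationary_le κ K hκ hK
  refine ⟨C, hC, ?_⟩
  intro q F N s c g g1 g2 g3 g4 hF hN hs hq hq1 hg hg1 hg2 hg3 h10 hlow hup hb3 hb4
  have hs2 : s ^ 2 = N ^ 2 := by rw [← hs, sq_abs]
  have hlin : ∀ t, HasDerivAt (fun t => c + s * t) s t := fun t => by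
    simpa using ((hasDerivAt_id t).const_mul s).const_add c
  have hcomp : ∀ {u u' : ℝ → ℝ}, (∀ t ∈ Set.Icc 0 q, HasDerivAt u (u' (c + s * t)) (c + s * t)) →
      ∀ t ∈ Set.Icc 0 q, HasDerivAt (fun t => u (c + s * t)) (u' (c + s * t) * s) t :=
    fun hu t ht => (hu t ht).comp t (hlin t)
  have h := hmain q F (fun t => (g c - g (c + s * t)) / F) (fun t => -(s * g1 (c + s * t)) / F)
    (fun t => -(s ^ 2 * g2 (c + s * t)) / F) (fun t => -(s ^ 3 * g3 (c + s * t)) / F)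
    (fun t => -(s ^ 4 * g4 (c + s * t)) / F) hF hq hq1
    (fun t ht => (((hcomp hg t ht).const_sub (g c)).div_const F).congr_deriv (by ring))
    (fun t ht => ((((hcomp hg1 t ht).const_mul s).neg).div_const F).congr_deriv (by ring))
    (fun t ht => ((((hcomp hg2 t ht).const_mul (s ^ 2)).neg).div_const F).congr_deriv (by ring))
    (fun t ht => ((((hcomp hg3 t ht).const_mul (s ^ 3)).neg).div_const F).congr_deriv (by ring))
    (by simp) (by simp [h10])
    (fun t ht => by
      rw [le_div_iff₀ hF, hs2]
      have := mul_le_mul_of_nonneg_left (hlow t ht) (sq_nonneg N)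
      have e : N ^ 2 * (κ * (F / N ^ 2)) = κ * F := by field_simp
      linarith)
    (fun t ht => by
      rw [div_le_iff₀ hF, hs2]
      have := mul_le_mul_of_nonneg_left (hup t ht) (sq_nonneg N)
      have e : N ^ 2 * (K * (F / N ^ 2)) = K * F := by field_simp
      linarith)
    (fun t ht => by
      rw [abs_div, abs_of_pos hF, div_le_iff₀ hF, abs_neg, abs_mul, abs_pow, hs]
      have := mul_le_mul_of_nonneg_left (hb3 t ht) (by positivity : 0 ≤ N ^ 3)
      have e : N ^ 3 * (K * (F / N ^ 3)) = K * F := by field_simp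
      linarith)
    (fun t ht => by
      rw [abs_div, abs_of_pos hF, div_le_iff₀ hF, abs_neg, abs_mul, abs_pow, hs]
      have := mul_le_mul_of_nonneg_left (hb4 t ht) (by positivity : 0 ≤ N ^ 4)
      have e : N ^ 4 * (K * (F / N ^ 4)) = K * F := by field_simp
      linarith)
  simp only [mul_zero, add_zero] at h
  have hg2c : 0 < -g2 c := by
    have := hlow 0 ⟨le_rfl, hq⟩
    rw [mul_zero, add_zero] at this
    exact lt_of_lt_of_le (by positivity) this
  have e1 : F * (-(s ^ 2 * g2 c) / F) = N ^ 2 * (-g2 c) := by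
    rw [hs2]; field_simp
  have e2 : √(N ^ 2 * (-g2 c)) = N * √(-g2 c) := by
    rw [Real.sqrt_mul (by positivity), Real.sqrt_sq hN.le]
  have e3 : ∫ t in (0 : ℝ)..q, eR (g (c + s * t)) =
      eR (g c) * ∫ t in (0 : ℝ)..q, eR (-(F * ((g c - g (c + s * t)) / F))) := by
    rw [← intervalIntegral.integral_const_mul]
    congr 1; ext t
    rw [← eR_add]; congr 1; field_simp; ring
  rw [e1, e2] at h
  have hS : 0 < √(-g2 c) := Real.sqrt_pos.2 hg2c
  have e4 : ∀ X : ℂ, N * (eR (g c) * X) - eR (g c - 1 / 8) / (2 * √(-g2 c) : ℝ) =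
      N * eR (g c) * (X - eR (-1 / 8) / (2 * (N * √(-g2 c)) : ℝ)) := by
    intro X
    have hN' : (N : ℂ) ≠ 0 := by exact_mod_cast hN.ne'
    have hS' : ((√(-g2 c) : ℝ) : ℂ) ≠ 0 := by exact_mod_cast hS.ne'
    rw [show g c - 1 / 8 = g c + -1 / 8 by ring, eR_add]
    push_cast; field_simp
  have e5 : ∀ X : ℂ, ‖(N : ℂ) * eR (g c) * X‖ = N * ‖X‖ := fun X => by
    rw [norm_mul, norm_mul, norm_eR, Complex.norm_real, Real.norm_of_nonneg hN.le, mul_one]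
  rw [e3, e4, e5]
  refine ⟨?_, fun hq0 => ?_⟩
  · refine (mul_le_mul_of_nonneg_left h.1 hN.le).trans_eq ?_
    ring
  · obtain ⟨hpos, hle⟩ := h.2 hq0
    refine (mul_le_mul_of_nonneg_left hle hN.le).trans_eq ?_
    have h6 : F * (-(s * g1 (c + s * q)) / F) = N * |g1 (c + s * q)| := by
      have : F * (-(s * g1 (c + s * q)) / F) = -(s * g1 (c + s * q)) := by field_simp
      rw [this, ← hs, ← abs_mul, ← abs_neg, abs_of_pos]
      have := mul_pos hpos hF
      rwa [div_mul_cancel₀ _ hF.ne'] at this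
    rw [h6]
    have : |g1 (c + s * q)| ≠ 0 := by
      intro h0
      rw [h0, mul_zero] at h6
      have := mul_pos hF hpos
      linarith
    field_simp

/-- Stationary phase on an interval containing the stationary point `c`. -/
lemma exists_norm_integral_sub_stationary_le (κ K : ℝ) (hκ : 0 < κ) (hK : 1 ≤ K) :
    ∃ C : ℝ, 0 < C ∧ ∀ (a b c F N : ℝ) (g g1 g2 g3 g4 : ℝ → ℝ), 0 < F → 0 < N →
    a ≤ c → c ≤ b → b - a ≤ N →
    (∀ x ∈ Set.Icc a b, HasDerivAt g (g1 x) x) →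
    (∀ x ∈ Set.Icc a b, HasDerivAt g1 (g2 x) x) →
    (∀ x ∈ Set.Icc a b, HasDerivAt g2 (g3 x) x) →
    (∀ x ∈ Set.Icc a b, HasDerivAt g3 (g4 x) x) →
    g1 c = 0 →
    (∀ x ∈ Set.Icc a b, κ * (F / N ^ 2) ≤ -g2 x) →
    (∀ x ∈ Set.Icc a b, -g2 x ≤ K * (F / N ^ 2)) →
    (∀ x ∈ Set.Icc a b, |g3 x| ≤ K * (F / N ^ 3)) →
    (∀ x ∈ Set.Icc a b, |g4 x| ≤ K * (F / N ^ 4)) →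
    ∀ Ea Eb : ℝ, (Ea = N / √F ∨ g1 a ≠ 0 ∧ Ea = 1 / |g1 a|) →
      (Eb = N / √F ∨ g1 b ≠ 0 ∧ Eb = 1 / |g1 b|) →
    ‖(∫ x in a..b, eR (g x)) - eR (g c - 1 / 8) / (√(-g2 c) : ℝ)‖ ≤ C * (N / F + Ea + Eb) := by
  obtain ⟨C, hC, hmain⟩ := exists_norm_integral_comp_sub_half_stationary_le κ K hκ hK
  refine ⟨2 * C, by positivity, ?_⟩
  intro a b c F N g g1 g2 g3 g4 hF hN hac hcb hba hg hg1 hg2 hg3 h10 hlow hup hb3 hb4 Ea Eb hEa hEb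
  have hR : ∀ t ∈ Set.Icc 0 ((b - c) / N), c + N * t ∈ Set.Icc a b := fun t ht => by
    have h1 := (le_div_iff₀ hN).1 ht.2
    have h2 := mul_nonneg hN.le ht.1
    constructor <;> nlinarith
  have hL : ∀ t ∈ Set.Icc 0 ((c - a) / N), c + -N * t ∈ Set.Icc a b := fun t ht => by
    have h1 := (le_div_iff₀ hN).1 ht.2
    have h2 := mul_nonneg hN.le ht.1
    constructor <;> nlinarith
  have hr := hmain ((b - c) / N) F N N c g g1 g2 g3 g4 hF hN (abs_of_pos hN)
    (div_nonneg (by linarith) hN.le) ((div_le_one hN).2 (by linarith))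
    (fun t ht => hg _ (hR t ht)) (fun t ht => hg1 _ (hR t ht)) (fun t ht => hg2 _ (hR t ht))
    (fun t ht => hg3 _ (hR t ht)) h10 (fun t ht => hlow _ (hR t ht)) (fun t ht => hup _ (hR t ht))
    (fun t ht => hb3 _ (hR t ht)) (fun t ht => hb4 _ (hR t ht))
  have hl := hmain ((c - a) / N) F N (-N) c g g1 g2 g3 g4 hF hN
    (by rw [abs_neg, abs_of_pos hN])
    (div_nonneg (by linarith) hN.le) ((div_le_one hN).2 (by linarith))
    (fun t ht => hg _ (hL t ht)) (fun t ht => hg1 _ (hL t ht)) (fun t ht => hg2 _ (hL t ht))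
    (fun t ht => hg3 _ (hL t ht)) h10 (fun t ht => hlow _ (hL t ht)) (fun t ht => hup _ (hL t ht))
    (fun t ht => hb3 _ (hL t ht)) (fun t ht => hb4 _ (hL t ht))
  have er : (N : ℂ) * (∫ t in (0 : ℝ)..((b - c) / N), eR (g (c + N * t))) =
      ∫ x in c..b, eR (g x) := by
    have := intervalIntegral.smul_integral_comp_add_mul (a := 0) (b := (b - c) / N)
      (fun x => eR (g x)) N c
    rw [mul_zero, add_zero, mul_div_cancel₀ _ hN.ne', add_sub_cancel, Complex.real_smul] at this
    exact this
  have el : (N : ℂ) * (∫ t in (0 : ℝ)..((c - a) / N), eR (g (c + -N * t))) =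
      ∫ x in a..c, eR (g x) := by
    have := intervalIntegral.smul_integral_comp_add_mul (a := 0) (b := (c - a) / N)
      (fun x => eR (g x)) (-N) c
    rw [mul_zero, add_zero, neg_mul, mul_div_cancel₀ _ hN.ne', Complex.real_smul,
      show c + -(c - a) = a by ring, intervalIntegral.integral_symm a c] at this
    rw [← neg_inj, ← this]; push_cast; ring
  rw [er] at hr
  rw [el] at hl
  have eb : c + N * ((b - c) / N) = b := by field_simp; ring
  have ea : c + -N * ((c - a) / N) = a := by field_simp; ring
  rw [eb] at hr
  rw [ea] at hl
  have hgc : ContinuousOn (fun x => eR (g x)) (Set.Icc a b) :=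
    continuous_eR.comp_continuousOn fun x hx => (hg x hx).continuousAt.continuousWithinAt
  have hadd : (∫ x in a..c, eR (g x)) + ∫ x in c..b, eR (g x) = ∫ x in a..b, eR (g x) :=
    intervalIntegral.integral_add_adjacent_intervals
      (ContinuousOn.intervalIntegrable_of_Icc hac (hgc.mono (Set.Icc_subset_Icc_right hcb)))
      (ContinuousOn.intervalIntegrable_of_Icc hcb (hgc.mono (Set.Icc_subset_Icc_left hac)))
  have hbr : ‖(∫ x in c..b, eR (g x)) - eR (g c - 1 / 8) / (2 * √(-g2 c) : ℝ)‖ ≤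
      C * (N / F + Eb) := by
    rcases hEb with h | ⟨h1, h2⟩
    · rw [h]; exact hr.1
    · rw [h2]
      refine hr.2 (div_pos (sub_pos.2 (lt_of_le_of_ne hcb ?_)) hN)
      rintro rfl; exact h1 h10
  have hbl : ‖(∫ x in a..c, eR (g x)) - eR (g c - 1 / 8) / (2 * √(-g2 c) : ℝ)‖ ≤
      C * (N / F + Ea) := by
    rcases hEa with h | ⟨h1, h2⟩
    · rw [h]; exact hl.1
    · rw [h2]
      refine hl.2 (div_pos (sub_pos.2 (lt_of_le_of_ne hac ?_)) hN)
      rintro rfl; exact h1 h10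
  have e : (∫ x in a..b, eR (g x)) - eR (g c - 1 / 8) / (√(-g2 c) : ℝ) =
      ((∫ x in a..c, eR (g x)) - eR (g c - 1 / 8) / (2 * √(-g2 c) : ℝ)) +
      ((∫ x in c..b, eR (g x)) - eR (g c - 1 / 8) / (2 * √(-g2 c) : ℝ)) := by
    rw [← hadd]; push_cast
    rw [mul_comm (2 : ℂ), ← div_div]; ring
  rw [e]
  refine (norm_add_le _ _).trans ((add_le_add hbl hbr).trans ?_)
  have hE : ∀ E y : ℝ, (E = N / √F ∨ y ≠ 0 ∧ E = 1 / |y|) → 0 ≤ E := by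
    rintro E y (rfl | ⟨_, rfl⟩) <;> positivity
  have h1 := hE Ea _ hEa
  have h2 := hE Eb _ hEb
  nlinarith [mul_nonneg hC.le h1, mul_nonneg hC.le h2]

end StationaryPhase

section Poisson

lemma fourierCoeffOn_zero_one_eq_integral (φ : ℝ → ℂ) (n : ℤ) :
    fourierCoeffOn (zero_lt_one' ℝ) φ n = ∫ x in (0 : ℝ)..1, φ x * eR (-(n * x)) := by
  rw [fourierCoeffOn_eq_integral, sub_zero, div_one, one_smul]
  refine intervalIntegral.integral_congr fun x _ => ?_
  simp only [smul_eq_mul]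
  rw [fourier_coe_apply, mul_comm]
  unfold eR
  congr 2
  push_cast
  simp
  ring

/-- The Fourier series of a continuously differentiable function with equal end values. -/
lemma hasSum_integral_mul_eR {φ φ' : ℝ → ℂ} (hφ : ∀ x, HasDerivAt φ (φ' x) x)
    (hφ' : Continuous φ') (h01 : φ 0 = φ 1) :
    HasSum (fun n : ℤ => ∫ x in (0 : ℝ)..1, φ x * eR (-(n * x))) (φ 0) := by
  have hcont : Continuous φ := continuous_iff_continuousAt.2 fun x => (hφ x).continuousAt
  let Φ : C(AddCircle (1 : ℝ), ℂ) :=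
    ⟨AddCircle.liftIco 1 0 φ, AddCircle.liftIco_zero_continuous h01 hcont.continuousOn⟩
  have hco : ∀ n, fourierCoeff Φ n = fourierCoeffOn (zero_lt_one' ℝ) φ n := fun n => by
    have := fourierCoeff_liftIco_eq (T := 1) (a := 0) φ n
    simp only [zero_add] at this
    exact this
  have hder : ∀ n : ℤ, n ≠ 0 → fourierCoeffOn (zero_lt_one' ℝ) φ n =
      1 / (2 * Real.pi * Complex.I * n) * fourierCoeffOn (zero_lt_one' ℝ) φ' n := fun n hn => by
    rw [fourierCoeffOn_of_hasDerivAt (zero_lt_one' ℝ) hn (fun x _ => hφ x)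
      (hφ'.intervalIntegrable _ _), h01]
    have : (n : ℂ) ≠ 0 := by exact_mod_cast hn
    have := Real.pi_pos.ne'
    field_simp
    simp
  have hL2 : MemLp φ' 2 (volume.restrict (Set.Ioc 0 1)) := by
    obtain ⟨C, hC⟩ := isCompact_Icc.exists_bound_of_continuousOn
      (hφ'.continuousOn (s := Set.Icc (0 : ℝ) 1))
    exact MemLp.of_bound hφ'.aestronglyMeasurable C ((ae_restrict_iff' measurableSet_Ioc).2
      (ae_of_all _ fun x hx => hC x (Set.Ioc_subset_Icc_self hx)))
  have hsum : Summable (fourierCoeff Φ) := by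
    have h1 := (hasSum_sq_fourierCoeffOn (zero_lt_one' ℝ) hL2).summable
    have h2 : Summable fun n : ℤ => 1 / (n : ℝ) ^ 2 :=
      Real.summable_one_div_int_pow.2 one_lt_two
    have h3 := h1.add h2
    refine Summable.of_norm_bounded_eventually h3 ?_
    have : ∀ᶠ n : ℤ in cofinite, n ≠ 0 := by
      simpa using (Set.finite_singleton (0 : ℤ)).compl_mem_cofinite
    filter_upwards [this] with n hn
    rw [hco, hder n hn, norm_mul, norm_div]
    have e : ‖(2 * Real.pi * Complex.I * n : ℂ)‖ = 2 * Real.pi * |(n : ℝ)| := by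
      simp [abs_of_pos Real.pi_pos]
    rw [e, norm_one]
    set c := ‖fourierCoeffOn (zero_lt_one' ℝ) φ' n‖
    have hn' : 0 < |(n : ℝ)| := abs_pos.2 (by exact_mod_cast hn)
    have hpi := Real.pi_gt_three
    have : 1 / (2 * Real.pi * |(n : ℝ)|) ≤ 1 / |(n : ℝ)| :=
      one_div_le_one_div_of_le hn' (by nlinarith)
    have e2 : 1 / (n : ℝ) ^ 2 = (1 / |(n : ℝ)|) ^ 2 := by rw [div_pow, one_pow, sq_abs]
    rw [e2]
    have hc : 0 ≤ c := norm_nonneg _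
    have h5 : 0 ≤ 1 / |(n : ℝ)| := by positivity
    nlinarith [mul_le_mul_of_nonneg_right this hc, sq_nonneg (c - 1 / |(n : ℝ)|)]
  have h := has_pointwise_sum_fourier_series_of_summable hsum (0 : AddCircle (1 : ℝ))
  have hval : Φ (0 : AddCircle (1 : ℝ)) = φ 0 := by
    have := AddCircle.liftIco_zero_coe_apply (p := (1 : ℝ)) (f := φ) (x := 0) (by simp)
    exact this
  rw [hval] at h
  convert h using 2 with n
  rw [fourier_eval_zero, smul_eq_mul, mul_one, hco, fourierCoeffOn_zero_one_eq_integral]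

lemma tendsto_Icc_neg_atTop :
    Tendsto (fun M : ℕ => Finset.Icc (-(M : ℤ)) M) atTop atTop := by
  refine tendsto_atTop_finset_of_monotone (fun M M' h => Finset.Icc_subset_Icc (by omega) (by omega))
    fun n => ⟨n.natAbs, Finset.mem_Icc.2 (by omega)⟩

lemma sum_Icc_neg_comp_neg {E : Type*} [AddCommMonoid E] (M : ℕ) (u : ℤ → E) :
    ∑ n ∈ Finset.Icc (-(M : ℤ)) M, u (-n) = ∑ n ∈ Finset.Icc (-(M : ℤ)) M, u n :=
  Finset.sum_nbij' (fun n => -n) (fun n => -n)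
    (fun n hn => by simp only [Finset.mem_Icc] at *; omega)
    (fun n hn => by simp only [Finset.mem_Icc] at *; omega)
    (fun n _ => neg_neg n) (fun n _ => neg_neg n) (fun n _ => rfl)

/-- Poisson summation on the unit interval. -/
lemma tendsto_sum_integral_mul_eR_unit {h h' : ℝ → ℂ} (hh : ∀ x, HasDerivAt h (h' x) x)
    (hh' : Continuous h') :
    Tendsto (fun M : ℕ => ∑ n ∈ Finset.Icc (-(M : ℤ)) M,
      ∫ x in (0 : ℝ)..1, h x * eR (-(n * x))) atTop (𝓝 ((h 0 + h 1) / 2)) := by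
  have hcont : Continuous h := continuous_iff_continuousAt.2 fun x => (hh x).continuousAt
  have hr : ∀ x, HasDerivAt (fun x => h (1 - x)) (-h' (1 - x)) x := fun x => by
    exact HasDerivAt.comp_const_sub 1 x (hh (1 - x))
  have key := hasSum_integral_mul_eR (φ := fun x => (h x + h (1 - x)) / 2)
    (φ' := fun x => (h' x + -h' (1 - x)) / 2)
    (fun x => ((hh x).add (hr x)).div_const 2) (by fun_prop) (by simp [add_comm])
  have key2 := key.comp tendsto_Icc_neg_atTop
  simp only [sub_zero] at key2
  refine key2.congr fun M => ?_
  have hcoef : ∀ n : ℤ, ∫ x in (0 : ℝ)..1, (h x + h (1 - x)) / 2 * eR (-(n * x)) =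
      ((∫ x in (0 : ℝ)..1, h x * eR (-(n * x))) +
        ∫ x in (0 : ℝ)..1, h x * eR (-((-n : ℤ) * x))) / 2 := fun n => by
    have hsub : ∫ x in (0 : ℝ)..1, h (1 - x) * eR (-(n * x)) =
        ∫ x in (0 : ℝ)..1, h x * eR (-((-n : ℤ) * x)) := by
      have := intervalIntegral.integral_comp_sub_left (a := 0) (b := 1)
        (fun x => h x * eR (-((-n : ℤ) * x))) (1 : ℝ)
      rw [sub_self, sub_zero] at this
      rw [← this]
      refine intervalIntegral.integral_congr fun x _ => ?_
      have e : (-(((-n : ℤ) : ℝ) * (1 - x))) = (n : ℝ) + -(n * x) := by push_cast; ring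
      rw [e, eR_add, eR_intCast, one_mul]
    have hce : Continuous fun x : ℝ => eR (-(n * x)) := continuous_eR.comp (by fun_prop)
    have hc1 : Continuous fun x => h x * eR (-(n * x)) := hcont.mul hce
    have hc2 : Continuous fun x => h (1 - x) * eR (-(n * x)) :=
      (hcont.comp (by fun_prop : Continuous fun x : ℝ => 1 - x)).mul hce
    rw [← hsub, ← intervalIntegral.integral_add (hc1.intervalIntegrable _ _)
      (hc2.intervalIntegrable _ _), ← intervalIntegral.integral_div]
    refine intervalIntegral.integral_congr fun x _ => ?_
    ring
  simp only [Function.comp]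
  rw [Finset.sum_congr rfl fun n _ => hcoef n, ← Finset.sum_div, Finset.sum_add_distrib,
    sum_Icc_neg_comp_neg M (fun n : ℤ => ∫ x in (0 : ℝ)..1, h x * eR (-(n * x)))]
  ring

/-- Poisson summation on an interval with integer end points. -/
lemma tendsto_sum_integral_mul_eR {h h' : ℝ → ℂ} (hh : ∀ x, HasDerivAt h (h' x) x)
    (hh' : Continuous h') (A : ℤ) (m : ℕ) :
    Tendsto (fun M : ℕ => ∑ n ∈ Finset.Icc (-(M : ℤ)) M,
      ∫ x in (A : ℝ)..(A + m : ℤ), h x * eR (-(n * x))) atTop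
      (𝓝 (∑ n ∈ Finset.Icc A (A + m), h n - (h A + h (A + m : ℤ)) / 2)) := by
  have hcont : Continuous h := continuous_iff_continuousAt.2 fun x => (hh x).continuousAt
  induction m with
  | zero => simp
  | succ m ih =>
    have hshift : ∀ x, HasDerivAt (fun x => h (x + (A + m : ℤ))) (h' (x + (A + m : ℤ))) x :=
      fun x => (hh _).comp_add_const x _
    have h2 := ih.add (tendsto_sum_integral_mul_eR_unit hshift (by fun_prop))
    have hI : Finset.Icc A (A + (m + 1 : ℕ)) = insert (A + (m + 1 : ℕ)) (Finset.Icc A (A + m)) := by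
      ext n; simp only [Finset.mem_Icc, Finset.mem_insert]; push_cast; omega
    have hlim : ∑ n ∈ Finset.Icc A (A + (m + 1 : ℕ)), h n -
        (h A + h (A + (m + 1 : ℕ) : ℤ)) / 2 =
        ∑ n ∈ Finset.Icc A (A + m), h n - (h A + h (A + m : ℤ)) / 2 +
          (h (0 + (A + m : ℤ)) + h (1 + (A + m : ℤ))) / 2 := by
      rw [hI, Finset.sum_insert (by simp)]
      have e : (1 : ℝ) + (A + m : ℤ) = (A + (m + 1 : ℕ) : ℤ) := by push_cast; ring
      rw [e, zero_add]; ring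
    rw [hlim]
    refine h2.congr fun M => ?_
    rw [← Finset.sum_add_distrib]
    refine Finset.sum_congr rfl fun n _ => ?_
    have hce : Continuous fun x : ℝ => h x * eR (-(n * x)) :=
      hcont.mul (continuous_eR.comp (by fun_prop))
    rw [← intervalIntegral.integral_add_adjacent_intervals
      (hce.intervalIntegrable (A : ℝ) (A + m : ℤ))
      (hce.intervalIntegrable (A + m : ℤ) (A + (m + 1 : ℕ) : ℤ))]
    congr 1
    have := intervalIntegral.integral_comp_add_right (a := 0) (b := 1)
      (fun x => h x * eR (-(n * x))) ((A + m : ℤ) : ℝ)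
    rw [show (1 : ℝ) + (A + m : ℤ) = (A + (m + 1 : ℕ) : ℤ) by push_cast; ring, zero_add] at this
    rw [← this]
    refine intervalIntegral.integral_congr fun x _ => ?_
    have e : -((n : ℝ) * (x + (A + m : ℤ))) = ((-(n * (A + m)) : ℤ) : ℝ) + -(n * x) := by
      push_cast; ring
    rw [e, eR_add, eR_intCast, one_mul]

end Poisson

section TruncatedPoisson

lemma sum_Icc_neg_eq_add {E : Type*} [AddCommMonoid E] (u : ℤ → E) (p q : ℕ) :
    ∑ ν ∈ Finset.Icc (-(p : ℤ)) q, u ν =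
      ∑ ν ∈ Finset.Icc (0 : ℤ) q, u ν + ∑ j ∈ Finset.range p, u (-((j : ℤ) + 1)) := by
  induction p with
  | zero => simp
  | succ p ih =>
    have hI : Finset.Icc (-((p + 1 : ℕ) : ℤ)) q =
        insert (-((p : ℤ) + 1)) (Finset.Icc (-(p : ℤ)) q) := by
      ext n; simp only [Finset.mem_Icc, Finset.mem_insert]; push_cast; omega
    rw [hI, Finset.sum_insert (by simp), ih, Finset.sum_range_succ]
    abel

lemma sum_Icc_zero_add_eq_add {E : Type*} [AddCommMonoid E] (u : ℤ → E) (L r : ℕ) :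
    ∑ ν ∈ Finset.Icc (0 : ℤ) (L + r : ℕ), u ν =
      ∑ ν ∈ Finset.Icc (0 : ℤ) L, u ν + ∑ j ∈ Finset.range r, u ((L : ℤ) + j + 1) := by
  induction r with
  | zero => simp
  | succ r ih =>
    have hI : Finset.Icc (0 : ℤ) (L + (r + 1) : ℕ) =
        insert ((L : ℤ) + r + 1) (Finset.Icc (0 : ℤ) (L + r : ℕ)) := by
      ext n; simp only [Finset.mem_Icc, Finset.mem_insert]; push_cast; omega
    rw [hI, Finset.sum_insert (by simp), ih, Finset.sum_range_succ]
    abel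

lemma sum_range_one_div_le (n : ℕ) :
    ∑ j ∈ Finset.range n, 1 / ((j : ℝ) + 1) ≤ 1 + Real.log n := by
  have := harmonic_le_one_add_log n
  rw [harmonic] at this
  push_cast at this
  simpa using this

lemma sum_range_div_mul_le (L r : ℕ) :
    ∑ j ∈ Finset.range r, (L : ℝ) / (((j : ℝ) + 1) * (L + (j + 1))) ≤
      ∑ j ∈ Finset.range L, 1 / ((j : ℝ) + 1) := by
  have h1 : ∀ j : ℕ, (L : ℝ) / (((j : ℝ) + 1) * (L + (j + 1))) =
      1 / ((j : ℝ) + 1) - 1 / (((L + j : ℕ) : ℝ) + 1) := fun j => by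
    push_cast; field_simp; ring
  rw [Finset.sum_congr rfl fun j _ => h1 j, Finset.sum_sub_distrib]
  have h2 := Finset.sum_range_add (fun j : ℕ => 1 / ((j : ℝ) + 1)) L r
  have h3 : ∑ j ∈ Finset.range r, 1 / ((j : ℝ) + 1) ≤
      ∑ j ∈ Finset.range (L + r), 1 / ((j : ℝ) + 1) :=
    Finset.sum_le_sum_of_subset_of_nonneg (Finset.range_mono (by omega))
      fun j _ _ => by positivity
  linarith

lemma HasDerivAt.sub_const_mul_self {g : ℝ → ℝ} {g' x : ℝ} (hg : HasDerivAt g g' x) (ν : ℝ) :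
    HasDerivAt (fun y => g y - ν * y) (g' - ν) x := by
  have h := hg.fun_sub ((hasDerivAt_id' x).const_mul ν)
  rwa [mul_one] at h

/-- Integration by parts for the Fourier coefficients of `eR ∘ g`. -/
lemma integral_eR_sub_mul_eq {g g1 : ℝ → ℝ} (hg : ∀ x, HasDerivAt g (g1 x) x)
    (hg1 : Continuous g1) (A B ν : ℤ) (hν : ν ≠ 0) :
    ∫ x in (A : ℝ)..B, eR (g x - ν * x) =
      (∫ x in (A : ℝ)..B, (g1 x : ℂ) * eR (g x - ν * x)) / ν -
        (eR (g B) - eR (g A)) / (2 * Real.pi * Complex.I) * (1 / (ν : ℂ)) := by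
  have hd : ∀ x, HasDerivAt (fun y : ℝ => g y - ν * y) (g1 x - ν) x := fun x =>
    (hg x).sub_const_mul_self ν
  have hcont : Continuous fun y : ℝ => g y - ν * y :=
    continuous_iff_continuousAt.2 fun x => (hd x).continuousAt
  have hce : Continuous fun x : ℝ => eR (g x - ν * x) := continuous_eR.comp hcont
  have hc1 : Continuous fun x : ℝ => (g1 x : ℂ) * eR (g x - ν * x) :=
    (Complex.continuous_ofReal.comp hg1).mul hce
  have hc2 : Continuous fun x : ℝ => (ν : ℂ) * eR (g x - ν * x) := continuous_const.mul hce
  have hI := integral_eq_sub_of_hasDerivAt (a := (A : ℝ)) (b := B)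
    (fun x _ => (hd x).eR) ((((continuous_const.mul (Complex.continuous_ofReal.comp
      (hg1.sub continuous_const))).mul hce)).intervalIntegrable _ _)
  have hend : ∀ n : ℤ, eR (g n - ν * n) = eR (g n) := fun n => by
    rw [show g n - (ν : ℝ) * n = g n + ((-(ν * n) : ℤ) : ℝ) by push_cast; ring, eR_add, eR_intCast,
      mul_one]
  rw [hend, hend] at hI
  have hsplit : ∫ x in (A : ℝ)..B, 2 * Real.pi * Complex.I * ((g1 x - ν : ℝ) : ℂ) *
      eR (g x - ν * x) = 2 * Real.pi * Complex.I *
        ((∫ x in (A : ℝ)..B, (g1 x : ℂ) * eR (g x - ν * x)) -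
          ν * ∫ x in (A : ℝ)..B, eR (g x - ν * x)) := by
    rw [← intervalIntegral.integral_const_mul (ν : ℂ), ← intervalIntegral.integral_sub
      (hc1.intervalIntegrable _ _) (hc2.intervalIntegrable _ _),
      ← intervalIntegral.integral_const_mul]
    refine intervalIntegral.integral_congr fun x _ => ?_
    push_cast; ring
  have hpi : (Real.pi : ℂ) ≠ 0 := by exact_mod_cast Real.pi_pos.ne'
  have hν' : (ν : ℂ) ≠ 0 := by exact_mod_cast hν
  rw [← hI, hsplit]
  field_simp
  ring

/-- Truncated Poisson summation, given decay of the Fourier coefficients outside `[0, L]`. -/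
lemma norm_sum_eR_sub_sum_integral_le {g g1 : ℝ → ℝ} (hg : ∀ x, HasDerivAt g (g1 x) x)
    (hg1 : Continuous g1) (A : ℤ) (m L : ℕ) {K : ℝ} (hK : 0 ≤ K) (hL : 1 ≤ L)
    (hneg : ∀ j : ℕ, ‖∫ x in (A : ℝ)..(A + m : ℤ), (g1 x : ℂ) * eR (g x - (-(j + 1) : ℤ) * x)‖ ≤
      K * (L / (L + (j + 1))))
    (hpos : ∀ j : ℕ, ‖∫ x in (A : ℝ)..(A + m : ℤ), (g1 x : ℂ) * eR (g x - (L + j + 1 : ℤ) * x)‖ ≤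
      K * (L / (j + 1))) :
    ‖∑ n ∈ Finset.Icc A (A + m), eR (g n) -
      ∑ ν ∈ Finset.Icc (0 : ℤ) L, ∫ x in (A : ℝ)..(A + m : ℤ), eR (g x - ν * x)‖ ≤
      (2 * K + 2) * (1 + Real.log L) := by
  set H := ∑ j ∈ Finset.range L, 1 / ((j : ℝ) + 1) with hH
  set J : ℤ → ℂ := fun ν => ∫ x in (A : ℝ)..(A + m : ℤ), eR (g x - ν * x) with hJ
  set I : ℤ → ℂ := fun ν => ∫ x in (A : ℝ)..(A + m : ℤ), (g1 x : ℂ) * eR (g x - ν * x) with hI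
  set D : ℂ := (eR (g (A + m : ℤ)) - eR (g A)) / (2 * Real.pi * Complex.I) with hD
  have hJI : ∀ ν : ℤ, ν ≠ 0 → J ν = I ν / ν - D * (1 / (ν : ℂ)) := fun ν hν =>
    integral_eR_sub_mul_eq hg hg1 A (A + m) ν hν
  have hDn : ‖D‖ ≤ 1 := by
    rw [hD, norm_div]
    have e : ‖(2 * Real.pi * Complex.I : ℂ)‖ = 2 * Real.pi := by simp [abs_of_pos Real.pi_pos]
    have h2 : ‖eR (g (A + m : ℤ)) - eR (g A)‖ ≤ 1 + 1 := by
      refine (norm_sub_le _ _).trans ?_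
      rw [norm_eR, norm_eR]
    rw [e, div_le_one (by positivity)]
    linarith [Real.pi_gt_three]
  have hlim := tendsto_sum_integral_mul_eR (h := fun x => eR (g x)) (fun x => (hg x).eR)
    (by
      have : Continuous g := continuous_iff_continuousAt.2 fun x => (hg x).continuousAt
      have := continuous_eR.comp this
      exact (continuous_const.mul (Complex.continuous_ofReal.comp hg1)).mul this) A m
  have hcoef : ∀ n : ℤ, ∫ x in (A : ℝ)..(A + m : ℤ), eR (g x) * eR (-(n * x)) = J n := fun n =>
    intervalIntegral.integral_congr fun x _ => by
      rw [← eR_add, ← sub_eq_add_neg]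
  simp only [hcoef] at hlim
  have hbound : ∀ r : ℕ, ‖∑ ν ∈ Finset.Icc (-((L + r : ℕ) : ℤ)) (L + r : ℕ), J ν -
      ∑ ν ∈ Finset.Icc (0 : ℤ) L, J ν‖ ≤ (2 * K + 1) * H := fun r => by
    rw [sum_Icc_neg_eq_add, sum_Icc_zero_add_eq_add]
    have h1 : ∑ j ∈ Finset.range (L + r), J (-((j : ℤ) + 1)) =
        ∑ j ∈ Finset.range (L + r), -(I (-((j : ℤ) + 1)) / ((j : ℂ) + 1)) +
          D * ∑ j ∈ Finset.range (L + r), 1 / ((j : ℂ) + 1) := by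
      rw [Finset.mul_sum, ← Finset.sum_add_distrib]
      refine Finset.sum_congr rfl fun j _ => ?_
      rw [hJI _ (by omega)]
      push_cast
      rw [div_neg, div_neg]; ring
    have h2 : ∑ j ∈ Finset.range r, J ((L : ℤ) + j + 1) =
        ∑ j ∈ Finset.range r, (I ((L : ℤ) + j + 1) / ((L : ℂ) + j + 1)) -
          D * ∑ j ∈ Finset.range r, 1 / ((L + j : ℕ) + 1 : ℂ) := by
      rw [Finset.mul_sum, ← Finset.sum_sub_distrib]
      refine Finset.sum_congr rfl fun j _ => ?_
      rw [hJI _ (by omega)]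
      push_cast
      ring
    have h3 := Finset.sum_range_add (fun j : ℕ => 1 / ((j : ℂ) + 1)) L r
    have h4 : ∑ j ∈ Finset.range L, 1 / ((j : ℂ) + 1) = (H : ℂ) := by
      rw [hH]; push_cast; rfl
    rw [h4] at h3
    have e : ∑ ν ∈ Finset.Icc (0 : ℤ) L, J ν + ∑ j ∈ Finset.range r, J ((L : ℤ) + j + 1) +
        ∑ j ∈ Finset.range (L + r), J (-((j : ℤ) + 1)) - ∑ ν ∈ Finset.Icc (0 : ℤ) L, J ν =
        ∑ j ∈ Finset.range (L + r), -(I (-((j : ℤ) + 1)) / ((j : ℂ) + 1)) +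
        ∑ j ∈ Finset.range r, (I ((L : ℤ) + j + 1) / ((L : ℂ) + j + 1)) + D * (H : ℂ) := by
      rw [h1, h2, h3]; ring
    have hH0 : 0 ≤ H := Finset.sum_nonneg fun j _ => by positivity
    rw [e]
    have b1 : ‖∑ j ∈ Finset.range (L + r), -(I (-((j : ℤ) + 1)) / ((j : ℂ) + 1))‖ ≤ K * H := by
      refine le_trans ?_ (mul_le_mul_of_nonneg_left (sum_range_div_mul_le L (L + r)) hK)
      rw [Finset.mul_sum]
      refine (norm_sum_le _ _).trans (Finset.sum_le_sum fun j _ => ?_)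
      · rw [norm_neg, norm_div]
        have : ‖((j : ℂ) + 1)‖ = (j : ℝ) + 1 := by
          rw [show ((j : ℂ) + 1) = ((j + 1 : ℕ) : ℂ) by push_cast; rfl, Complex.norm_natCast]
          push_cast; rfl
        rw [this, div_le_iff₀ (by positivity)]
        refine (hneg j).trans_eq ?_
        field_simp
    have b2 : ‖∑ j ∈ Finset.range r, (I ((L : ℤ) + j + 1) / ((L : ℂ) + j + 1))‖ ≤ K * H := by
      refine le_trans ?_ (mul_le_mul_of_nonneg_left (sum_range_div_mul_le L r) hK)
      rw [Finset.mul_sum]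
      refine (norm_sum_le _ _).trans (Finset.sum_le_sum fun j _ => ?_)
      · rw [norm_div]
        have : ‖((L : ℂ) + j + 1)‖ = (L : ℝ) + (j + 1) := by
          rw [show ((L : ℂ) + j + 1) = ((L + j + 1 : ℕ) : ℂ) by push_cast; rfl,
            Complex.norm_natCast]
          push_cast; ring
        rw [this, div_le_iff₀ (by positivity)]
        refine (hpos j).trans_eq ?_
        field_simp
    have b3 : ‖D * (H : ℂ)‖ ≤ H := by
      rw [norm_mul, Complex.norm_real, Real.norm_of_nonneg hH0]
      nlinarith
    refine (norm_add_le _ _).trans ((add_le_add ((norm_add_le _ _).trans (add_le_add b1 b2))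
      b3).trans_eq (by ring))
  have hlim2 := ((hlim.sub_const (∑ ν ∈ Finset.Icc (0 : ℤ) L, J ν)).norm)
  have hfin := le_of_tendsto hlim2 (b := (2 * K + 1) * H) (by
    filter_upwards [eventually_ge_atTop L] with M hM
    obtain ⟨r, rfl⟩ := Nat.exists_eq_add_of_le hM
    exact hbound r)
  have hHL := sum_range_one_div_le L
  have hlog : 0 ≤ Real.log L := Real.log_natCast_nonneg L
  have hhalf : ‖(eR (g A) + eR (g (A + m : ℤ))) / 2‖ ≤ 1 := by
    rw [norm_div]
    have := norm_add_le (eR (g A)) (eR (g (A + m : ℤ)))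
    rw [norm_eR, norm_eR] at this
    rw [Complex.norm_ofNat, div_le_one two_pos]; linarith
  have e : ∑ n ∈ Finset.Icc A (A + m), eR (g n) - ∑ ν ∈ Finset.Icc (0 : ℤ) L, J ν =
      (∑ n ∈ Finset.Icc A (A + m), eR (g n) - (eR (g A) + eR (g (A + m : ℤ))) / 2 -
        ∑ ν ∈ Finset.Icc (0 : ℤ) L, J ν) + (eR (g A) + eR (g (A + m : ℤ))) / 2 := by ring
  rw [e]
  refine (norm_add_le _ _).trans ((add_le_add hfin hhalf).trans ?_)
  nlinarith

end TruncatedPoisson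

section Extension

/-- A primitive of a continuous extension of the derivative extends the function. -/
lemma exists_hasDerivAt_eqOn_Icc {a b : ℝ} {h h' H' : ℝ → ℝ}
    (hh : ∀ x ∈ Set.Icc a b, HasDerivWithinAt h (h' x) (Set.Icc a b) x) (hH' : Continuous H')
    (heq : ∀ x ∈ Set.Icc a b, H' x = h' x) :
    ∃ H : ℝ → ℝ, (∀ x, HasDerivAt H (H' x) x) ∧ ∀ x ∈ Set.Icc a b, H x = h x := by
  refine ⟨fun x => h a + ∫ t in a..x, H' t, fun x => ?_, fun x hx => ?_⟩
  · exact (intervalIntegral.integral_hasDerivAt_right (hH'.intervalIntegrable _ _)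
      (hH'.stronglyMeasurableAtFilter _ _) hH'.continuousAt).const_add (h a)
  · have hsub : Set.Icc a x ⊆ Set.Icc a b := Set.Icc_subset_Icc_right hx.2
    have := intervalIntegral.integral_eq_sub_of_hasDerivAt_of_le hx.1 (f := h) (f' := H')
      (fun y hy => (hh y (hsub hy)).continuousWithinAt.mono hsub)
      (fun y hy => by
        have hy' : y ∈ Set.Icc a b := hsub (Set.Ioo_subset_Icc_self hy)
        rw [heq y hy']
        exact (hh y hy').hasDerivAt (Icc_mem_nhds hy.1 (hy.2.trans_le hx.2)))
      (hH'.intervalIntegrable _ _)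
    simp only
    rw [this]; ring

/-- A function of class `C⁴` on a compact interval extends to the whole line. -/
lemma exists_extension_of_contDiffOn_four {a b : ℝ} (hab : a < b) {f : ℝ → ℝ}
    (hf : ContDiffOn ℝ 4 f (Set.Icc a b)) :
    ∃ g g1 g2 g3 g4 : ℝ → ℝ, (∀ x, HasDerivAt g (g1 x) x) ∧ (∀ x, HasDerivAt g1 (g2 x) x) ∧
      (∀ x, HasDerivAt g2 (g3 x) x) ∧ (∀ x, HasDerivAt g3 (g4 x) x) ∧
      ∀ x ∈ Set.Icc a b, g x = f x ∧ g1 x = derivWithin f (Set.Icc a b) x ∧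
        g2 x = iteratedDerivWithin 2 f (Set.Icc a b) x ∧
        g3 x = iteratedDerivWithin 3 f (Set.Icc a b) x ∧
        g4 x = iteratedDerivWithin 4 f (Set.Icc a b) x := by
  have hu := uniqueDiffOn_Icc hab
  have hder : ∀ n : ℕ, n < 4 → ∀ x ∈ Set.Icc a b,
      HasDerivWithinAt (iteratedDerivWithin n f (Set.Icc a b))
        (iteratedDerivWithin (n + 1) f (Set.Icc a b) x) (Set.Icc a b) x := fun n hn x hx => by
    rw [iteratedDerivWithin_succ]
    exact (hf.differentiableOn_iteratedDerivWithin (by exact_mod_cast hn) hu x hx).hasDerivWithinAt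
  have h4c : ContinuousOn (iteratedDerivWithin 4 f (Set.Icc a b)) (Set.Icc a b) :=
    hf.continuousOn_iteratedDerivWithin (by norm_num) hu
  have hcont : ∀ H H' : ℝ → ℝ, (∀ x, HasDerivAt H (H' x) x) → Continuous H := fun H H' h =>
    continuous_iff_continuousAt.2 fun x => (h x).continuousAt
  obtain ⟨g3, h3, e3⟩ := exists_hasDerivAt_eqOn_Icc (hder 3 (by norm_num))
    (H' := Set.IccExtend hab.le ((Set.Icc a b).domRestrict (iteratedDerivWithin 4 f (Set.Icc a b))))
    (h4c.domRestrict.Icc_extend') (fun x hx => Set.IccExtend_of_mem hab.le _ hx)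
  obtain ⟨g2, h2, e2⟩ := exists_hasDerivAt_eqOn_Icc (hder 2 (by norm_num)) (hcont _ _ h3) e3
  obtain ⟨g1, h1, e1⟩ := exists_hasDerivAt_eqOn_Icc (hder 1 (by norm_num)) (hcont _ _ h2) e2
  obtain ⟨g, h0, e0⟩ := exists_hasDerivAt_eqOn_Icc (hder 0 (by norm_num)) (hcont _ _ h1) e1
  refine ⟨g, g1, g2, g3, _, h0, h1, h2, h3, fun x hx => ⟨?_, ?_, e2 x hx, e3 x hx,
    Set.IccExtend_of_mem hab.le _ hx⟩⟩
  · rw [e0 x hx, iteratedDerivWithin_zero]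
  · rw [e1 x hx, iteratedDerivWithin_one]

end Extension

section LinearExtension

/-- A function on `[a, b]` continued by its tangent lines at the end points. -/
lemma exists_tangent_extension {a b : ℝ} (hab : a ≤ b) {f f1 f2 : ℝ → ℝ}
    (hf : ∀ x, HasDerivAt f (f1 x) x) (hf1 : ∀ x, HasDerivAt f1 (f2 x) x) :
    ∃ g g1 : ℝ → ℝ, (∀ x, HasDerivAt g (g1 x) x) ∧ Continuous g1 ∧
      (∀ x ∈ Set.Icc a b, g x = f x ∧ g1 x = f1 x) ∧
      (∀ x ≤ a, g x = f a + f1 a * (x - a) ∧ g1 x = f1 a) ∧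
      (∀ x, b ≤ x → g x = f b + f1 b * (x - b) ∧ g1 x = f1 b) := by
  have hc1 : Continuous f1 := continuous_iff_continuousAt.2 fun x => (hf1 x).continuousAt
  have hg1c : Continuous fun x => f1 (max a (min b x)) := hc1.comp (by fun_prop)
  have hmid : ∀ x ∈ Set.Icc a b, f1 (max a (min b x)) = f1 x := fun x hx => by
    rw [min_eq_right hx.2, max_eq_right hx.1]
  have hleft : ∀ x ≤ a, f1 (max a (min b x)) = f1 a := fun x hx => by
    rw [max_eq_left ((min_le_right _ _).trans hx)]
  have hright : ∀ x, b ≤ x → f1 (max a (min b x)) = f1 b := fun x hx => by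
    rw [min_eq_left hx, max_eq_right hab]
  obtain ⟨g, hg, hgf⟩ := exists_hasDerivAt_eqOn_Icc (a := a) (b := b) (h := f) (h' := f1)
    (fun x _ => (hf x).hasDerivWithinAt) hg1c hmid
  have hlin : ∀ c x : ℝ, (∀ t ∈ Set.uIcc c x, f1 (max a (min b t)) = f1 c) →
      g x = g c + f1 c * (x - c) := fun c x h => by
    have h1 := integral_eq_sub_of_hasDerivAt (a := c) (b := x) (fun t _ => hg t)
      (hg1c.intervalIntegrable _ _)
    rw [intervalIntegral.integral_congr h, intervalIntegral.integral_const, smul_eq_mul] at h1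
    linarith
  refine ⟨g, _, hg, hg1c, fun x hx => ⟨hgf x hx, hmid x hx⟩, fun x hx => ⟨?_, hleft x hx⟩,
    fun x hx => ⟨?_, hright x hx⟩⟩
  · rw [← hgf a (Set.left_mem_Icc.2 hab)]
    refine hlin a x fun t ht => hleft t ?_
    rw [Set.uIcc_of_ge hx] at ht; exact ht.2
  · rw [← hgf b (Set.right_mem_Icc.2 hab)]
    refine hlin b x fun t ht => hright t ?_
    rw [Set.uIcc_of_le hx] at ht; exact ht.1

end LinearExtension

section PieceBounds

/-- A weighted first derivative test for a concave phase, the weight being the derivative of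
the untwisted phase. -/
lemma norm_integral_deriv_mul_eR_sub_le {p q ν K : ℝ} (hpq : p ≤ q) {g g1 g2 : ℝ → ℝ}
    (hg : ∀ x ∈ Set.Icc p q, HasDerivAt g (g1 x) x)
    (hg1 : ∀ x ∈ Set.Icc p q, HasDerivAt g1 (g2 x) x) (hg2 : ContinuousOn g2 (Set.Icc p q))
    (hneg : ∀ x ∈ Set.Icc p q, g2 x ≤ 0) (hne : ∀ x ∈ Set.Icc p q, g1 x - ν ≠ 0)
    (hK : ∀ x ∈ Set.Icc p q, |g1 x / (g1 x - ν)| ≤ K) :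
    ‖∫ x in p..q, (g1 x : ℂ) * eR (g x - ν * x)‖ ≤ K := by
  have hg1c : ContinuousOn g1 (Set.Icc p q) :=
    fun x hx => (hg1 x hx).continuousAt.continuousWithinAt
  have hd : ∀ x ∈ Set.Icc p q, HasDerivAt (fun y => g y - ν * y) (g1 x - ν) x := fun x hx =>
    (hg x hx).sub_const_mul_self ν
  have hk : ∀ x ∈ Set.Icc p q, HasDerivAt (fun y => g1 y / (g1 y - ν))
      (-ν * g2 x / (g1 x - ν) ^ 2) x := fun x hx => by
    refine ((hg1 x hx).fun_div ((hg1 x hx).sub_const ν) (hne x hx)).congr_deriv ?_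
    congr 1; ring
  have hk'c : ContinuousOn (fun x => -ν * g2 x / (g1 x - ν) ^ 2) (Set.Icc p q) :=
    (continuousOn_const.mul hg2).div ((hg1c.sub continuousOn_const).pow 2)
      fun x hx => pow_ne_zero 2 (hne x hx)
  have hcg : ContinuousOn (fun x => g1 x - ν) (Set.Icc p q) := hg1c.sub continuousOn_const
  have hpI := Set.left_mem_Icc.2 hpq
  have hqI := Set.right_mem_Icc.2 hpq
  rcases le_total 0 ν with hν | hν
  · have h := norm_integral_mul_deriv_mul_eR_le_of_nonneg hpq hd hcg hk hk'c
      (fun x hx => div_nonneg (by nlinarith [hneg x hx]) (sq_nonneg _)) (hK p hpI) (hK q hqI)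
    refine le_of_eq_of_le (congrArg _ (intervalIntegral.integral_congr fun x hx => ?_)) h
    rw [Set.uIcc_of_le hpq] at hx
    rw [div_mul_cancel₀ _ (hne x hx)]
  · have h := norm_integral_mul_deriv_mul_eR_le_of_nonneg (K := K) hpq hd hcg
      (fun x hx => (hk x hx).fun_neg) hk'c.fun_neg
      (fun x hx => by
        rw [← neg_div]
        exact div_nonneg (by nlinarith [hneg x hx]) (sq_nonneg _))
      (by rw [abs_neg]; exact hK p hpI) (by rw [abs_neg]; exact hK q hqI)
    rw [← norm_neg, ← intervalIntegral.integral_neg]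
    refine le_of_eq_of_le (congrArg _ (intervalIntegral.integral_congr fun x hx => ?_)) h
    rw [Set.uIcc_of_le hpq] at hx
    rw [neg_mul, div_mul_cancel₀ _ (hne x hx)]
    push_cast; ring

lemma norm_integral_deriv_mul_eR_add_le {p q : ℝ} {L j : ℕ} (hpq : p ≤ q) {g g1 g2 : ℝ → ℝ}
    (hg : ∀ x ∈ Set.Icc p q, HasDerivAt g (g1 x) x)
    (hg1 : ∀ x ∈ Set.Icc p q, HasDerivAt g1 (g2 x) x) (hg2 : ContinuousOn g2 (Set.Icc p q))
    (hneg : ∀ x ∈ Set.Icc p q, g2 x ≤ 0) (h0 : ∀ x ∈ Set.Icc p q, 0 ≤ g1 x)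
    (hL : ∀ x ∈ Set.Icc p q, g1 x ≤ L) :
    ‖∫ x in p..q, (g1 x : ℂ) * eR (g x - (-(j + 1) : ℤ) * x)‖ ≤ L / (L + (j + 1)) := by
  have hj : (0 : ℝ) < j + 1 := by positivity
  have hν : ((-(j + 1) : ℤ) : ℝ) = -((j : ℝ) + 1) := by push_cast; ring
  refine norm_integral_deriv_mul_eR_sub_le hpq hg hg1 hg2 hneg (fun x hx => ?_) fun x hx => ?_
  · rw [hν]; linarith [h0 x hx]
  · have h1 := h0 x hx
    have h2 := hL x hx
    rw [hν, sub_neg_eq_add, abs_of_nonneg (by positivity),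
      div_le_div_iff₀ (by linarith) (by linarith)]
    nlinarith

lemma norm_integral_deriv_mul_eR_sub_add_le {p q : ℝ} {L j : ℕ} (hpq : p ≤ q) {g g1 g2 : ℝ → ℝ}
    (hg : ∀ x ∈ Set.Icc p q, HasDerivAt g (g1 x) x)
    (hg1 : ∀ x ∈ Set.Icc p q, HasDerivAt g1 (g2 x) x) (hg2 : ContinuousOn g2 (Set.Icc p q))
    (hneg : ∀ x ∈ Set.Icc p q, g2 x ≤ 0) (h0 : ∀ x ∈ Set.Icc p q, 0 ≤ g1 x)
    (hL : ∀ x ∈ Set.Icc p q, g1 x ≤ L) :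
    ‖∫ x in p..q, (g1 x : ℂ) * eR (g x - (L + j + 1 : ℤ) * x)‖ ≤ L / (j + 1) := by
  have hj : (0 : ℝ) < j + 1 := by positivity
  have hν : ((L + j + 1 : ℤ) : ℝ) = L + (j + 1) := by push_cast; ring
  refine norm_integral_deriv_mul_eR_sub_le hpq hg hg1 hg2 hneg (fun x hx => ?_) fun x hx => ?_
  · rw [hν]; linarith [hL x hx]
  · have h1 := h0 x hx
    have h2 := hL x hx
    rw [hν, abs_div, abs_of_nonneg h1, abs_of_neg (by linarith),
      div_le_div_iff₀ (by linarith) hj]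
    nlinarith

/-- Oscillatory integral of a linear phase over an interval of length at most one. -/
lemma norm_integral_eR_linear_le {p q c s t ν E : ℝ} (hpq : p ≤ q) (hlen : q ≤ p + 1)
    (hE : 1 ≤ E ∨ t - ν ≠ 0 ∧ 1 / |t - ν| ≤ E) :
    ‖∫ x in p..q, eR (s + t * (x - c) - ν * x)‖ ≤ E := by
  rcases hE with hE | ⟨h0, hE⟩
  · exact (norm_integral_eR_le hpq _).trans (by linarith)
  · refine (norm_integral_eR_le_of_le_deriv (g' := fun _ => t - ν) (g'' := fun _ => 0) hpq
      (abs_pos.2 h0) (fun x _ => ?_) (fun x _ => hasDerivAt_const x _) continuousOn_const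
      (fun _ _ => le_rfl) (fun _ _ => le_rfl)).trans hE
    have h := (((hasDerivAt_id' x).sub_const c).const_mul t).const_add s
    rw [mul_one] at h
    exact h.sub_const_mul_self ν

/-- Second derivative test for a decreasing phase. -/
lemma norm_integral_eR_le_of_deriv_nonpos {a b μ : ℝ} (hab : a ≤ b) (hμ : 0 < μ) {g g1 g2 : ℝ → ℝ}
    (hg : ∀ x ∈ Set.Icc a b, HasDerivAt g (g1 x) x)
    (hg1 : ∀ x ∈ Set.Icc a b, HasDerivAt g1 (g2 x) x) (hg2 : ContinuousOn g2 (Set.Icc a b))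
    (hlow : ∀ x ∈ Set.Icc a b, μ ≤ -g2 x) (h0 : g1 a ≤ 0) :
    ‖∫ x in a..b, eR (g x)‖ ≤ 2 / √μ := by
  have hs : 0 < √μ := Real.sqrt_pos.2 hμ
  rcases le_total b (a + 1 / √μ) with h | h
  · refine (norm_integral_eR_le hab _).trans ?_
    have : 2 / √μ = 1 / √μ + 1 / √μ := by ring
    have : 0 < 1 / √μ := by positivity
    linarith
  · have hd : 0 < 1 / √μ := by positivity
    set c := a + 1 / √μ with hc
    have hac : a ≤ c := by linarith
    have hgc : ContinuousOn (fun x => eR (g x)) (Set.Icc a b) :=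
      continuous_eR.comp_continuousOn fun x hx => (hg x hx).continuousAt.continuousWithinAt
    rw [← intervalIntegral.integral_add_adjacent_intervals
      (ContinuousOn.intervalIntegrable_of_Icc hac (hgc.mono (Set.Icc_subset_Icc_right h)))
      (ContinuousOn.intervalIntegrable_of_Icc h (hgc.mono (Set.Icc_subset_Icc_left hac)))]
    have hsub : Set.Icc c b ⊆ Set.Icc a b := Set.Icc_subset_Icc_left hac
    have h2 := norm_integral_eR_le_of_le_deriv (m := √μ) h hs (fun x hx => hg x (hsub hx))
      (fun x hx => hg1 x (hsub hx)) (hg2.mono hsub)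
      (fun x hx => by linarith [hlow x (hsub hx)])
      (fun x hx => by
        have hx' := hsub hx
        have hm := (convex_Icc a b).image_sub_le_mul_sub_of_deriv_le (f := g1) (C := -μ)
          (fun y hy => (hg1 y hy).continuousAt.continuousWithinAt)
          (fun y hy => (hg1 y (interior_subset hy)).differentiableAt.differentiableWithinAt)
          (fun y hy => by
            rw [(hg1 y (interior_subset hy)).deriv]; linarith [hlow y (interior_subset hy)])
          a (Set.left_mem_Icc.2 hab) x hx' hx'.1
        have hxa : 1 / √μ ≤ x - a := by linarith [hx.1]
        have : √μ ≤ μ * (x - a) := by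
          calc √μ = μ * (1 / √μ) := by
                rw [mul_one_div, eq_div_iff hs.ne', Real.mul_self_sqrt hμ.le]
            _ ≤ _ := mul_le_mul_of_nonneg_left hxa hμ.le
        exact (by linarith : √μ ≤ -g1 x).trans (neg_le_abs _))
    have h1 := norm_integral_eR_le hac g
    refine (norm_add_le _ _).trans ((add_le_add h1 h2).trans_eq ?_)
    rw [hc]; ring

/-- Second derivative test for an increasing phase. -/
lemma norm_integral_eR_le_of_deriv_nonneg {a b μ : ℝ} (hab : a ≤ b) (hμ : 0 < μ) {g g1 g2 : ℝ → ℝ}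
    (hg : ∀ x ∈ Set.Icc a b, HasDerivAt g (g1 x) x)
    (hg1 : ∀ x ∈ Set.Icc a b, HasDerivAt g1 (g2 x) x) (hg2 : ContinuousOn g2 (Set.Icc a b))
    (hlow : ∀ x ∈ Set.Icc a b, μ ≤ -g2 x) (h0 : 0 ≤ g1 b) :
    ‖∫ x in a..b, eR (g x)‖ ≤ 2 / √μ := by
  have hmem : ∀ x ∈ Set.Icc (-b) (-a), -x ∈ Set.Icc a b := fun x hx =>
    ⟨by linarith [hx.2], by linarith [hx.1]⟩
  have h := norm_integral_eR_le_of_deriv_nonpos (a := -b) (b := -a) (g := fun x => g (-x))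
    (g1 := fun x => -g1 (-x)) (g2 := fun x => g2 (-x)) (by linarith) hμ
    (fun x hx => by
      simpa using HasDerivAt.comp_const_sub 0 x (by simpa using hg (-x) (hmem x hx)))
    (fun x hx => by
      have h := (HasDerivAt.comp_const_sub 0 x (by simpa using hg1 (-x) (hmem x hx))).fun_neg
      simp only [zero_sub] at h
      exact h.congr_deriv (neg_neg _))
    (hg2.comp continuousOn_neg hmem) (fun x hx => hlow _ (hmem x hx)) (by simpa using h0)
  rwa [intervalIntegral.integral_comp_neg (fun x => eR (g x)), neg_neg, neg_neg] at h

end PieceBounds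

section FrequencyWeight

/-- The size of the error attached to a frequency at distance about `m` from an end point of the
range of frequencies; `W` is the cost of a frequency at the end point itself. -/
noncomputable def freqWeight (W : ℝ) (m : ℕ) : ℝ := 2 / m + if m ≤ 1 then W else 0

lemma freqWeight_nonneg {W : ℝ} (hW : 0 ≤ W) (m : ℕ) : 0 ≤ freqWeight W m := by
  unfold freqWeight
  split_ifs <;> positivity

lemma le_freqWeight {W : ℝ} {m : ℕ} (hm : m ≤ 1) : W ≤ freqWeight W m := by
  unfold freqWeight
  rw [if_pos hm]
  have : (0 : ℝ) ≤ 2 / m := by positivity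
  linarith

lemma one_div_le_freqWeight {W y : ℝ} {m : ℕ} (hm : 2 ≤ m) (hy : (m : ℝ) - 1 ≤ y) :
    1 / y ≤ freqWeight W m := by
  unfold freqWeight
  have hm' : (2 : ℝ) ≤ m := by exact_mod_cast hm
  rw [if_neg (by omega), add_zero, div_le_div_iff₀ (by linarith) (by linarith)]
  linarith

lemma sum_range_freqWeight_le {W : ℝ} (hW : 0 ≤ W) (L : ℕ) :
    ∑ m ∈ Finset.range (L + 1), freqWeight W m ≤ 2 * (1 + Real.log L) + 2 * W := by
  unfold freqWeight
  rw [Finset.sum_add_distrib]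
  refine add_le_add ?_ ?_
  · rw [Finset.sum_range_succ']
    have h := sum_range_one_div_le L
    have e : ∑ k ∈ Finset.range L, (2 : ℝ) / ((k + 1 : ℕ) : ℝ) =
        2 * ∑ k ∈ Finset.range L, 1 / ((k : ℝ) + 1) := by
      rw [Finset.mul_sum]
      refine Finset.sum_congr rfl fun k _ => ?_
      push_cast; ring
    rw [e]
    simp only [Nat.cast_zero, div_zero, add_zero]
    linarith
  · rw [← Finset.sum_filter, Finset.sum_const, nsmul_eq_mul]
    refine mul_le_mul_of_nonneg_right ?_ hW
    have : (Finset.filter (fun m => m ≤ 1) (Finset.range (L + 1))).card ≤ (Finset.range 2).card :=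
      Finset.card_le_card fun m hm => by
        simp only [Finset.mem_filter, Finset.mem_range] at *; omega
    rw [Finset.card_range] at this
    exact_mod_cast this

lemma sum_Icc_zero_natCast {E : Type*} [AddCommMonoid E] (u : ℤ → E) (L : ℕ) :
    ∑ ν ∈ Finset.Icc (0 : ℤ) L, u ν = ∑ n ∈ Finset.range (L + 1), u n := by
  have h := sum_Icc_zero_add_eq_add u 0 L
  simp only [zero_add, Nat.cast_zero, Finset.Icc_self, Finset.sum_singleton] at h
  rw [h, Finset.sum_range_succ', add_comm]
  simp

end FrequencyWeight

section SingleFrequency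

lemma antitoneOn_of_hasDerivAt_nonpos {a b : ℝ} {g g' : ℝ → ℝ} (hg : ∀ x, HasDerivAt g (g' x) x)
    (hneg : ∀ x ∈ Set.Icc a b, g' x ≤ 0) : AntitoneOn g (Set.Icc a b) :=
  antitoneOn_of_deriv_nonpos (convex_Icc a b)
    (fun x _ => (hg x).continuousAt.continuousWithinAt)
    (fun x _ => (hg x).differentiableAt.differentiableWithinAt)
    (fun x hx => by rw [(hg x).deriv]; exact hneg x (interior_subset hx))

/-- The contribution of a single frequency, on the original interval. -/
lemma exists_norm_integral_frequency_le (κ K : ℝ) (hκ : 0 < κ) (hK : 1 ≤ K) :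
    ∃ C : ℝ, 0 < C ∧ ∀ (a b F N : ℝ) (f f1 f2 f3 f4 : ℝ → ℝ), 0 < F → 0 < N → a ≤ b → b - a ≤ N →
    (∀ x, HasDerivAt f (f1 x) x) → (∀ x, HasDerivAt f1 (f2 x) x) →
    (∀ x, HasDerivAt f2 (f3 x) x) → (∀ x, HasDerivAt f3 (f4 x) x) →
    (∀ x ∈ Set.Icc a b, κ * (F / N ^ 2) ≤ -f2 x) →
    (∀ x ∈ Set.Icc a b, -f2 x ≤ K * (F / N ^ 2)) →
    (∀ x ∈ Set.Icc a b, |f3 x| ≤ K * (F / N ^ 3)) →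
    (∀ x ∈ Set.Icc a b, |f4 x| ≤ K * (F / N ^ 4)) →
    f1 b < 1 → ∀ L ν : ℕ, (L : ℝ) ≤ f1 a + 1 → ν ≤ L →
    (∀ c ∈ Set.Icc a b, f1 c = ν →
      ‖(∫ x in a..b, eR (f x - ν * x)) - eR (f c - ν * c - 1 / 8) / (√(-f2 c) : ℝ)‖ ≤
        C * (N / F + freqWeight (1 + N / √F) ν + freqWeight (1 + N / √F) (L - ν))) ∧
    (ν < f1 b ∨ f1 a < ν → ‖∫ x in a..b, eR (f x - ν * x)‖ ≤
        C * (N / F + freqWeight (1 + N / √F) ν + freqWeight (1 + N / √F) (L - ν))) := by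
  obtain ⟨C, hC, hmain⟩ := exists_norm_integral_sub_stationary_le κ K hκ hK
  refine ⟨C + 2 / √κ, by positivity, ?_⟩
  intro a b F N f f1 f2 f3 f4 hF hN hab hba hf hf1 hf2 hf3 hlow hup hb3 hb4 hα L ν hLβ hνL
  set W := 1 + N / √F with hWdef
  have hNF : 0 < N / √F := by positivity
  have hW : 0 ≤ W := by positivity
  have hw1 := freqWeight_nonneg hW ν
  have hw2 := freqWeight_nonneg hW (L - ν)
  have hsub : ((L - ν : ℕ) : ℝ) = L - ν := by push_cast [hνL]; ring
  have hd : ∀ x, HasDerivAt (fun y => f y - ν * y) (f1 x - ν) x := fun x =>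
    (hf x).sub_const_mul_self ν
  have hd1 : ∀ x, HasDerivAt (fun y => f1 y - (ν : ℝ)) (f2 x) x := fun x => (hf1 x).sub_const _
  have hX : 0 < N / F := by positivity
  constructor
  · intro c hc hcν
    have hEa : ∃ Ea, (Ea = N / √F ∨ f1 a - ν ≠ 0 ∧ Ea = 1 / |f1 a - ν|) ∧
        Ea ≤ freqWeight W (L - ν) := by
      rcases Nat.lt_or_ge 1 (L - ν) with h | h
      · have h' : (2 : ℝ) ≤ (L - ν : ℕ) := by exact_mod_cast h
        have hge : ((L - ν : ℕ) : ℝ) - 1 ≤ f1 a - ν := by linarith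
        refine ⟨_, Or.inr ⟨by linarith, rfl⟩, ?_⟩
        rw [abs_of_pos (by linarith)]
        exact one_div_le_freqWeight h hge
      · exact ⟨_, Or.inl rfl, le_trans (by linarith) (le_freqWeight h)⟩
    have hEb : ∃ Eb, (Eb = N / √F ∨ f1 b - ν ≠ 0 ∧ Eb = 1 / |f1 b - ν|) ∧
        Eb ≤ freqWeight W ν := by
      rcases Nat.lt_or_ge 1 ν with h | h
      · have h' : (2 : ℝ) ≤ ν := by exact_mod_cast h
        have hge : (ν : ℝ) - 1 ≤ -(f1 b - ν) := by linarith
        refine ⟨_, Or.inr ⟨by linarith, rfl⟩, ?_⟩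
        rw [abs_of_neg (by linarith)]
        exact one_div_le_freqWeight h hge
      · exact ⟨_, Or.inl rfl, le_trans (by linarith) (le_freqWeight h)⟩
    obtain ⟨Ea, hEa1, hEa2⟩ := hEa
    obtain ⟨Eb, hEb1, hEb2⟩ := hEb
    refine (hmain a b c F N (fun y => f y - ν * y) (fun y => f1 y - ν) f2 f3 f4 hF hN hc.1 hc.2 hba
      (fun x _ => hd x) (fun x _ => hd1 x) (fun x _ => hf2 x) (fun x _ => hf3 x)
      (by simp only [hcν, sub_self]) hlow hup hb3 hb4 Ea Eb hEa1 hEb1).trans ?_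
    have h1 : 0 ≤ 2 / √κ := by positivity
    have h2 : N / F + Ea + Eb ≤ N / F + freqWeight W ν + freqWeight W (L - ν) := by linarith
    exact (mul_le_mul_of_nonneg_left h2 hC.le).trans
      (mul_le_mul_of_nonneg_right (by linarith) (by linarith))
  · intro h
    have hμ : 0 < κ * (F / N ^ 2) := by positivity
    have hc2 : ContinuousOn f2 (Set.Icc a b) := fun x _ => (hf2 x).continuousAt.continuousWithinAt
    have hs : 2 / √(κ * (F / N ^ 2)) = 2 / √κ * (N / √F) := by
      rw [Real.sqrt_mul hκ.le, Real.sqrt_div hF.le, Real.sqrt_sq hN.le]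
      field_simp
    have hint : ‖∫ x in a..b, eR (f x - ν * x)‖ ≤ 2 / √(κ * (F / N ^ 2)) := by
      rcases h with h | h
      · exact norm_integral_eR_le_of_deriv_nonneg hab hμ (fun x _ => hd x) (fun x _ => hd1 x) hc2
          hlow (by linarith)
      · exact norm_integral_eR_le_of_deriv_nonpos hab hμ (fun x _ => hd x) (fun x _ => hd1 x) hc2
          hlow (by linarith)
    have hwW : W ≤ freqWeight W ν + freqWeight W (L - ν) := by
      rcases h with h | h
      · have : ν < 1 := by exact_mod_cast h.trans hα
        linarith [le_freqWeight (W := W) (m := ν) (by omega)]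
      · have : L < ν + 1 := by exact_mod_cast (show (L : ℝ) < ν + 1 by linarith)
        linarith [le_freqWeight (W := W) (m := L - ν) (by omega)]
    rw [hs] at hint
    have h1 : 0 ≤ 2 / √κ := by positivity
    have h2 : N / √F ≤ N / F + freqWeight W ν + freqWeight W (L - ν) := by linarith
    exact hint.trans ((mul_le_mul_of_nonneg_left h2 h1).trans
      (mul_le_mul_of_nonneg_right (by linarith) (by linarith)))

end SingleFrequency

section ConcavePhase

/-- Truncated Poisson summation for a concave phase with derivative in `[0, L]`; the phase is
continued linearly up to the neighbouring integers. -/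
lemma norm_sum_eR_sub_sum_tangent_integral_le {a b : ℝ} (hab : a ≤ b) {f f1 f2 f3 : ℝ → ℝ}
    (hf : ∀ x, HasDerivAt f (f1 x) x) (hf1 : ∀ x, HasDerivAt f1 (f2 x) x)
    (hf2 : ∀ x, HasDerivAt f2 (f3 x) x) (hneg : ∀ x ∈ Set.Icc a b, f2 x ≤ 0)
    (h0 : 0 ≤ f1 b) {L : ℕ} (hL1 : 1 ≤ L) (hL : f1 a ≤ L) :
    ‖∑ n ∈ Finset.Icc ⌈a⌉ ⌊b⌋, eR (f n) - ∑ ν ∈ Finset.range (L + 1),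
      ((∫ x in (⌊a⌋ : ℝ)..a, eR (f a + f1 a * (x - a) - ν * x)) +
        (∫ x in a..b, eR (f x - ν * x)) +
        ∫ x in b..⌈b⌉, eR (f b + f1 b * (x - b) - ν * x))‖ ≤ 8 * (1 + Real.log L) + 2 := by
  obtain ⟨g, g1, hg, hg1, hmid, hleft, hright⟩ := exists_tangent_extension hab hf hf1
  obtain ⟨m, hm⟩ : ∃ m : ℕ, ⌈b⌉ = ⌊a⌋ + m :=
    Int.le.dest (by exact_mod_cast (Int.floor_le a).trans (hab.trans (Int.le_ceil b))) |>.imp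
      fun _ h => h.symm
  have hAa : (⌊a⌋ : ℝ) ≤ a := Int.floor_le a
  have hbB : b ≤ ⌈b⌉ := Int.le_ceil b
  have hgc : Continuous g := continuous_iff_continuousAt.2 fun x => (hg x).continuousAt
  have hanti := antitoneOn_of_hasDerivAt_nonpos hf1 hneg
  have hge : ∀ x ∈ Set.Icc a b, 0 ≤ f1 x := fun x hx =>
    h0.trans (hanti hx (Set.right_mem_Icc.2 hab) hx.2)
  have hle : ∀ x ∈ Set.Icc a b, f1 x ≤ L := fun x hx =>
    (hanti (Set.left_mem_Icc.2 hab) hx hx.1).trans hL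
  have hc2 : ContinuousOn f2 (Set.Icc a b) := fun x _ => (hf2 x).continuousAt.continuousWithinAt
  have hlin : ∀ s t c x : ℝ, HasDerivAt (fun y => s + t * (y - c)) t x := fun s t c x => by
    have h := (((hasDerivAt_id' x).sub_const c).const_mul t).const_add s
    rwa [mul_one] at h
  have hsplit : ∀ u : ℝ → ℂ, Continuous u → ∫ x in (⌊a⌋ : ℝ)..(⌊a⌋ + m : ℤ), u x =
      (∫ x in (⌊a⌋ : ℝ)..a, u x) + (∫ x in a..b, u x) + ∫ x in b..⌈b⌉, u x := fun u hu => by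
    rw [intervalIntegral.integral_add_adjacent_intervals (hu.intervalIntegrable _ _)
      (hu.intervalIntegrable _ _), intervalIntegral.integral_add_adjacent_intervals
      (hu.intervalIntegrable _ _) (hu.intervalIntegrable _ _), hm]
  have hpieces : ∀ (w : ℝ → ℂ → ℂ) (ν : ℝ),
      Continuous (fun x => w (g1 x) (eR (g x - ν * x))) →
      ∫ x in (⌊a⌋ : ℝ)..(⌊a⌋ + m : ℤ), w (g1 x) (eR (g x - ν * x)) =
      (∫ x in (⌊a⌋ : ℝ)..a, w (f1 a) (eR (f a + f1 a * (x - a) - ν * x))) +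
        (∫ x in a..b, w (f1 x) (eR (f x - ν * x))) +
        ∫ x in b..⌈b⌉, w (f1 b) (eR (f b + f1 b * (x - b) - ν * x)) := fun w ν hu => by
    rw [hsplit _ hu]
    congr 1
    · congr 1
      · refine intervalIntegral.integral_congr fun x hx => ?_
        rw [Set.uIcc_of_le hAa] at hx
        simp only [(hleft x hx.2).1, (hleft x hx.2).2]
      · refine intervalIntegral.integral_congr fun x hx => ?_
        rw [Set.uIcc_of_le hab] at hx
        simp only [(hmid x hx).1, (hmid x hx).2]
    · refine intervalIntegral.integral_congr fun x hx => ?_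
      rw [Set.uIcc_of_le hbB] at hx
      simp only [(hright x hx.1).1, (hright x hx.1).2]
  have hce : ∀ ν : ℝ, Continuous fun x => eR (g x - ν * x) := fun ν =>
    continuous_eR.comp (hgc.sub (continuous_const.mul continuous_id))
  have hcw : ∀ ν : ℝ, Continuous fun x => (g1 x : ℂ) * eR (g x - ν * x) := fun ν =>
    (Complex.continuous_ofReal.comp hg1).mul (hce ν)
  have haI := Set.left_mem_Icc.2 hab
  have hbI := Set.right_mem_Icc.2 hab
  have key := norm_sum_eR_sub_sum_integral_le hg hg1 ⌊a⌋ m L (K := 3) (by norm_num) hL1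
    (fun j => by
      rw [hpieces (fun y z => (y : ℂ) * z) _ (hcw _)]
      have p1 := norm_integral_deriv_mul_eR_add_le (L := L) (j := j) hAa
        (fun x _ => hlin (f a) (f1 a) a x) (fun x _ => hasDerivAt_const x _) continuousOn_const
        (fun _ _ => le_rfl) (fun _ _ => hge a haI) (fun _ _ => hL)
      have p2 := norm_integral_deriv_mul_eR_add_le (L := L) (j := j) hab
        (fun x _ => hf x) (fun x _ => hf1 x) hc2 hneg hge hle
      have p3 := norm_integral_deriv_mul_eR_add_le (L := L) (j := j) hbB
        (fun x _ => hlin (f b) (f1 b) b x) (fun x _ => hasDerivAt_const x _) continuousOn_const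
        (fun _ _ => le_rfl) (fun _ _ => h0) (fun _ _ => hle b hbI)
      exact (norm_add₃_le).trans ((add_le_add (add_le_add p1 p2) p3).trans_eq (by ring)))
    (fun j => by
      rw [hpieces (fun y z => (y : ℂ) * z) _ (hcw _)]
      have p1 := norm_integral_deriv_mul_eR_sub_add_le (L := L) (j := j) hAa
        (fun x _ => hlin (f a) (f1 a) a x) (fun x _ => hasDerivAt_const x _) continuousOn_const
        (fun _ _ => le_rfl) (fun _ _ => hge a haI) (fun _ _ => hL)
      have p2 := norm_integral_deriv_mul_eR_sub_add_le (L := L) (j := j) hab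
        (fun x _ => hf x) (fun x _ => hf1 x) hc2 hneg hge hle
      have p3 := norm_integral_deriv_mul_eR_sub_add_le (L := L) (j := j) hbB
        (fun x _ => hlin (f b) (f1 b) b x) (fun x _ => hasDerivAt_const x _) continuousOn_const
        (fun _ _ => le_rfl) (fun _ _ => h0) (fun _ _ => hle b hbI)
      exact (norm_add₃_le).trans ((add_le_add (add_le_add p1 p2) p3).trans_eq (by ring)))
  have hJ : ∑ ν ∈ Finset.Icc (0 : ℤ) L, ∫ x in (⌊a⌋ : ℝ)..(⌊a⌋ + m : ℤ), eR (g x - ν * x) =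
      ∑ ν ∈ Finset.range (L + 1),
      ((∫ x in (⌊a⌋ : ℝ)..a, eR (f a + f1 a * (x - a) - ν * x)) +
        (∫ x in a..b, eR (f x - ν * x)) +
        ∫ x in b..⌈b⌉, eR (f b + f1 b * (x - b) - ν * x)) := by
    rw [sum_Icc_zero_natCast]
    refine Finset.sum_congr rfl fun ν _ => ?_
    rw [hpieces (fun _ z => z) _ (hce _)]
    simp only [Int.cast_natCast]
  rw [hJ] at key
  have hdiff : ‖∑ n ∈ Finset.Icc ⌈a⌉ ⌊b⌋, eR (f n) -
      ∑ n ∈ Finset.Icc ⌊a⌋ (⌊a⌋ + m), eR (g n)‖ ≤ 2 := by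
    have hsub : Finset.Icc ⌈a⌉ ⌊b⌋ ⊆ Finset.Icc ⌊a⌋ (⌊a⌋ + m) := by
      rw [← hm]
      exact Finset.Icc_subset_Icc (Int.floor_le_ceil a) (Int.floor_le_ceil b)
    have hcongr : ∑ n ∈ Finset.Icc ⌈a⌉ ⌊b⌋, eR (f n) = ∑ n ∈ Finset.Icc ⌈a⌉ ⌊b⌋, eR (g n) :=
      Finset.sum_congr rfl fun n hn => by
        rw [Finset.mem_Icc] at hn
        rw [(hmid n ⟨Int.ceil_le.1 hn.1, Int.le_floor.1 hn.2⟩).1]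
    rw [hcongr, ← Finset.sum_sdiff hsub, sub_add_cancel_right, norm_neg]
    refine (norm_sum_le _ _).trans ?_
    simp only [norm_eR, Finset.sum_const, nsmul_eq_mul, mul_one]
    have hcard : (Finset.Icc ⌊a⌋ (⌊a⌋ + m) \ Finset.Icc ⌈a⌉ ⌊b⌋).card ≤
        ({⌊a⌋, ⌈b⌉} : Finset ℤ).card := Finset.card_le_card fun n hn => by
      simp only [Finset.mem_sdiff, Finset.mem_Icc, Finset.mem_insert,
        Finset.mem_singleton] at hn ⊢
      have h1 := Int.ceil_le_floor_add_one a
      have h2 := Int.ceil_le_floor_add_one b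
      omega
    exact_mod_cast hcard.trans Finset.card_le_two
  have := norm_sub_le_norm_sub_add_norm_sub (∑ n ∈ Finset.Icc ⌈a⌉ ⌊b⌋, eR (f n))
    (∑ n ∈ Finset.Icc ⌊a⌋ (⌊a⌋ + m), eR (g n)) (∑ ν ∈ Finset.range (L + 1),
      ((∫ x in (⌊a⌋ : ℝ)..a, eR (f a + f1 a * (x - a) - ν * x)) +
        (∫ x in a..b, eR (f x - ν * x)) +
        ∫ x in b..⌈b⌉, eR (f b + f1 b * (x - b) - ν * x)))
  linarith

end ConcavePhase

section Core

lemma one_le_two_mul_log_add_two {X : ℝ} (hX : 0 ≤ X) : 1 ≤ 2 * Real.log (X + 2) := by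
  have := Real.log_two_gt_d9
  have := Real.log_le_log two_pos (by linarith : (2 : ℝ) ≤ X + 2)
  linarith

lemma frequency_error_le {K k ℓ s t l : ℝ} (hK : 1 ≤ K) (hk : 0 ≤ k) (hℓ : 1 ≤ 2 * ℓ) (hs : 0 ≤ s)
    (ht : t ≤ K + 3 * s) (hl : 1 + l ≤ (2 + 2 * k + 1) * ℓ) :
    t + 2 * (2 * (1 + l) + 2 * (1 + s)) ≤ (2 * K + 3 + 4 * (2 + 2 * k + 1) + 12) * (ℓ + s) ∧
      8 * (1 + l) + 2 ≤ (8 * (2 + 2 * k + 1) + 4) * (ℓ + s) := by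
  have h1 : 0 ≤ K * (2 * ℓ - 1) := mul_nonneg (by linarith) (by linarith)
  have h2 : 0 ≤ K * s := mul_nonneg (by linarith) hs
  have h3 : 0 ≤ k * s := mul_nonneg hk hs
  constructor <;> linarith

/-- The B-process when the smallest derivative lies in `[0, 1)`. -/
lemma exists_norm_sum_eR_sub_sum_stationary_le (κ K : ℝ) (hκ : 0 < κ) (hK : 1 ≤ K) :
    ∃ C : ℝ, 0 < C ∧ ∀ (a b F N : ℝ) (f f1 f2 f3 f4 xν : ℝ → ℝ), 1 ≤ F → 0 < N → a ≤ b →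
    b - a ≤ N →
    (∀ x, HasDerivAt f (f1 x) x) → (∀ x, HasDerivAt f1 (f2 x) x) →
    (∀ x, HasDerivAt f2 (f3 x) x) → (∀ x, HasDerivAt f3 (f4 x) x) →
    (∀ x ∈ Set.Icc a b, κ * (F / N ^ 2) ≤ -f2 x) →
    (∀ x ∈ Set.Icc a b, -f2 x ≤ K * (F / N ^ 2)) →
    (∀ x ∈ Set.Icc a b, |f3 x| ≤ K * (F / N ^ 3)) →
    (∀ x ∈ Set.Icc a b, |f4 x| ≤ K * (F / N ^ 4)) →
    0 ≤ f1 b → f1 b < 1 →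
    (∀ ν ∈ Set.Icc (f1 b) (f1 a), xν ν ∈ Set.Icc a b ∧ f1 (xν ν) = ν) →
    ‖∑ n ∈ Finset.Icc ⌈a⌉ ⌊b⌋, eR (f n) - ∑ ν ∈ Finset.Icc ⌈f1 b⌉ ⌊f1 a⌋,
      eR (f (xν ν) - ν * xν ν - 1 / 8) / (√(-f2 (xν ν)) : ℝ)‖ ≤
      C * (Real.log (F / N + 2) + N / √F) := by
  obtain ⟨C, hC, hmain⟩ := exists_norm_integral_frequency_le κ K hκ hK
  have hlogK : 0 ≤ Real.log K := Real.log_nonneg hK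
  refine ⟨8 * (2 + 2 * Real.log K + 1) + 4 + (C + 1) *
    (2 * K + 3 + 4 * (2 + 2 * Real.log K + 1) + 12), by positivity, ?_⟩
  intro a b F N f f1 f2 f3 f4 xν hF1 hN hab hba hf hf1 hf2 hf3 hlow hup hb3 hb4 hα0 hα1 hxν
  have hF : 0 < F := by linarith
  have hsF : 1 ≤ √F := Real.one_le_sqrt.2 hF1
  have hneg : ∀ x ∈ Set.Icc a b, f2 x ≤ 0 := fun x hx => by
    have : 0 < κ * (F / N ^ 2) := by positivity
    linarith [hlow x hx]
  have hanti := antitoneOn_of_hasDerivAt_nonpos hf1 hneg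
  have hαβ : f1 b ≤ f1 a := hanti (Set.left_mem_Icc.2 hab) (Set.right_mem_Icc.2 hab) hab
  have hβ0 : 0 ≤ f1 a := hα0.trans hαβ
  set L : ℕ := ⌊f1 a⌋₊ + 1 with hLdef
  have hβL : f1 a < L := by rw [hLdef]; push_cast; exact Nat.lt_floor_add_one _
  have hLβ : (L : ℝ) ≤ f1 a + 1 := by
    rw [hLdef]; push_cast; linarith [Nat.floor_le hβ0]
  set X := F / N with hX
  have hX0 : 0 < X := by positivity
  have hLX : (L : ℝ) ≤ K * X + 2 := by
    have h := (convex_Icc a b).mul_sub_le_image_sub_of_le_deriv (f := f1) (C := -(K * (F / N ^ 2)))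
      (fun y _ => (hf1 y).continuousAt.continuousWithinAt)
      (fun y _ => (hf1 y).differentiableAt.differentiableWithinAt)
      (fun y hy => by rw [(hf1 y).deriv]; linarith [hup y (interior_subset hy)])
      a (Set.left_mem_Icc.2 hab) b (Set.right_mem_Icc.2 hab) hab
    have h2 : K * (F / N ^ 2) * (b - a) ≤ K * (F / N ^ 2) * N :=
      mul_le_mul_of_nonneg_left hba (by positivity)
    have e : K * (F / N ^ 2) * N = K * X := by rw [hX]; field_simp
    linarith
  set W := 1 + N / √F with hWdef
  have hNs : 0 < N / √F := by positivity
  have hW : 0 ≤ W := by positivity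
  set w := freqWeight W with hw
  set T : ℝ → ℂ := fun ν => eR (f (xν ν) - ν * xν ν - 1 / 8) / (√(-f2 (xν ν)) : ℝ) with hT
  set S : ℤ → ℂ := fun ν => if f1 b ≤ ν ∧ (ν : ℝ) ≤ f1 a then T ν else 0 with hS
  have hterm : ∀ ν ∈ Finset.range (L + 1),
      ‖((∫ x in (⌊a⌋ : ℝ)..a, eR (f a + f1 a * (x - a) - ν * x)) +
        (∫ x in a..b, eR (f x - ν * x)) +
        ∫ x in b..⌈b⌉, eR (f b + f1 b * (x - b) - ν * x)) - S ν‖ ≤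
      (C + 1) * (N / F + w ν + w (L - ν)) := fun ν hν => by
    have hνL : ν ≤ L := Nat.lt_succ_iff.1 (Finset.mem_range.1 hν)
    have hsub : ((L - ν : ℕ) : ℝ) = L - ν := by push_cast [hνL]; ring
    obtain ⟨hst, hnon⟩ := hmain a b F N f f1 f2 f3 f4 hF hN hab hba hf hf1 hf2 hf3 hlow hup hb3 hb4
      hα1 L ν hLβ hνL
    have hM : ‖(∫ x in a..b, eR (f x - ν * x)) - S ν‖ ≤ C * (N / F + w ν + w (L - ν)) := by
      rw [hS]
      simp only [Int.cast_natCast]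
      split_ifs with h
      · obtain ⟨h1, h2⟩ := hxν ν h
        exact hst _ h1 h2
      · rw [sub_zero]
        refine hnon ?_
        by_contra hcon
        push Not at hcon
        exact h hcon
    have hP : ‖∫ x in (⌊a⌋ : ℝ)..a, eR (f a + f1 a * (x - a) - ν * x)‖ ≤ w (L - ν) := by
      refine norm_integral_eR_linear_le (Int.floor_le a) (Int.lt_floor_add_one a).le ?_
      rcases Nat.lt_or_ge 1 (L - ν) with h | h
      · have h' : (2 : ℝ) ≤ (L - ν : ℕ) := by exact_mod_cast h
        refine Or.inr ⟨by linarith, ?_⟩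
        rw [abs_of_pos (by linarith)]
        exact one_div_le_freqWeight h (by linarith)
      · exact Or.inl (le_trans (by linarith) (le_freqWeight h))
    have hQ : ‖∫ x in b..⌈b⌉, eR (f b + f1 b * (x - b) - ν * x)‖ ≤ w ν := by
      refine norm_integral_eR_linear_le (Int.le_ceil b) (Int.ceil_lt_add_one b).le ?_
      rcases Nat.lt_or_ge 1 ν with h | h
      · have h' : (2 : ℝ) ≤ ν := by exact_mod_cast h
        refine Or.inr ⟨by linarith, ?_⟩
        rw [abs_of_neg (by linarith)]
        exact one_div_le_freqWeight h (by linarith)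
      · exact Or.inl (le_trans (by linarith) (le_freqWeight h))
    have hX' : 0 < N / F := by positivity
    rw [show ∀ p q r s : ℂ, p + q + r - s = p + (q - s) + r by intros; ring]
    refine norm_add₃_le.trans ((add_le_add (add_le_add hP hM) hQ).trans ?_)
    linarith
  have hsumS : ∑ ν ∈ Finset.range (L + 1), S ν =
      ∑ ν ∈ Finset.Icc ⌈f1 b⌉ ⌊f1 a⌋, T ν := by
    rw [← sum_Icc_zero_natCast S L]
    have hfl : ((L : ℤ)) = ⌊f1 a⌋ + 1 := by
      rw [hLdef]; push_cast; rw [Int.natCast_floor_eq_floor hβ0]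
    have hce : 0 ≤ ⌈f1 b⌉ := Int.ceil_nonneg hα0
    rw [← Finset.sum_subset (s₁ := Finset.Icc ⌈f1 b⌉ ⌊f1 a⌋)
      (Finset.Icc_subset_Icc hce (by omega))]
    · refine Finset.sum_congr rfl fun ν hν => ?_
      rw [Finset.mem_Icc] at hν
      rw [hS]
      exact if_pos ⟨Int.ceil_le.1 hν.1, Int.le_floor.1 hν.2⟩
    · intro ν _ hν
      rw [hS]
      refine if_neg fun h => hν (Finset.mem_Icc.2 ⟨Int.ceil_le.2 h.1, Int.le_floor.2 h.2⟩)
  have hmainsum := norm_sum_eR_sub_sum_tangent_integral_le hab hf hf1 hf2 hneg hα0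
    (L := L) (by omega) hβL.le
  set Z := ∑ ν ∈ Finset.range (L + 1),
      ((∫ x in (⌊a⌋ : ℝ)..a, eR (f a + f1 a * (x - a) - ν * x)) +
        (∫ x in a..b, eR (f x - ν * x)) +
        ∫ x in b..⌈b⌉, eR (f b + f1 b * (x - b) - ν * x)) with hZ
  have herr : ‖Z - ∑ ν ∈ Finset.Icc ⌈f1 b⌉ ⌊f1 a⌋, T ν‖ ≤
      (C + 1) * ((L + 1) * (N / F) + 2 * (2 * (1 + Real.log L) + 2 * W)) := by
    rw [← hsumS, hZ, ← Finset.sum_sub_distrib]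
    refine (norm_sum_le _ _).trans ((Finset.sum_le_sum hterm).trans ?_)
    rw [← Finset.mul_sum]
    refine mul_le_mul_of_nonneg_left ?_ (by linarith)
    rw [Finset.sum_add_distrib, Finset.sum_add_distrib, Finset.sum_const, Finset.card_range,
      nsmul_eq_mul]
    have hrefl := Finset.sum_range_reflect w (L + 1)
    simp only [Nat.add_sub_cancel] at hrefl
    rw [hrefl]
    have := sum_range_freqWeight_le hW L
    push_cast
    linarith
  have htri := norm_sub_le_norm_sub_add_norm_sub (∑ n ∈ Finset.Icc ⌈a⌉ ⌊b⌋, eR (f n)) Z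
    (∑ ν ∈ Finset.Icc ⌈f1 b⌉ ⌊f1 a⌋, T ν)
  have hlogX := one_le_two_mul_log_add_two hX0.le
  set ℓ := Real.log (X + 2) with hℓ
  have hlogL : Real.log L ≤ Real.log K + ℓ := by
    rw [hℓ, ← Real.log_mul (by linarith) (by linarith)]
    exact Real.log_le_log (by rw [hLdef]; positivity) (by nlinarith)
  have hlogL' : 1 + Real.log L ≤ (2 + 2 * Real.log K + 1) * ℓ := by nlinarith
  have hNF : N / F ≤ N / √F := by
    refine div_le_div_of_nonneg_left hN.le (by linarith) ?_
    nlinarith [Real.mul_self_sqrt hF.le]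
  have hLN : (L + 1) * (N / F) ≤ K + 3 * (N / √F) := by
    have h1 : (L + 1) * (N / F) ≤ (K * X + 3) * (N / F) :=
      mul_le_mul_of_nonneg_right (by linarith) (by positivity)
    have h2 : X * (N / F) = 1 := by rw [hX]; field_simp
    nlinarith
  have hℓ0 : 0 ≤ ℓ := by linarith
  obtain ⟨hfinal, h8⟩ := frequency_error_le hK hlogK hlogX hNs.le hLN hlogL'
  have h9 := mul_le_mul_of_nonneg_left hfinal (by linarith : 0 ≤ C + 1)
  refine (htri.trans (add_le_add (hmainsum.trans h8) (herr.trans h9))).trans_eq ?_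
  ring

end Core

section General

lemma card_Icc_ceil_floor_le {a b : ℝ} (hab : a ≤ b) :
    ((Finset.Icc ⌈a⌉ ⌊b⌋).card : ℝ) ≤ b - a + 1 := by
  rw [Int.card_Icc]
  have h1 := Int.le_ceil a
  have h2 := Int.floor_le b
  rcases le_total 0 (⌊b⌋ + 1 - ⌈a⌉) with h | h
  · rw [← Int.cast_natCast, Int.toNat_of_nonneg h]
    push_cast; linarith
  · rw [Int.toNat_of_nonpos h]
    push_cast; linarith

/-- The trivial bound, for small `F`. -/
lemma norm_sum_eR_sub_sum_stationary_le_of_lt_one {κ K a b F N : ℝ} {f f1 f2 xν : ℝ → ℝ}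
    (hκ : 0 < κ) (hK : 1 ≤ K) (hF : 0 < F) (hF1 : F < 1) (hN : 1 ≤ N) (hab : a ≤ b)
    (hba : b - a ≤ N) (hf1 : ∀ x, HasDerivAt f1 (f2 x) x)
    (hlow : ∀ x ∈ Set.Icc a b, κ * (F / N ^ 2) ≤ -f2 x)
    (hup : ∀ x ∈ Set.Icc a b, -f2 x ≤ K * (F / N ^ 2))
    (hxν : ∀ ν ∈ Set.Icc (f1 b) (f1 a), xν ν ∈ Set.Icc a b ∧ f1 (xν ν) = ν) :
    ‖∑ n ∈ Finset.Icc ⌈a⌉ ⌊b⌋, eR (f n) - ∑ ν ∈ Finset.Icc ⌈f1 b⌉ ⌊f1 a⌋,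
      eR (f (xν ν) - ν * xν ν - 1 / 8) / (√(-f2 (xν ν)) : ℝ)‖ ≤
      (2 + (K + 1) / √κ) * (N / √F) := by
  have hN0 : 0 < N := by linarith
  have hsF : 0 < √F := Real.sqrt_pos.2 hF
  have hsκ : 0 < √κ := Real.sqrt_pos.2 hκ
  have hμ : 0 < κ * (F / N ^ 2) := by positivity
  have hanti := antitoneOn_of_hasDerivAt_nonpos hf1 (a := a) (b := b)
    (fun x hx => by linarith [hlow x hx])
  have haI := Set.left_mem_Icc.2 hab
  have hbI := Set.right_mem_Icc.2 hab
  have hαβ : f1 b ≤ f1 a := hanti haI hbI hab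
  have hNs : N ≤ N / √F := by
    rw [le_div_iff₀ hsF]
    have : √F ≤ 1 := Real.sqrt_le_one.2 hF1.le
    nlinarith
  have hlen : f1 a - f1 b ≤ K := by
    have h := (convex_Icc a b).mul_sub_le_image_sub_of_le_deriv (f := f1) (C := -(K * (F / N ^ 2)))
      (fun y _ => (hf1 y).continuousAt.continuousWithinAt)
      (fun y _ => (hf1 y).differentiableAt.differentiableWithinAt)
      (fun y hy => by rw [(hf1 y).deriv]; linarith [hup y (interior_subset hy)])
      a haI b hbI hab
    have h2 : K * (F / N ^ 2) * (b - a) ≤ K * (F / N ^ 2) * N :=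
      mul_le_mul_of_nonneg_left hba (by positivity)
    have e : K * (F / N ^ 2) * N = K * (F / N) := by field_simp
    have h3 : F / N ≤ 1 := (div_le_one hN0).2 (by linarith)
    nlinarith
  have h1 : ‖∑ n ∈ Finset.Icc ⌈a⌉ ⌊b⌋, eR (f n)‖ ≤ 2 * (N / √F) := by
    refine (norm_sum_le _ _).trans ?_
    simp only [norm_eR, Finset.sum_const, nsmul_eq_mul, mul_one]
    linarith [card_Icc_ceil_floor_le hab]
  have h2 : ‖∑ ν ∈ Finset.Icc ⌈f1 b⌉ ⌊f1 a⌋,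
      eR (f (xν ν) - ν * xν ν - 1 / 8) / (√(-f2 (xν ν)) : ℝ)‖ ≤
      (K + 1) / √κ * (N / √F) := by
    have hterm : ∀ ν ∈ Finset.Icc ⌈f1 b⌉ ⌊f1 a⌋,
        ‖eR (f (xν ν) - ν * xν ν - 1 / 8) / (√(-f2 (xν ν)) : ℝ)‖ ≤ 1 / √κ * (N / √F) := by
      intro ν hν
      rw [Finset.mem_Icc] at hν
      have hx := (hxν ν ⟨Int.ceil_le.1 hν.1, Int.le_floor.1 hν.2⟩).1
      rw [norm_div, norm_eR, Complex.norm_real, Real.norm_of_nonneg (Real.sqrt_nonneg _)]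
      have hs : 1 / √κ * (N / √F) = 1 / √(κ * (F / N ^ 2)) := by
        rw [Real.sqrt_mul hκ.le, Real.sqrt_div hF.le, Real.sqrt_sq hN0.le]
        field_simp
      rw [hs]
      exact one_div_le_one_div_of_le (Real.sqrt_pos.2 hμ) (Real.sqrt_le_sqrt (hlow _ hx))
    refine (norm_sum_le _ _).trans ((Finset.sum_le_sum hterm).trans ?_)
    rw [Finset.sum_const, nsmul_eq_mul]
    refine (mul_le_mul_of_nonneg_right ((card_Icc_ceil_floor_le hαβ).trans
      (by linarith : f1 a - f1 b + 1 ≤ K + 1)) (by positivity)).trans_eq ?_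
    ring
  refine (norm_sub_le _ _).trans ((add_le_add h1 h2).trans_eq ?_)
  ring

/-- The B-process for a globally defined phase. -/
lemma exists_norm_sum_eR_sub_sum_stationary_le_of_hasDerivAt (κ K : ℝ) (hκ : 0 < κ) (hK : 1 ≤ K) :
    ∃ C : ℝ, 0 < C ∧ ∀ (a b F N : ℝ) (f f1 f2 f3 f4 xν : ℝ → ℝ), 0 < F → 1 ≤ N → a ≤ b →
    b - a ≤ N →
    (∀ x, HasDerivAt f (f1 x) x) → (∀ x, HasDerivAt f1 (f2 x) x) →
    (∀ x, HasDerivAt f2 (f3 x) x) → (∀ x, HasDerivAt f3 (f4 x) x) →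
    (∀ x ∈ Set.Icc a b, κ * (F / N ^ 2) ≤ -f2 x) →
    (∀ x ∈ Set.Icc a b, -f2 x ≤ K * (F / N ^ 2)) →
    (∀ x ∈ Set.Icc a b, |f3 x| ≤ K * (F / N ^ 3)) →
    (∀ x ∈ Set.Icc a b, |f4 x| ≤ K * (F / N ^ 4)) →
    (∀ ν ∈ Set.Icc (f1 b) (f1 a), xν ν ∈ Set.Icc a b ∧ f1 (xν ν) = ν) →
    ‖∑ n ∈ Finset.Icc ⌈a⌉ ⌊b⌋, eR (f n) - ∑ ν ∈ Finset.Icc ⌈f1 b⌉ ⌊f1 a⌋,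
      eR (f (xν ν) - ν * xν ν - 1 / 8) / (√(-f2 (xν ν)) : ℝ)‖ ≤
      C * (Real.log (F / N + 2) + N / √F) := by
  obtain ⟨C, hC, hmain⟩ := exists_norm_sum_eR_sub_sum_stationary_le κ K hκ hK
  refine ⟨C + (2 + (K + 1) / √κ), by positivity, ?_⟩
  intro a b F N f f1 f2 f3 f4 xν hF hN hab hba hf hf1 hf2 hf3 hlow hup hb3 hb4 hxν
  have hN0 : 0 < N := by linarith
  have hlog : 0 ≤ Real.log (F / N + 2) := Real.log_nonneg (by
    have : 0 < F / N := by positivity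
    linarith)
  have hNs : 0 ≤ N / √F := by positivity
  have hC2 : 0 ≤ 2 + (K + 1) / √κ := by positivity
  rcases lt_or_ge F 1 with hF1 | hF1
  · refine (norm_sum_eR_sub_sum_stationary_le_of_lt_one hκ hK hF hF1 hN hab hba hf1 hlow hup
      hxν).trans ?_
    exact mul_le_mul (by linarith) (by linarith) hNs (by linarith)
  · set k : ℤ := ⌊f1 b⌋ with hk
    have h := hmain a b F N (fun x => f x - k * x) (fun x => f1 x - k) f2 f3 f4
      (fun ν => xν (ν + k)) hF1 hN0 hab hba (fun x => (hf x).sub_const_mul_self k)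
      (fun x => (hf1 x).sub_const _) hf2 hf3 hlow hup hb3 hb4
      (sub_nonneg.2 (Int.floor_le _)) (by linarith [Int.lt_floor_add_one (f1 b)])
      (fun ν hν => by
        have := hxν (ν + k) ⟨by linarith [hν.1], by linarith [hν.2]⟩
        exact ⟨this.1, by linarith [this.2]⟩)
    have e1 : ∑ n ∈ Finset.Icc ⌈a⌉ ⌊b⌋, eR (f n - k * n) =
        ∑ n ∈ Finset.Icc ⌈a⌉ ⌊b⌋, eR (f n) := Finset.sum_congr rfl fun n _ => by
      rw [show f n - (k : ℝ) * n = f n + ((-(k * n) : ℤ) : ℝ) by push_cast; ring, eR_add,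
        eR_intCast, mul_one]
    have e2 : ∑ ν ∈ Finset.Icc ⌈f1 b - k⌉ ⌊f1 a - k⌋,
        eR (f (xν (ν + k)) - k * xν (ν + k) - ν * xν (ν + k) - 1 / 8) /
          (√(-f2 (xν (ν + k))) : ℝ) =
        ∑ ν ∈ Finset.Icc ⌈f1 b⌉ ⌊f1 a⌋,
          eR (f (xν ν) - ν * xν ν - 1 / 8) / (√(-f2 (xν ν)) : ℝ) := by
      rw [Int.ceil_sub_intCast, Int.floor_sub_intCast]
      refine Finset.sum_nbij' (fun ν => ν + k) (fun ν => ν - k)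
        (fun ν hν => by rw [Finset.mem_Icc] at *; omega)
        (fun ν hν => by rw [Finset.mem_Icc] at *; omega)
        (fun ν _ => add_sub_cancel_right ν k) (fun ν _ => sub_add_cancel ν k) fun ν _ => ?_
      push_cast
      congr 2
      ring
    rw [e1, e2] at h
    exact h.trans (mul_le_mul_of_nonneg_right (by linarith) (by linarith))

end General

/-- The B-process (truncated Poisson summation / stationary phase):
`Σ_{a ≤ n ≤ b} e(f(n)) = Σ_{f'(b) ≤ ν ≤ f'(a)} e(-φ(ν) - 1/8)/|f''(x_ν)|^{1/2}
 + O(log(F N⁻¹ + 2) + F^{-1/2} N)`, where `f'(x_ν) = ν` and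
`φ(ν) = -f(x_ν) + ν x_ν`. -/
theorem b_process
    (c₁ c₂ c₃ c₄ : ℝ) (hc₁ : 0 < c₁) (hc₂ : 0 < c₂) (hc₃ : 0 < c₃) (hc₄ : 0 < c₄) :
    ∃ C : ℝ, 0 < C ∧ ∀ (a b N F : ℝ) (f xν : ℝ → ℝ),
      1 ≤ N → a ≤ b → Set.Icc a b ⊆ Set.Icc N (2 * N) → 0 < F →
      ContDiffOn ℝ 4 f (Set.Icc a b) →
      (∀ x ∈ Set.Icc a b, iteratedDerivWithin 2 f (Set.Icc a b) x < 0) →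
      (∀ x ∈ Set.Icc a b,
        c₁ * (F * N ^ (-2 : ℝ)) ≤ |iteratedDerivWithin 2 f (Set.Icc a b) x| ∧
        |iteratedDerivWithin 2 f (Set.Icc a b) x| ≤ c₂ * (F * N ^ (-2 : ℝ)) ∧
        |iteratedDerivWithin 3 f (Set.Icc a b) x| ≤ c₃ * (F * N ^ (-3 : ℝ)) ∧
        |iteratedDerivWithin 4 f (Set.Icc a b) x| ≤ c₄ * (F * N ^ (-4 : ℝ))) →
      (∀ ν : ℝ,
        ν ∈ Set.Icc (derivWithin f (Set.Icc a b) b) (derivWithin f (Set.Icc a b) a) →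
        xν ν ∈ Set.Icc a b ∧ derivWithin f (Set.Icc a b) (xν ν) = ν) →
      ‖(∑ n ∈ Finset.Icc ⌈a⌉ ⌊b⌋, eR (f n)) -
          ∑ ν ∈ Finset.Icc ⌈derivWithin f (Set.Icc a b) b⌉
              ⌊derivWithin f (Set.Icc a b) a⌋,
            eR (-(-(f (xν ν)) + (ν : ℝ) * xν ν) - 1 / 8) /
              (Real.sqrt |iteratedDerivWithin 2 f (Set.Icc a b) (xν ν)| : ℝ)‖ ≤
        C * (Real.log (F * N⁻¹ + 2) + N / Real.sqrt F) := by
  set K := max 1 (max c₂ (max c₃ c₄)) with hK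
  have hK1 : 1 ≤ K := le_max_left _ _
  have hK2 : c₂ ≤ K := (le_max_left _ _).trans (le_max_right _ _)
  have hK3 : c₃ ≤ K :=
    (le_max_left _ _).trans ((le_max_right _ _).trans (le_max_right _ _))
  have hK4 : c₄ ≤ K :=
    (le_max_right _ _).trans ((le_max_right _ _).trans (le_max_right _ _))
  obtain ⟨C, hC, hmain⟩ := exists_norm_sum_eR_sub_sum_stationary_le_of_hasDerivAt c₁ K hc₁ hK1
  refine ⟨C, hC, ?_⟩
  intro a b N F f xν hN hab hsub hF hf hneg hbd hxν
  have hN0 : 0 < N := by linarith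
  rcases hab.eq_or_lt with rfl | hlt
  · have h := hneg a (Set.left_mem_Icc.2 le_rfl)
    rw [iteratedDerivWithin_succ, Set.Icc_self, derivWithin_zero_of_not_accPt] at h
    · exact absurd h (lt_irrefl 0)
    · simp [AccPt, nhdsWithin, inf_assoc, -principal_singleton]
  obtain ⟨g, g1, g2, g3, g4, hg, hg1, hg2, hg3, heq⟩ := exists_extension_of_contDiffOn_four hlt hf
  have haI := Set.left_mem_Icc.2 hab
  have hbI := Set.right_mem_Icc.2 hab
  have hba : b - a ≤ N := by linarith [(hsub haI).1, (hsub hbI).2]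
  have hpow : ∀ m : ℕ, F * N ^ (-(m : ℝ)) = F / N ^ m := fun m => by
    rw [Real.rpow_neg hN0.le, Real.rpow_natCast, div_eq_mul_inv]
  have hp2 := hpow 2
  have hp3 := hpow 3
  have hp4 := hpow 4
  push_cast at hp2 hp3 hp4
  have habs : ∀ x ∈ Set.Icc a b, |iteratedDerivWithin 2 f (Set.Icc a b) x| = -g2 x := fun x hx => by
    rw [abs_of_neg (hneg x hx), (heq x hx).2.2.1]
  have hscale : ∀ (c : ℝ) (m : ℕ), c ≤ K → c * (F / N ^ m) ≤ K * (F / N ^ m) := fun c m h =>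
    mul_le_mul_of_nonneg_right h (by positivity)
  rw [← (heq a haI).2.1, ← (heq b hbI).2.1] at hxν ⊢
  have h := hmain a b F N g g1 g2 g3 g4 xν hF hN hab hba hg hg1 hg2 hg3
    (fun x hx => by
      have := (hbd x hx).1
      rwa [hp2, habs x hx] at this)
    (fun x hx => by
      have := (hbd x hx).2.1
      rw [hp2, habs x hx] at this
      exact this.trans (hscale _ _ hK2))
    (fun x hx => by
      have := (hbd x hx).2.2.1
      rw [hp3, ← (heq x hx).2.2.2.1] at this
      exact this.trans (hscale _ _ hK3))
    (fun x hx => by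
      have := (hbd x hx).2.2.2
      rw [hp4, ← (heq x hx).2.2.2.2] at this
      exact this.trans (hscale _ _ hK4))
    (fun ν hν => ⟨(hxν ν hν).1, by rw [(heq _ (hxν ν hν).1).2.1]; exact (hxν ν hν).2⟩)
  have e1 : ∑ n ∈ Finset.Icc ⌈a⌉ ⌊b⌋, eR (f n) = ∑ n ∈ Finset.Icc ⌈a⌉ ⌊b⌋, eR (g n) :=
    Finset.sum_congr rfl fun n hn => by
      rw [Finset.mem_Icc] at hn
      rw [(heq n ⟨Int.ceil_le.1 hn.1, Int.le_floor.1 hn.2⟩).1]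
  have e2 : ∑ ν ∈ Finset.Icc ⌈g1 b⌉ ⌊g1 a⌋, eR (-(-(f (xν ν)) + (ν : ℝ) * xν ν) - 1 / 8) /
        (√|iteratedDerivWithin 2 f (Set.Icc a b) (xν ν)| : ℝ) =
      ∑ ν ∈ Finset.Icc ⌈g1 b⌉ ⌊g1 a⌋,
        eR (g (xν ν) - ν * xν ν - 1 / 8) / (√(-g2 (xν ν)) : ℝ) :=
    Finset.sum_congr rfl fun ν hν => by
      rw [Finset.mem_Icc] at hν
      have hx := (hxν ν ⟨Int.ceil_le.1 hν.1, Int.le_floor.1 hν.2⟩).1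
      rw [habs _ hx, (heq _ hx).1]
      congr 2
      ring
  rw [e1, e2, ← div_eq_mul_inv]
  exact h
end

section
/- (Srinivasan) Let m, n be positive integers, and let A_1, …, A_m, B_1, …, B_n, a_1, …, a_m, b_1, …, b_n be positive real numbers. Define L(H) := Σ_{i=1}^m A_i H^{a_i} + Σ_{j=1}^n B_j H^{−b_j} for H > 0. Then for any real numbers 0 < H_1 ≤ H_2 there exist H with H_1 ≤ H ≤ H_2 and a constant C depending only on m and n such that L(H) ≤ C ( Σ_{i=1}^m A_i H_1^{a_i} + Σ_{j=1}^n B_j H_2^{−b_j} + Σ_{i=1}^m Σ_{j=1}^n (A_i^{b_j} B_j^{a_i})^{1/(a_i + b_j)} ). -/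
open Finset

/-- A common lower bound of `A * H ^ a` and `B * H ^ (-b)` is a lower bound of the value of both
expressions at the point where they agree. -/
lemma le_rpow_mul_rpow_of_le {A B a b H t : ℝ} (hA : 0 < A) (hB : 0 < B) (ha : 0 < a)
    (hb : 0 < b) (hH : 0 < H) (ht : 0 < t) (h₁ : t ≤ A * H ^ a) (h₂ : t ≤ B * H ^ (-b)) :
    t ≤ (A ^ b * B ^ a) ^ (1 / (a + b)) := by
  have hab : 0 < a + b := add_pos ha hb
  rw [one_div, Real.le_rpow_inv_iff_of_pos ht.le (by positivity) hab]
  calc t ^ (a + b) = t ^ b * t ^ a := by rw [add_comm, Real.rpow_add ht]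
    _ ≤ (A * H ^ a) ^ b * (B * H ^ (-b)) ^ a := by gcongr
    _ = A ^ b * B ^ a * (H ^ (a * b) * H ^ (-b * a)) := by
      rw [Real.mul_rpow hA.le (by positivity), Real.mul_rpow hB.le (by positivity),
        ← Real.rpow_mul hH.le, ← Real.rpow_mul hH.le]
      ring
    _ = A ^ b * B ^ a := by
      rw [← Real.rpow_add hH, show a * b + -b * a = 0 by ring, Real.rpow_zero, mul_one]

/-- Some term of a sum over `range k` is at least the average. -/
lemma exists_sum_div_le {k : ℕ} (hk : 0 < k) (f : ℕ → ℝ) :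
    ∃ i ∈ range k, (∑ i ∈ range k, f i) / k ≤ f i := by
  apply exists_le_of_sum_le (nonempty_range_iff.2 hk.ne')
  rw [sum_const, card_range, nsmul_eq_mul]
  have : (k : ℝ) ≠ 0 := by positivity
  exact (mul_div_cancel₀ _ this).le

/-- A sum of powers with fixed exponents is continuous on an interval of positive reals. -/
lemma continuousOn_sum_mul_rpow (k : ℕ) (A a : ℕ → ℝ) {x y : ℝ} (hx : 0 < x) :
    ContinuousOn (fun H : ℝ => ∑ i ∈ range k, A i * H ^ a i) (Set.Icc x y) :=
  continuousOn_finsetSum _ fun _ _ => continuousOn_const.mul <|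
    continuousOn_id.rpow_const fun _ hz => .inl (ne_of_gt (hx.trans_le hz.1))

/-- Srinivasan's optimization lemma: for
`L(H) = Σ_i A_i H^{a_i} + Σ_j B_j H^{-b_j}` with positive data, there is an
`H ∈ [H₁, H₂]` with
`L(H) ≪ Σ_i A_i H₁^{a_i} + Σ_j B_j H₂^{-b_j} + Σ_{i,j} (A_i^{b_j} B_j^{a_i})^{1/(a_i+b_j)}`,
the implied constant depending only on `m` and `n`. -/
theorem srinivasan_optimization (m n : ℕ) (hm : 0 < m) (hn : 0 < n) :
    ∃ C : ℝ, 0 < C ∧ ∀ A B : ℕ → ℝ, ∀ a b : ℕ → ℝ,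
      (∀ i ∈ Finset.range m, 0 < A i ∧ 0 < a i) →
      (∀ j ∈ Finset.range n, 0 < B j ∧ 0 < b j) →
      ∀ H₁ H₂ : ℝ, 0 < H₁ → H₁ ≤ H₂ →
      ∃ H : ℝ, H₁ ≤ H ∧ H ≤ H₂ ∧
        (∑ i ∈ Finset.range m, A i * H ^ (a i)
          + ∑ j ∈ Finset.range n, B j * H ^ (-(b j))) ≤
        C * (∑ i ∈ Finset.range m, A i * H₁ ^ (a i)
          + ∑ j ∈ Finset.range n, B j * H₂ ^ (-(b j))
          + ∑ i ∈ Finset.range m, ∑ j ∈ Finset.range n,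
              ((A i) ^ (b j) * (B j) ^ (a i)) ^ (1 / (a i + b j))) := by
  have hm' : (1 : ℝ) ≤ m := by exact_mod_cast hm
  have hn' : (1 : ℝ) ≤ n := by exact_mod_cast hn
  have hmn : (1 : ℝ) ≤ m * n := one_le_mul_of_one_le_of_one_le hm' hn'
  refine ⟨2 * (m * n), by positivity, fun A B a b hA hB H₁ H₂ hH₁ hH => ?_⟩
  set P : ℝ → ℝ := fun H => ∑ i ∈ range m, A i * H ^ a i
  set Q : ℝ → ℝ := fun H => ∑ j ∈ range n, B j * H ^ (-(b j))
  set R : ℕ → ℕ → ℝ := fun i j => (A i ^ b j * B j ^ a i) ^ (1 / (a i + b j))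
  change ∃ H, H₁ ≤ H ∧ H ≤ H₂ ∧
    P H + Q H ≤ 2 * (m * n) * (P H₁ + Q H₂ + ∑ i ∈ range m, ∑ j ∈ range n, R i j)
  have hH₂ : 0 < H₂ := hH₁.trans_le hH
  have hPpos : ∀ H, 0 < H → 0 < P H := fun H h =>
    sum_pos (fun i hi => mul_pos (hA i hi).1 (Real.rpow_pos_of_pos h _))
      (nonempty_range_iff.2 hm.ne')
  have hQpos : ∀ H, 0 < H → 0 < Q H := fun H h =>
    sum_pos (fun j hj => mul_pos (hB j hj).1 (Real.rpow_pos_of_pos h _))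
      (nonempty_range_iff.2 hn.ne')
  have hRnonneg : ∀ i ∈ range m, ∀ j ∈ range n, 0 ≤ R i j := fun i hi j hj => by
    have := (hA i hi).1
    have := (hB j hj).1
    positivity
  have hSnonneg : 0 ≤ ∑ i ∈ range m, ∑ j ∈ range n, R i j :=
    sum_nonneg fun i hi => sum_nonneg (hRnonneg i hi)
  have hP₁ := hPpos H₁ hH₁
  have hQ₂ := hQpos H₂ hH₂
  rcases le_total (Q H₁) (P H₁) with h₁ | h₁
  · exact ⟨H₁, le_rfl, hH, by nlinarith⟩
  rcases le_total (P H₂) (Q H₂) with h₂ | h₂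
  · exact ⟨H₂, hH, le_rfl, by nlinarith⟩
  obtain ⟨H, hHmem, hHeq⟩ : ∃ H ∈ Set.Icc H₁ H₂, P H - Q H = 0 := by
    have hcont : ContinuousOn (fun H => P H - Q H) (Set.Icc H₁ H₂) :=
      (continuousOn_sum_mul_rpow m A a hH₁).sub
        (continuousOn_sum_mul_rpow n B (fun j => -(b j)) hH₁)
    exact intermediate_value_Icc hH hcont ⟨sub_nonpos.2 h₁, sub_nonneg.2 h₂⟩
  refine ⟨H, hHmem.1, hHmem.2, ?_⟩
  have hHpos : 0 < H := hH₁.trans_le hHmem.1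
  have hPH := hPpos H hHpos
  obtain ⟨i, hi, hPi⟩ := exists_sum_div_le hm fun i => A i * H ^ a i
  obtain ⟨j, hj, hQj⟩ := exists_sum_div_le hn fun j => B j * H ^ (-(b j))
  change P H / m ≤ _ at hPi
  change Q H / n ≤ _ at hQj
  rw [← sub_eq_zero.1 hHeq] at hQj ⊢
  have hle : P H / (m * n) ≤ R i j := by
    refine le_rpow_mul_rpow_of_le (hA i hi).1 (hB j hj).1 (hA i hi).2 (hB j hj).2 hHpos
      (by positivity) (le_trans ?_ hPi) (le_trans ?_ hQj)
    · gcongr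
      exact le_mul_of_one_le_right (by positivity) hn'
    · gcongr
      exact le_mul_of_one_le_left (by positivity) hm'
  have hRle : R i j ≤ ∑ i ∈ range m, ∑ j ∈ range n, R i j :=
    (single_le_sum (hRnonneg i hi) hj).trans
      (single_le_sum (f := fun i => ∑ j ∈ range n, R i j)
        (fun i hi => sum_nonneg (hRnonneg i hi)) hi)
  rw [div_le_iff₀ (by positivity)] at hle
  nlinarith
end

section
/- (Spacing lemma of Fouvry–Iwaniec) Let α, β be real numbers with αβ ≠ 0. There is a constant C depending only on α and β such that for all Δ > 0 and all real M ≥ 1, N ≥ 1, the number 𝔄(M, N; Δ) of quadruples (m, m̃, n, ñ) of positive integers with m ∼ M, m̃ ∼ M, n ∼ N, ñ ∼ N and |(m̃/m)^α − (ñ/n)^β| < Δ satisfies 𝔄(M, N; Δ) ≤ C ( M N log(2MN) + Δ M^2 N^2 ). -/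
open Finset

/-- On `[1/2, 2]` a nonconstant real power expands distances by at least a constant factor. -/
lemma exists_mul_abs_sub_le_abs_rpow_sub (a : ℝ) (ha : a ≠ 0) :
    ∃ c : ℝ, 0 < c ∧ ∀ x ∈ Set.Icc (1 / 2 : ℝ) 2, ∀ y ∈ Set.Icc (1 / 2 : ℝ) 2,
      c * |x - y| ≤ |x ^ a - y ^ a| := by
  have hcont : ContinuousOn (fun x : ℝ => x ^ (a - 1)) (Set.Icc (1 / 2 : ℝ) 2) := by
    intro x hx
    exact (Real.continuousAt_rpow_const x (a - 1)
      (Or.inl (by linarith [hx.1] : 0 < x).ne')).continuousWithinAt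
  obtain ⟨z, hz, hmin⟩ := isCompact_Icc.exists_isMinOn ⟨1, by norm_num⟩ hcont
  have hz0 : 0 < z := by linarith [hz.1]
  refine ⟨|a| * z ^ (a - 1), by positivity, ?_⟩
  have key : ∀ x ∈ Set.Icc (1 / 2 : ℝ) 2, ∀ y ∈ Set.Icc (1 / 2 : ℝ) 2, x < y →
      |a| * z ^ (a - 1) * |x - y| ≤ |x ^ a - y ^ a| := by
    intro x hx y hy hxy
    have hx0 : 0 < x := by linarith [hx.1]
    obtain ⟨w, hw, hslope⟩ := exists_hasDerivAt_eq_slope (fun t : ℝ => t ^ a)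
      (fun t => a * t ^ (a - 1)) hxy
      (fun t ht => (Real.continuousAt_rpow_const t a
        (Or.inl (hx0.trans_le ht.1).ne')).continuousWithinAt)
      (fun t ht => Real.hasDerivAt_rpow_const (Or.inl (hx0.trans ht.1).ne'))
    have hw0 : 0 < w := hx0.trans hw.1
    have hzw : z ^ (a - 1) ≤ w ^ (a - 1) :=
      hmin ⟨hx.1.trans hw.1.le, hw.2.le.trans hy.2⟩
    have hyx : 0 < y - x := sub_pos.2 hxy
    have heq : y ^ a - x ^ a = a * w ^ (a - 1) * (y - x) := by
      rw [hslope]; field_simp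
    rw [abs_sub_comm x y, abs_sub_comm (x ^ a), heq, abs_mul, abs_mul,
      abs_of_pos (Real.rpow_pos_of_pos hw0 _)]
    gcongr
  intro x hx y hy
  rcases lt_trichotomy x y with h | h | h
  · exact key x hx y hy h
  · simp [h]
  · rw [abs_sub_comm x y, abs_sub_comm (x ^ a)]
    exact key y hy x hx h

/-- A family of `s`-separated reals with diameter at most `L` has at most `1 + L / s` members. -/
lemma card_le_one_add_div_of_separated {ι : Type*} (S : Finset ι) (f : ι → ℝ) {s L : ℝ}
    (hs : 0 < s) (hL : 0 ≤ L) (hsep : ∀ i ∈ S, ∀ j ∈ S, i ≠ j → s ≤ |f i - f j|)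
    (hdiam : ∀ i ∈ S, ∀ j ∈ S, |f i - f j| ≤ L) : (S.card : ℝ) ≤ 1 + L / s := by
  rcases S.eq_empty_or_nonempty with rfl | hS
  · simp only [card_empty, Nat.cast_zero]; positivity
  obtain ⟨k, hk, hkmin⟩ := S.exists_min_image f hS
  have hcard : S.card ≤ (range (⌊L / s⌋₊ + 1)).card := by
    refine card_le_card_of_injOn (fun i => ⌊(f i - f k) / s⌋₊) ?_ ?_
    · intro i hi
      simp only [coe_range, Set.mem_Iio, Nat.lt_add_one_iff]
      apply Nat.floor_le_floor
      gcongr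
      exact (le_abs_self _).trans (hdiam i hi k hk)
    · intro i hi j hj hij
      by_contra hne
      have hi' : 0 ≤ (f i - f k) / s := div_nonneg (sub_nonneg.2 (hkmin i hi)) hs.le
      have hj' : 0 ≤ (f j - f k) / s := div_nonneg (sub_nonneg.2 (hkmin j hj)) hs.le
      simp only at hij
      have h1 := Nat.floor_le hi'
      have h2 := Nat.lt_floor_add_one ((f i - f k) / s)
      have h3 := Nat.floor_le hj'
      have h4 := Nat.lt_floor_add_one ((f j - f k) / s)
      rw [hij] at h1 h2
      have h5 : |(f i - f j) / s| < 1 := by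
        have : (f i - f j) / s = (f i - f k) / s - (f j - f k) / s := by ring
        rw [this, abs_lt]
        constructor <;> linarith
      rw [abs_div, abs_of_pos hs, div_lt_one hs] at h5
      exact absurd (hsep i hi j hj hne) (not_le.2 h5)
  rw [card_range] at hcard
  have h : (S.card : ℝ) ≤ (⌊L / s⌋₊ : ℝ) + 1 := by exact_mod_cast hcard
  linarith [Nat.floor_le (div_nonneg hL hs.le)]

/-- Pairs of integers in `(M, 2M]` with greatest common divisor `d`. -/
noncomputable def dyadicPairs (M : ℝ) (d : ℕ) : Finset (ℕ × ℕ) :=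
  (Ioc ⌊M⌋₊ ⌊2 * M⌋₊ ×ˢ Ioc ⌊M⌋₊ ⌊2 * M⌋₊).filter (fun p => Nat.gcd p.1 p.2 = d)

lemma lt_and_le_of_mem_Ioc_floor {M : ℝ} (hM : 0 ≤ M) {m : ℕ}
    (hm : m ∈ Ioc ⌊M⌋₊ ⌊2 * M⌋₊) : M < m ∧ (m : ℝ) ≤ 2 * M := by
  rw [mem_Ioc] at hm
  exact ⟨(Nat.floor_lt hM).1 hm.1, (Nat.le_floor_iff (by positivity)).1 hm.2⟩

lemma bounds_of_mem_dyadicPairs {M : ℝ} (hM : 0 ≤ M) {d : ℕ} {p : ℕ × ℕ}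
    (hp : p ∈ dyadicPairs M d) :
    M < p.1 ∧ (p.1 : ℝ) ≤ 2 * M ∧ M < p.2 ∧ (p.2 : ℝ) ≤ 2 * M ∧ Nat.gcd p.1 p.2 = d := by
  simp only [dyadicPairs, mem_filter, mem_product] at hp
  obtain ⟨⟨h1, h2⟩, h3⟩ := hp
  obtain ⟨h4, h5⟩ := lt_and_le_of_mem_Ioc_floor hM h1
  obtain ⟨h6, h7⟩ := lt_and_le_of_mem_Ioc_floor hM h2
  exact ⟨h4, h5, h6, h7, h3⟩

lemma ratio_mem_Icc_of_mem_dyadicPairs {M : ℝ} (hM : 0 < M) {d : ℕ} {p : ℕ × ℕ}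
    (hp : p ∈ dyadicPairs M d) : (p.2 : ℝ) / p.1 ∈ Set.Icc (1 / 2 : ℝ) 2 := by
  obtain ⟨h1, h2, h3, h4, -⟩ := bounds_of_mem_dyadicPairs hM.le hp
  have h0 : (0 : ℝ) < p.1 := hM.trans h1
  rw [Set.mem_Icc, le_div_iff₀ h0, div_le_iff₀ h0]
  constructor <;> linarith

lemma card_dyadicPairs_le {M : ℝ} (hM : 0 ≤ M) (d : ℕ) :
    ((dyadicPairs M d).card : ℝ) ≤ 4 * (M ^ 2 / (d : ℝ) ^ 2) := by
  have hsub : dyadicPairs M d ⊆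
      (Icc 1 (⌊2 * M⌋₊ / d) ×ˢ Icc 1 (⌊2 * M⌋₊ / d)).image
        (fun p : ℕ × ℕ => (d * p.1, d * p.2)) := by
    rintro ⟨m, n⟩ hp
    simp only [dyadicPairs, mem_filter, mem_product, mem_Ioc] at hp
    obtain ⟨⟨⟨h1, h2⟩, h3, h4⟩, rfl⟩ := hp
    have hm : 0 < m := by omega
    have hn : 0 < n := by omega
    have hg : 0 < Nat.gcd m n := Nat.gcd_pos_of_pos_left _ hm
    simp only [mem_image, mem_product, mem_Icc, Prod.mk.injEq, Prod.exists]
    refine ⟨m / Nat.gcd m n, n / Nat.gcd m n,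
      ⟨⟨?_, Nat.div_le_div_right h2⟩, ?_, Nat.div_le_div_right h4⟩,
      Nat.mul_div_cancel' (Nat.gcd_dvd_left m n), Nat.mul_div_cancel' (Nat.gcd_dvd_right m n)⟩
    · exact Nat.div_pos (Nat.gcd_le_left n hm) hg
    · exact Nat.div_pos (Nat.gcd_le_right m hn) hg
  have hcard := (card_le_card hsub).trans card_image_le
  rw [card_product, Nat.card_Icc, Nat.add_sub_cancel] at hcard
  have hk : ((⌊2 * M⌋₊ / d : ℕ) : ℝ) ≤ 2 * M / d :=
    Nat.cast_div_le.trans (by gcongr; exact Nat.floor_le (by positivity))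
  calc ((dyadicPairs M d).card : ℝ)
      ≤ ((⌊2 * M⌋₊ / d : ℕ) : ℝ) * ((⌊2 * M⌋₊ / d : ℕ) : ℝ) := by exact_mod_cast hcard
    _ ≤ (2 * M / d) * (2 * M / d) := by gcongr
    _ = 4 * (M ^ 2 / (d : ℝ) ^ 2) := by ring

/-- Distinct pairs with the same greatest common divisor `d` have well separated ratios. -/
lemma ratio_separated_of_mem_dyadicPairs {M : ℝ} (hM : 0 < M) {d : ℕ} {p q : ℕ × ℕ}
    (hp : p ∈ dyadicPairs M d) (hq : q ∈ dyadicPairs M d) (hpq : p ≠ q) :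
    (d : ℝ) ^ 2 / (4 * M ^ 2) ≤ |(p.2 : ℝ) / p.1 - (q.2 : ℝ) / q.1| := by
  obtain ⟨a, b⟩ := p
  obtain ⟨a', b'⟩ := q
  obtain ⟨h1, h2, h3, h4, h5⟩ := bounds_of_mem_dyadicPairs hM.le hp
  obtain ⟨k1, k2, k3, k4, k5⟩ := bounds_of_mem_dyadicPairs hM.le hq
  simp only at *
  have ha : (0 : ℝ) < a := hM.trans h1
  have ha' : (0 : ℝ) < a' := hM.trans k1
  have hne : b * a' ≠ b' * a := by
    intro h
    apply hpq
    have haa : a * d = a' * d := by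
      calc a * d = Nat.gcd (a * a') (a * b') := by rw [Nat.gcd_mul_left, k5]
        _ = Nat.gcd (a' * a) (a' * b) := by
          rw [mul_comm a a', mul_comm a b', ← h, mul_comm b a']
        _ = a' * d := by rw [Nat.gcd_mul_left, h5]
    have hapos : 0 < a := by exact_mod_cast ha
    have hd : 0 < d := h5 ▸ Nat.gcd_pos_of_pos_left _ hapos
    have haeq : a = a' := Nat.eq_of_mul_eq_mul_right hd haa
    subst haeq
    rw [Nat.eq_of_mul_eq_mul_right hapos h]
  have hdvd : ((d : ℤ) ^ 2) ∣ (b : ℤ) * a' - b' * a := by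
    have da : (d : ℤ) ∣ a := by exact_mod_cast h5 ▸ Nat.gcd_dvd_left a b
    have db : (d : ℤ) ∣ b := by exact_mod_cast h5 ▸ Nat.gcd_dvd_right a b
    have da' : (d : ℤ) ∣ a' := by exact_mod_cast k5 ▸ Nat.gcd_dvd_left a' b'
    have db' : (d : ℤ) ∣ b' := by exact_mod_cast k5 ▸ Nat.gcd_dvd_right a' b'
    rw [sq]
    exact dvd_sub (mul_dvd_mul db da') (mul_dvd_mul db' da)
  have hle : (d : ℤ) ^ 2 ≤ |(b : ℤ) * a' - b' * a| := by
    refine Int.le_of_dvd (abs_pos.2 (sub_ne_zero.2 ?_)) ((dvd_abs _ _).2 hdvd)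
    exact_mod_cast hne
  have hleR : (d : ℝ) ^ 2 ≤ |(b : ℝ) * a' - b' * a| := by exact_mod_cast hle
  have heq : (b : ℝ) / a - b' / a' = (b * a' - b' * a) / (a * a') := by
    field_simp
  rw [heq, abs_div, abs_of_pos (mul_pos ha ha')]
  refine div_le_div₀ (abs_nonneg _) hleR (mul_pos ha ha') ?_
  calc (a : ℝ) * a' ≤ (2 * M) * (2 * M) := by gcongr
    _ = 4 * M ^ 2 := by ring

lemma exists_card_dyadicPairs_near_le (a : ℝ) (ha : a ≠ 0) :
    ∃ K : ℝ, 0 < K ∧ ∀ M Δ y : ℝ, 0 < M → 0 < Δ → ∀ d : ℕ, 0 < d →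
      (((dyadicPairs M d).filter (fun p => |((p.2 : ℝ) / p.1) ^ a - y| < Δ)).card : ℝ) ≤
        1 + K * Δ * (M ^ 2 / (d : ℝ) ^ 2) := by
  obtain ⟨c, hc, hexp⟩ := exists_mul_abs_sub_le_abs_rpow_sub a ha
  refine ⟨8 / c, by positivity, fun M Δ y hM hΔ d hd => ?_⟩
  have hd' : (0 : ℝ) < d := by exact_mod_cast hd
  have := card_le_one_add_div_of_separated
    ((dyadicPairs M d).filter (fun p => |((p.2 : ℝ) / p.1) ^ a - y| < Δ))
    (fun p => (p.2 : ℝ) / p.1) (s := (d : ℝ) ^ 2 / (4 * M ^ 2)) (L := 2 * Δ / c)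
    (by positivity) (by positivity)
    (fun p hp q hq hpq => ratio_separated_of_mem_dyadicPairs hM (mem_filter.1 hp).1
      (mem_filter.1 hq).1 hpq)
    (fun p hp q hq => by
      rw [mem_filter] at hp hq
      have h := hexp _ (ratio_mem_Icc_of_mem_dyadicPairs hM hp.1) _
        (ratio_mem_Icc_of_mem_dyadicPairs hM hq.1)
      have htri := abs_sub_le (((p.2 : ℝ) / p.1) ^ a) y (((q.2 : ℝ) / q.1) ^ a)
      rw [abs_sub_comm y] at htri
      rw [le_div_iff₀ hc, mul_comm]
      linarith [hp.2, hq.2])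
  refine this.trans (le_of_eq ?_)
  field_simp
  ring

lemma sum_Icc_inv_sq_le_two (n : ℕ) : ∑ d ∈ Icc 1 n, ((d : ℝ) ^ 2)⁻¹ ≤ 2 := by
  have h := sum_Ioo_inv_sq_le (α := ℝ) 0 (n + 1)
  have heq : Ioo 0 (n + 1) = Icc 1 n := by
    ext; simp only [mem_Ioo, mem_Icc]; omega
  rw [heq] at h
  simpa using h

lemma sum_min_sq_le {A B : ℝ} (hA : 0 < A) (hB : 0 < B) (n : ℕ) :
    ∑ e ∈ Icc 1 n, min (A ^ 2) (B ^ 2 / (e : ℝ) ^ 2) ≤ 3 * (A * B) := by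
  set k := ⌊B / A⌋₊ with hk
  have hkle : (k : ℝ) ≤ B / A := Nat.floor_le (by positivity)
  have hklt : B / A < k + 1 := Nat.lt_floor_add_one _
  have hsub : Icc 1 n ⊆ Icc 1 k ∪ Ioo k (n + 1) := by
    intro e he
    simp only [mem_union, mem_Icc, mem_Ioo] at *
    omega
  have hnn : ∀ e : ℕ, 0 ≤ min (A ^ 2) (B ^ 2 / (e : ℝ) ^ 2) := fun e => by positivity
  have hdisj : Disjoint (Icc 1 k) (Ioo k (n + 1)) := by
    rw [disjoint_left]
    intro e he he'
    simp only [mem_Icc, mem_Ioo] at *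
    omega
  calc ∑ e ∈ Icc 1 n, min (A ^ 2) (B ^ 2 / (e : ℝ) ^ 2)
      ≤ ∑ e ∈ Icc 1 k ∪ Ioo k (n + 1), min (A ^ 2) (B ^ 2 / (e : ℝ) ^ 2) :=
        sum_le_sum_of_subset_of_nonneg hsub (fun e _ _ => hnn e)
    _ = ∑ e ∈ Icc 1 k, min (A ^ 2) (B ^ 2 / (e : ℝ) ^ 2) +
        ∑ e ∈ Ioo k (n + 1), min (A ^ 2) (B ^ 2 / (e : ℝ) ^ 2) := sum_union hdisj
    _ ≤ ∑ e ∈ Icc 1 k, A ^ 2 + ∑ e ∈ Ioo k (n + 1), B ^ 2 * ((e : ℝ) ^ 2)⁻¹ := by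
        gcongr
        · exact min_le_left _ _
        · exact min_le_right _ _
    _ = k * A ^ 2 + B ^ 2 * ∑ e ∈ Ioo k (n + 1), ((e : ℝ) ^ 2)⁻¹ := by
        rw [sum_const, Nat.card_Icc, Nat.add_sub_cancel, nsmul_eq_mul, mul_sum]
    _ ≤ B / A * A ^ 2 + B ^ 2 * (2 / (B / A)) := by
        gcongr
        refine (sum_Ioo_inv_sq_le (α := ℝ) k (n + 1)).trans ?_
        gcongr
    _ = 3 * (A * B) := by field_simp; ring

lemma sum_sum_min_sq_le {M N : ℝ} (hM : 1 ≤ M) (hN : 1 ≤ N) (n : ℕ) :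
    ∑ d ∈ Icc 1 ⌊2 * M⌋₊, ∑ e ∈ Icc 1 n,
      min (M ^ 2 / (d : ℝ) ^ 2) (N ^ 2 / (e : ℝ) ^ 2) ≤ 9 * (M * N * Real.log (2 * M * N)) := by
  have hharm : ∑ d ∈ Icc 1 ⌊2 * M⌋₊, (d : ℝ)⁻¹ ≤ 1 + Real.log (2 * M) := by
    have h := harmonic_floor_le_one_add_log (2 * M) (by linarith)
    rw [harmonic_eq_sum_Icc] at h
    push_cast at h
    exact h
  have hlog : Real.log (2 * M) ≤ Real.log (2 * M * N) :=
    Real.log_le_log (by positivity) (by nlinarith)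
  have hlog2 : Real.log 2 ≤ Real.log (2 * M * N) :=
    Real.log_le_log (by norm_num) (by nlinarith [mul_le_mul hM hN zero_le_one (by linarith)])
  have hlog2' := Real.log_two_gt_d9
  calc ∑ d ∈ Icc 1 ⌊2 * M⌋₊, ∑ e ∈ Icc 1 n, min (M ^ 2 / (d : ℝ) ^ 2) (N ^ 2 / (e : ℝ) ^ 2)
      ≤ ∑ d ∈ Icc 1 ⌊2 * M⌋₊, 3 * (M * N) * (d : ℝ)⁻¹ := by
        refine sum_le_sum fun d hd => ?_
        have hd' : (0 : ℝ) < d := by exact_mod_cast (mem_Icc.1 hd).1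
        have h := sum_min_sq_le (A := M / d) (B := N) (by positivity) (by positivity) n
        simp only [div_pow] at h
        refine h.trans (le_of_eq ?_)
        ring
    _ = 3 * (M * N) * ∑ d ∈ Icc 1 ⌊2 * M⌋₊, (d : ℝ)⁻¹ := by rw [mul_sum]
    _ ≤ 3 * (M * N) * (3 * Real.log (2 * M * N)) := by
        gcongr
        linarith
    _ = 9 * (M * N * Real.log (2 * M * N)) := by ring

lemma card_filter_product_le_right {ι κ : Type*} (S : Finset ι) (T : Finset κ)
    (r : ι → κ → Prop) [∀ i j, Decidable (r i j)] {B : ℝ}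
    (h : ∀ j ∈ T, ((S.filter (fun i => r i j)).card : ℝ) ≤ B) :
    (((S ×ˢ T).filter (fun x => r x.1 x.2)).card : ℝ) ≤ T.card * B := by
  rw [card_filter, sum_product_right]
  push_cast
  rw [← nsmul_eq_mul, ← sum_const]
  refine sum_le_sum fun j hj => ?_
  have := h j hj
  rw [card_filter] at this
  push_cast at this
  exact this

lemma card_filter_product_le_left {ι κ : Type*} (S : Finset ι) (T : Finset κ)
    (r : ι → κ → Prop) [∀ i j, Decidable (r i j)] {B : ℝ}
    (h : ∀ i ∈ S, ((T.filter (fun j => r i j)).card : ℝ) ≤ B) :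
    (((S ×ˢ T).filter (fun x => r x.1 x.2)).card : ℝ) ≤ S.card * B := by
  rw [card_filter, sum_product]
  push_cast
  rw [← nsmul_eq_mul, ← sum_const]
  refine sum_le_sum fun i hi => ?_
  have := h i hi
  rw [card_filter] at this
  push_cast at this
  exact this

lemma exists_card_dyadicPairs_product_near_le (α β : ℝ) (hα : α ≠ 0) (hβ : β ≠ 0) :
    ∃ K : ℝ, 0 < K ∧ ∀ Δ M N : ℝ, 0 < Δ → 0 < M → 0 < N → ∀ d e : ℕ, 0 < d → 0 < e →
      (((dyadicPairs M d ×ˢ dyadicPairs N e).filter (fun x =>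
        |((x.1.2 : ℝ) / x.1.1) ^ α - ((x.2.2 : ℝ) / x.2.1) ^ β| < Δ)).card : ℝ) ≤
        4 * min (M ^ 2 / (d : ℝ) ^ 2) (N ^ 2 / (e : ℝ) ^ 2) +
          K * Δ * ((M ^ 2 / (d : ℝ) ^ 2) * (N ^ 2 / (e : ℝ) ^ 2)) := by
  obtain ⟨K₁, hK₁, h₁⟩ := exists_card_dyadicPairs_near_le α hα
  obtain ⟨K₂, hK₂, h₂⟩ := exists_card_dyadicPairs_near_le β hβ
  refine ⟨4 * (K₁ + K₂), by positivity, fun Δ M N hΔ hM hN d e hd he => ?_⟩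
  set X := M ^ 2 / (d : ℝ) ^ 2
  set Y := N ^ 2 / (e : ℝ) ^ 2
  have hX : 0 ≤ X := by positivity
  have hY : 0 ≤ Y := by positivity
  have hright := card_filter_product_le_right (dyadicPairs M d) (dyadicPairs N e)
    (fun p q => |((p.2 : ℝ) / p.1) ^ α - ((q.2 : ℝ) / q.1) ^ β| < Δ)
    (fun q _ => h₁ M Δ (((q.2 : ℝ) / q.1) ^ β) hM hΔ d hd)
  have hleft := card_filter_product_le_left (dyadicPairs M d) (dyadicPairs N e)
    (fun p q => |((p.2 : ℝ) / p.1) ^ α - ((q.2 : ℝ) / q.1) ^ β| < Δ)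
    (fun p _ => by
      simp only [abs_sub_comm (((p.2 : ℝ) / p.1) ^ α)]
      exact h₂ N Δ (((p.2 : ℝ) / p.1) ^ α) hN hΔ e he)
  have hright' := hright.trans
    (mul_le_mul_of_nonneg_right (card_dyadicPairs_le hN.le e) (by positivity))
  have hleft' := hleft.trans
    (mul_le_mul_of_nonneg_right (card_dyadicPairs_le hM.le d) (by positivity))
  have hXY : 0 ≤ Δ * (X * Y) := by positivity
  have e₁ := mul_nonneg hK₁.le hXY
  have e₂ := mul_nonneg hK₂.le hXY
  rcases min_choice X Y with h | h <;> rw [h]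
  · refine hleft'.trans ?_
    linarith
  · refine hright'.trans ?_
    linarith

/-- Spacing lemma of Fouvry–Iwaniec: the number of quadruples
`(m, m̃, n, ñ)` with `m, m̃ ∼ M`, `n, ñ ∼ N` and
`|(m̃/m)^α - (ñ/n)^β| < Δ` is `≪ MN log(2MN) + Δ M²N²`. -/
theorem fouvry_iwaniec_spacing (α β : ℝ) (hαβ : α * β ≠ 0) :
    ∃ C : ℝ, 0 < C ∧ ∀ Δ M N : ℝ, 0 < Δ → 1 ≤ M → 1 ≤ N →
      (((Finset.Ioc ⌊M⌋₊ ⌊2 * M⌋₊ ×ˢ Finset.Ioc ⌊M⌋₊ ⌊2 * M⌋₊ ×ˢ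
          Finset.Ioc ⌊N⌋₊ ⌊2 * N⌋₊ ×ˢ Finset.Ioc ⌊N⌋₊ ⌊2 * N⌋₊).filter
            (fun q : ℕ × ℕ × ℕ × ℕ =>
              |((q.2.1 : ℝ) / (q.1 : ℝ)) ^ α - ((q.2.2.2 : ℝ) / (q.2.2.1 : ℝ)) ^ β| < Δ)).card
          : ℝ) ≤
        C * (M * N * Real.log (2 * M * N) + Δ * M ^ 2 * N ^ 2) := by
  obtain ⟨K, hK, hcount⟩ := exists_card_dyadicPairs_product_near_le α β
    (left_ne_zero_of_mul hαβ) (right_ne_zero_of_mul hαβ)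
  refine ⟨36 + 4 * K, by positivity, fun Δ M N hΔ hM hN => ?_⟩
  have hM0 : 0 < M := by linarith
  have hN0 : 0 < N := by linarith
  set F : ℕ → ℕ → Finset ((ℕ × ℕ) × (ℕ × ℕ)) := fun d e =>
    (dyadicPairs M d ×ˢ dyadicPairs N e).filter (fun x =>
      |((x.1.2 : ℝ) / x.1.1) ^ α - ((x.2.2 : ℝ) / x.2.1) ^ β| < Δ) with hF
  set I := Icc 1 ⌊2 * M⌋₊
  set J := Icc 1 ⌊2 * N⌋₊
  set Q := (Finset.Ioc ⌊M⌋₊ ⌊2 * M⌋₊ ×ˢ Finset.Ioc ⌊M⌋₊ ⌊2 * M⌋₊ ×ˢ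
          Finset.Ioc ⌊N⌋₊ ⌊2 * N⌋₊ ×ˢ Finset.Ioc ⌊N⌋₊ ⌊2 * N⌋₊).filter
            (fun q : ℕ × ℕ × ℕ × ℕ =>
              |((q.2.1 : ℝ) / (q.1 : ℝ)) ^ α - ((q.2.2.2 : ℝ) / (q.2.2.1 : ℝ)) ^ β| < Δ) with hQ
  have hsub : Q ⊆ (I ×ˢ J).biUnion (fun x => (F x.1 x.2).image
      (fun y => (y.1.1, y.1.2, y.2.1, y.2.2))) := by
    rintro ⟨m, m', n, n'⟩ hq
    simp only [hQ, mem_filter, mem_product, mem_Ioc] at hq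
    obtain ⟨⟨hm, hm', hn, hn'⟩, hlt⟩ := hq
    have hgm : Nat.gcd m m' ∈ I := mem_Icc.2
      ⟨Nat.gcd_pos_of_pos_left _ (by omega), (Nat.gcd_le_left _ (by omega)).trans hm.2⟩
    have hgn : Nat.gcd n n' ∈ J := mem_Icc.2
      ⟨Nat.gcd_pos_of_pos_left _ (by omega), (Nat.gcd_le_left _ (by omega)).trans hn.2⟩
    refine mem_biUnion.2 ⟨(Nat.gcd m m', Nat.gcd n n'), mem_product.2 ⟨hgm, hgn⟩,
      mem_image.2 ⟨((m, m'), (n, n')), ?_, rfl⟩⟩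
    simp only [hF, dyadicPairs, mem_filter, mem_product, mem_Ioc]
    exact ⟨⟨⟨⟨hm, hm'⟩, trivial⟩, ⟨hn, hn'⟩, trivial⟩, hlt⟩
  have hcard : (Q.card : ℝ) ≤ ∑ d ∈ I, ∑ e ∈ J, ((F d e).card : ℝ) := by
    have h := (card_le_card hsub).trans
      (card_biUnion_le.trans (sum_le_sum fun x _ => card_image_le))
    rw [sum_product] at h
    exact_mod_cast h
  have hmain := sum_sum_min_sq_le hM hN ⌊2 * N⌋₊
  have hsq : ∑ d ∈ I, ∑ e ∈ J, (M ^ 2 / (d : ℝ) ^ 2) * (N ^ 2 / (e : ℝ) ^ 2) ≤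
      4 * (M ^ 2 * N ^ 2) := by
    rw [← sum_mul_sum]
    simp only [div_eq_mul_inv]
    rw [← mul_sum, ← mul_sum]
    calc _ ≤ M ^ 2 * 2 * (N ^ 2 * 2) := by
          gcongr
          · exact sum_Icc_inv_sq_le_two _
          · exact sum_Icc_inv_sq_le_two _
      _ = _ := by ring
  have hlog : 0 ≤ M * N * Real.log (2 * M * N) :=
    mul_nonneg (by positivity) (Real.log_nonneg (by nlinarith))
  have hΔMN : 0 ≤ Δ * M ^ 2 * N ^ 2 := by positivity
  calc (Q.card : ℝ) ≤ ∑ d ∈ I, ∑ e ∈ J, ((F d e).card : ℝ) := hcard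
    _ ≤ ∑ d ∈ I, ∑ e ∈ J, (4 * min (M ^ 2 / (d : ℝ) ^ 2) (N ^ 2 / (e : ℝ) ^ 2) +
          K * Δ * ((M ^ 2 / (d : ℝ) ^ 2) * (N ^ 2 / (e : ℝ) ^ 2))) :=
        sum_le_sum fun d hd => sum_le_sum fun e he =>
          hcount Δ M N hΔ hM0 hN0 d e (mem_Icc.1 hd).1 (mem_Icc.1 he).1
    _ = 4 * ∑ d ∈ I, ∑ e ∈ J, min (M ^ 2 / (d : ℝ) ^ 2) (N ^ 2 / (e : ℝ) ^ 2) +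
          K * Δ * ∑ d ∈ I, ∑ e ∈ J, (M ^ 2 / (d : ℝ) ^ 2) * (N ^ 2 / (e : ℝ) ^ 2) := by
        simp only [sum_add_distrib, mul_sum]
    _ ≤ 4 * (9 * (M * N * Real.log (2 * M * N))) + K * Δ * (4 * (M ^ 2 * N ^ 2)) := by
        gcongr
    _ ≤ (36 + 4 * K) * (M * N * Real.log (2 * M * N) + Δ * M ^ 2 * N ^ 2) := by
        nlinarith [mul_nonneg hK.le hlog]
end
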